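/- Let Ω be a compact metric space and T : Ω → Ω an invertible map, and let ω ∈ Ω be such that the orbit { Tⁿω : n ∈ ℤ } is infinite. Then the set of continuous functions f ∈ C(Ω,ℝ) for which the discrete Schrödinger operator on ℓ²(ℤ) with potential V_ω(n) = f(Tⁿω) has pure point spectrum is dense in C(Ω,ℝ) with respect to the uniform norm. -/

import Mathlib

open MeasureTheory

noncomputable section

/-- `ψ ∈ ℓ²(ℤ)` is an eigenfunction of the discrete Schrödinger operator with potential `V`
corresponding to the eigenvalue `E`: `ψ ≠ 0` and `ψ(n+1) + ψ(n-1) + V(n)ψ(n) = Eψ(n)`. -/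
def IsEigenfunction (V : ℤ → ℝ) (E : ℝ) (ψ : lp (fun _ : ℤ => ℝ) 2) : Prop :=
  ψ ≠ 0 ∧ ∀ n : ℤ, (ψ : ∀ _ : ℤ, ℝ) (n + 1) + (ψ : ∀ _ : ℤ, ℝ) (n - 1)
    + V n * (ψ : ∀ _ : ℤ, ℝ) n = E * (ψ : ∀ _ : ℤ, ℝ) n

/-- The discrete Schrödinger operator with potential `V` has pure point spectrum:
its eigenfunctions span a dense subspace of `ℓ²(ℤ)`. -/
def HasPurePointSpectrum (V : ℤ → ℝ) : Prop :=
  (Submodule.span ℝ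
    {ψ : lp (fun _ : ℤ => ℝ) 2 | ∃ E : ℝ, IsEigenfunction V E ψ}).topologicalClosure = ⊤

open Filter Topology

section Operator

variable {𝕜 : Type*} [RCLike 𝕜]

theorem memℓp_two_iff_summable_sq (f : ℤ → 𝕜) :
    Memℓp f 2 ↔ Summable fun n => ‖f n‖ ^ 2 := by
  rw [memℓp_gen_iff (by norm_num)]
  simp

theorem lp_norm_sq (f : lp (fun _ : ℤ => 𝕜) 2) : ‖f‖ ^ 2 = ∑' n, ‖f n‖ ^ 2 := by
  have := lp.norm_rpow_eq_tsum (p := 2) (by norm_num) f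
  simpa using this

theorem summable_sq_lp (f : lp (fun _ : ℤ => 𝕜) 2) : Summable fun n => ‖f n‖ ^ 2 :=
  (memℓp_two_iff_summable_sq _).1 (lp.memℓp f)

theorem memℓp_schrodinger {V : ℤ → ℝ} {B : ℝ} (hV : ∀ n, |V n| ≤ B)
    (f : lp (fun _ : ℤ => 𝕜) 2) :
    Memℓp (fun n : ℤ => f (n + 1) + f (n - 1) + (V n : 𝕜) * f n) 2 := by
  have h1 : Memℓp (fun n : ℤ => f (n + 1)) 2 := by
    rw [memℓp_two_iff_summable_sq]
    exact (summable_sq_lp f).comp_injective (add_left_injective 1)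
  have h2 : Memℓp (fun n : ℤ => f (n - 1)) 2 := by
    rw [memℓp_two_iff_summable_sq]
    exact (summable_sq_lp f).comp_injective (sub_left_injective (b := (1 : ℤ)))
  have h3 : Memℓp (fun n : ℤ => (V n : 𝕜) * f n) 2 := by
    rw [memℓp_two_iff_summable_sq]
    refine Summable.of_nonneg_of_le (fun _ => by positivity) (fun n => ?_)
      ((summable_sq_lp f).mul_left (B ^ 2))
    rw [norm_mul, mul_pow, RCLike.norm_ofReal]
    have := hV n
    gcongr
  exact (h1.add h2).add h3

/-- The Schrödinger operator with bounded potential `V` on `ℓ²(ℤ)`. -/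
def schrodinger (𝕜 : Type*) [RCLike 𝕜] {V : ℤ → ℝ} {B : ℝ} (hV : ∀ n, |V n| ≤ B) :
    lp (fun _ : ℤ => 𝕜) 2 →ₗ[𝕜] lp (fun _ : ℤ => 𝕜) 2 where
  toFun f := ⟨_, memℓp_schrodinger hV f⟩
  map_add' f g := by
    ext n
    simp only [lp.coeFn_add, Pi.add_apply]
    ring
  map_smul' c f := by
    ext n
    simp only [lp.coeFn_smul, Pi.smul_apply, smul_eq_mul, RingHom.id_apply]
    ring

theorem schrodinger_apply {V : ℤ → ℝ} {B : ℝ} (hV : ∀ n, |V n| ≤ B)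
    (f : lp (fun _ : ℤ => 𝕜) 2) (n : ℤ) :
    schrodinger 𝕜 hV f n = f (n + 1) + f (n - 1) + (V n : 𝕜) * f n := rfl

theorem schrodinger_isSymmetric {V : ℤ → ℝ} {B : ℝ} (hV : ∀ n, |V n| ≤ B) :
    (schrodinger 𝕜 hV).IsSymmetric := by
  intro f g
  have e1 := lp.hasSum_inner (𝕜 := 𝕜) (schrodinger 𝕜 hV f) g
  have e2 := lp.hasSum_inner (𝕜 := 𝕜) f (schrodinger 𝕜 hV g)
  have hs1 : Memℓp (fun n : ℤ => f (n + 1)) 2 := by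
    rw [memℓp_two_iff_summable_sq]
    exact (summable_sq_lp f).comp_injective (add_left_injective 1)
  have hs2 : Memℓp (fun n : ℤ => g (n + 1)) 2 := by
    rw [memℓp_two_iff_summable_sq]
    exact (summable_sq_lp g).comp_injective (add_left_injective 1)
  have k1 := (lp.hasSum_inner (𝕜 := 𝕜) (⟨_, hs1⟩ : lp (fun _ : ℤ => 𝕜) 2) g).summable
  have k2 := (lp.hasSum_inner (𝕜 := 𝕜) f (⟨_, hs2⟩ : lp (fun _ : ℤ => 𝕜) 2)).summable
  have k1' := (Equiv.subRight (1 : ℤ)).hasSum_iff.2 k1.hasSum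
  have k2' := (Equiv.subRight (1 : ℤ)).hasSum_iff.2 k2.hasSum
  have d := ((k2.hasSum.sub k2').add (k1'.sub k1.hasSum)).add e1
  simp only [Function.comp_def, Equiv.subRight_apply, sub_add_cancel] at d
  simp only [sub_self, zero_add] at d
  refine d.unique (e2.congr_fun ?_)
  intro n
  simp only [schrodinger_apply, RCLike.inner_apply, map_add, map_mul, RCLike.conj_ofReal]
  ring

/-- The Schrödinger operator as a bounded self-adjoint operator. -/
def schrodingerCLM (𝕜 : Type*) [RCLike 𝕜] {V : ℤ → ℝ} {B : ℝ} (hV : ∀ n, |V n| ≤ B) :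
    lp (fun _ : ℤ => 𝕜) 2 →L[𝕜] lp (fun _ : ℤ => 𝕜) 2 :=
  ⟨schrodinger 𝕜 hV, (schrodinger_isSymmetric hV).continuous⟩

end Operator

section Criterion

open scoped InnerProductSpace

/-- A real symmetric matrix of finite Hilbert-Schmidt norm defines a compact symmetric operator. -/
theorem exists_compact_of_hilbertSchmidt {q : ℤ → ℤ → ℝ} {B : ℝ} (hsymm : ∀ n m, q n m = q m n)
    (hq : ∀ S T : Finset ℤ, ∑ n ∈ S, ∑ m ∈ T, q n m ^ 2 ≤ B) :
    ∃ (r : ℤ → lp (fun _ : ℤ => ℝ) 2) (Q : lp (fun _ : ℤ => ℝ) 2 →L[ℝ] lp (fun _ : ℤ => ℝ) 2),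
      IsCompactOperator Q ∧ (Q : lp (fun _ : ℤ => ℝ) 2 →ₗ[ℝ] lp (fun _ : ℤ => ℝ) 2).IsSymmetric ∧
      (∀ n m, r n m = q n m) ∧ (∀ x n, Q x n = ⟪r n, x⟫_ℝ) := by
  have hmem : ∀ n, Memℓp (q n) 2 := by
    intro n
    rw [memℓp_two_iff_summable_sq]
    refine summable_of_sum_le (c := B) (fun _ => by positivity) fun T => ?_
    simpa using hq {n} T
  set r : ℤ → lp (fun _ : ℤ => ℝ) 2 := fun n => ⟨q n, hmem n⟩ with hr
  have hrq : ∀ n m, r n m = q n m := fun _ _ => rfl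
  have hsum : ∀ S : Finset ℤ, ∑ n ∈ S, ‖r n‖ ^ 2 ≤ B := by
    intro S
    have : HasSum (fun m => ∑ n ∈ S, q n m ^ 2) (∑ n ∈ S, ‖r n‖ ^ 2) := by
      refine hasSum_sum fun n _ => ?_
      rw [lp_norm_sq]
      simpa using (summable_sq_lp (r n)).hasSum
    refine le_of_tendsto this (Eventually.of_forall fun T => ?_)
    rw [Finset.sum_comm]
    exact hq S T
  have hsumm : Summable fun n => ‖r n‖ ^ 2 := summable_of_sum_le (fun _ => by positivity) hsum
  have hQmem : ∀ x : lp (fun _ : ℤ => ℝ) 2, Memℓp (fun n => ⟪r n, x⟫_ℝ) 2 := by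
    intro x
    rw [memℓp_two_iff_summable_sq]
    refine Summable.of_nonneg_of_le (fun _ => by positivity) (fun n => ?_)
      (hsumm.mul_right (‖x‖ ^ 2))
    rw [← mul_pow]
    gcongr
    exact norm_inner_le_norm _ _
  let Q₀ : lp (fun _ : ℤ => ℝ) 2 →ₗ[ℝ] lp (fun _ : ℤ => ℝ) 2 :=
    { toFun := fun x => ⟨_, hQmem x⟩
      map_add' := fun x y => by
        ext n
        exact inner_add_right _ _ _
      map_smul' := fun c x => by
        ext n
        simp [inner_smul_right] }
  have hQ₀ : ∀ x n, Q₀ x n = ⟪r n, x⟫_ℝ := fun _ _ => rfl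
  have hB : 0 ≤ B := by simpa using hsum ∅
  let Q := Q₀.mkContinuous (√B) (by
    intro x
    refine abs_le_of_sq_le_sq' ?_ (by positivity) |>.2
    rw [mul_pow, Real.sq_sqrt hB, lp_norm_sq]
    refine (Summable.tsum_le_tsum (f := fun n => ‖Q₀ x n‖ ^ 2)
      (g := fun n => ‖r n‖ ^ 2 * ‖x‖ ^ 2) (fun n => ?_) (summable_sq_lp _) (hsumm.mul_right _)).trans ?_
    · rw [← mul_pow, hQ₀]
      gcongr
      exact norm_inner_le_norm _ _
    · rw [tsum_mul_right]
      gcongr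
      exact hsumm.tsum_le_of_sum_le hsum)
  have hQ : ∀ x n, Q x n = ⟪r n, x⟫_ℝ := fun _ _ => rfl
  refine ⟨r, Q, ?_, ?_, hrq, hQ⟩
  · let R : Finset ℤ → lp (fun _ : ℤ => ℝ) 2 →L[ℝ] lp (fun _ : ℤ => ℝ) 2 := fun S =>
      ∑ n ∈ S, (innerSL ℝ (r n)).smulRight (lp.single 2 n (1 : ℝ))
    have hR : ∀ S x m, R S x m = if m ∈ S then ⟪r m, x⟫_ℝ else 0 := by
      intro S x m
      simp only [R, sum_apply, ContinuousLinearMap.smulRight_apply,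
        innerSL_apply_apply, lp.coeFn_sum, Finset.sum_apply, lp.coeFn_smul, Pi.smul_apply,
        smul_eq_mul]
      simp [lp.single_apply, Pi.single_apply]
    refine isCompactOperator_of_tendsto (F := R) (l := atTop) ?_ (Eventually.of_forall fun S => ?_)
    · rw [tendsto_iff_norm_sub_tendsto_zero]
      have h0 : Tendsto (fun S : Finset ℤ => √((∑' n, ‖r n‖ ^ 2) - ∑ n ∈ S, ‖r n‖ ^ 2)) atTop
          (𝓝 0) := by
        have := (tendsto_const_nhds (x := ∑' n, ‖r n‖ ^ 2)).sub hsumm.hasSum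
        simpa using this.sqrt
      refine squeeze_zero (fun _ => norm_nonneg _) (fun S => ?_) h0
      refine ContinuousLinearMap.opNorm_le_bound _ (by positivity) fun x => ?_
      have hle := hsumm.sum_le_tsum S (fun _ _ => by positivity)
      refine abs_le_of_sq_le_sq' ?_ (by positivity) |>.2
      rw [mul_pow, Real.sq_sqrt (by linarith), lp_norm_sq]
      have h1 : HasSum (fun n => (‖r n‖ ^ 2 - if n ∈ S then ‖r n‖ ^ 2 else 0) * ‖x‖ ^ 2)
          (((∑' n, ‖r n‖ ^ 2) - ∑ n ∈ S, ‖r n‖ ^ 2) * ‖x‖ ^ 2) := by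
        refine (hsumm.hasSum.sub ?_).mul_right _
        have : HasSum (fun n => if n ∈ S then ‖r n‖ ^ 2 else 0)
            (∑ n ∈ S, if n ∈ S then ‖r n‖ ^ 2 else 0) :=
          hasSum_sum_of_ne_finset_zero fun b hb => if_neg hb
        rwa [Finset.sum_congr rfl fun n hn => if_pos hn] at this
      rw [← h1.tsum_eq]
      refine Summable.tsum_le_tsum (fun n => ?_) (summable_sq_lp _) h1.summable
      have : ((R S - Q) x) n = (if n ∈ S then ⟪r n, x⟫_ℝ else 0) - ⟪r n, x⟫_ℝ := by
        rw [sub_apply, lp.coeFn_sub, Pi.sub_apply, hR, hQ]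
      rw [this]
      split_ifs
      · simp
      · simp only [zero_sub, norm_neg, sub_zero]
        rw [← mul_pow]
        gcongr
        exact norm_inner_le_norm _ _
    · refine Finset.sum_induction _
        (fun A : lp (fun _ : ℤ => ℝ) 2 →L[ℝ] lp (fun _ : ℤ => ℝ) 2 => IsCompactOperator A)
        (fun a b ha hb => ha.add hb) isCompactOperator_zero fun n _ => ?_
      exact (isCompactOperator_of_locallyCompactSpace_dom (innerSL ℝ (r n))).clm_comp
        (ContinuousLinearMap.toSpanSingleton ℝ (lp.single (E := fun _ : ℤ => ℝ) 2 n (1 : ℝ)))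
  · intro y x
    have e1 : ∀ m, ⟪Q (lp.single 2 m (1 : ℝ)), x⟫_ℝ = ⟪lp.single 2 m (1 : ℝ), Q x⟫_ℝ := by
      intro m
      have : Q (lp.single 2 m (1 : ℝ)) = r m := by
        ext n
        rw [hQ, hrq, ← hsymm, ← hrq]
        simp [lp.inner_single_right]
      rw [this, lp.inner_single_left, hQ]
      simp
    have hy := lp.hasSum_single (p := 2) (by norm_num) y
    have h1 := hy.mapL ((innerSL ℝ x).comp Q)
    have h2 := hy.mapL (innerSL ℝ (Q x))
    simp only [ContinuousLinearMap.coe_comp, Function.comp_apply, innerSL_apply_apply] at h1 h2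
    rw [ContinuousLinearMap.coe_coe, real_inner_comm, real_inner_comm (Q x) y]
    refine h1.unique (h2.congr_fun fun m => ?_)
    have : lp.single (E := fun _ : ℤ => ℝ) 2 m (y m) = y m • lp.single 2 m (1 : ℝ) := by
      rw [← lp.single_smul]; simp
    rw [this, map_smul, inner_smul_right, inner_smul_right, real_inner_comm, e1, real_inner_comm]


/-- Every eigenspace of a compact symmetric operator commuting with the Schrödinger operator, for a
nonzero eigenvalue, is spanned by eigenfunctions. -/
theorem eigenspace_le_span_eigenfunctions {V : ℤ → ℝ} {B : ℝ} (hV : ∀ n, |V n| ≤ B)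
    {Q : lp (fun _ : ℤ => ℝ) 2 →L[ℝ] lp (fun _ : ℤ => ℝ) 2} (hQ : IsCompactOperator Q)
    (hcomm : ∀ x, Q (schrodinger ℝ hV x) = schrodinger ℝ hV (Q x)) {μ : ℝ} (hμ : μ ≠ 0) :
    Module.End.eigenspace (Q : Module.End ℝ (lp (fun _ : ℤ => ℝ) 2)) μ ≤
      Submodule.span ℝ {ψ : lp (fun _ : ℤ => ℝ) 2 | ∃ E : ℝ, IsEigenfunction V E ψ} := by
  set W := Module.End.eigenspace (Q : Module.End ℝ (lp (fun _ : ℤ => ℝ) 2)) μ with hW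
  have hfin : FiniteDimensional ℝ W :=
    ContinuousLinearMap.finite_dimensional_eigenspace hQ μ hμ
  have hmem : ∀ x, x ∈ W ↔ Q x = μ • x := fun x => by
    rw [hW, Module.End.mem_eigenspace_iff]; rfl
  have hinv : ∀ x ∈ W, schrodinger ℝ hV x ∈ W := by
    intro x hx
    rw [hmem] at hx ⊢
    rw [hcomm, hx, map_smul]
  have hs := (schrodinger_isSymmetric (𝕜 := ℝ) hV).restrict_invariant hinv
  let b := hs.eigenvectorBasis rfl
  intro x hx
  have hrep := b.sum_repr ⟨x, hx⟩
  have hx' : x = ∑ i, b.repr ⟨x, hx⟩ i • (b i : lp (fun _ : ℤ => ℝ) 2) := by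
    have := congrArg (Subtype.val) hrep
    simpa using this.symm
  rw [hx']
  refine Submodule.sum_mem _ fun i _ => Submodule.smul_mem _ _ (Submodule.subset_span ?_)
  refine ⟨hs.eigenvalues rfl i, ?_, fun n => ?_⟩
  · have := b.orthonormal.ne_zero i
    simpa using this
  · have h1 : schrodinger ℝ hV (b i) = hs.eigenvalues rfl i • (b i : lp (fun _ : ℤ => ℝ) 2) :=
      congrArg Subtype.val (hs.apply_eigenvectorBasis rfl i)
    exact congrArg (fun f : lp (fun _ : ℤ => ℝ) 2 => f n) h1

/-- A vector orthogonal to all eigenfunctions is annihilated by every compact symmetric operator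
commuting with the Schrödinger operator. -/
theorem apply_eq_zero_of_orthogonal_eigenfunctions {V : ℤ → ℝ} {B : ℝ} (hV : ∀ n, |V n| ≤ B)
    {Q : lp (fun _ : ℤ => ℝ) 2 →L[ℝ] lp (fun _ : ℤ => ℝ) 2} (hQ : IsCompactOperator Q)
    (hsymm : (Q : lp (fun _ : ℤ => ℝ) 2 →ₗ[ℝ] lp (fun _ : ℤ => ℝ) 2).IsSymmetric)
    (hcomm : ∀ x, Q (schrodinger ℝ hV x) = schrodinger ℝ hV (Q x))
    {y : lp (fun _ : ℤ => ℝ) 2}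
    (hy : y ∈ (Submodule.span ℝ
      {ψ : lp (fun _ : ℤ => ℝ) 2 | ∃ E : ℝ, IsEigenfunction V E ψ})ᗮ) : Q y = 0 := by
  have hbot := ContinuousLinearMap.orthogonalComplement_iSup_eigenspaces_eq_bot hQ hsymm
  rw [← Submodule.mem_bot ℝ, ← hbot, Submodule.mem_orthogonal]
  intro u hu
  induction hu using Submodule.iSup_induction' with
  | mem μ x hx =>
    have hx' : Q x = μ • x := Module.End.mem_eigenspace_iff.1 hx
    have e : ⟪x, Q y⟫_ℝ = ⟪Q x, y⟫_ℝ := (hsymm x y).symm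
    rw [e, hx', inner_smul_left]
    rcases eq_or_ne μ 0 with rfl | hμ
    · simp
    · rw [(Submodule.mem_orthogonal _ _).1 hy x (eigenspace_le_span_eigenfunctions hV hQ hcomm hμ hx),
        mul_zero]
  | zero => simp
  | add x z _ _ h1 h2 => rw [inner_add_left, h1, h2, add_zero]

theorem hasPurePointSpectrum_of_vanish {V : ℤ → ℝ} {B : ℝ} (hV : ∀ n, |V n| ≤ B)
    (h : ∀ y ∈ (Submodule.span ℝ
      {ψ : lp (fun _ : ℤ => ℝ) 2 | ∃ E : ℝ, IsEigenfunction V E ψ})ᗮ, y 0 = 0 ∧ y 1 = 0) :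
    HasPurePointSpectrum V := by
  rw [HasPurePointSpectrum, Submodule.topologicalClosure_eq_top_iff, Submodule.eq_bot_iff]
  set S := Submodule.span ℝ {ψ : lp (fun _ : ℤ => ℝ) 2 | ∃ E : ℝ, IsEigenfunction V E ψ} with hS
  have hinv : ∀ y ∈ Sᗮ, schrodinger ℝ hV y ∈ Sᗮ := by
    intro y hy
    rw [Submodule.mem_orthogonal]
    intro u hu
    rw [← schrodinger_isSymmetric hV]
    refine (Submodule.mem_orthogonal _ _).1 hy _ ?_
    induction hu using Submodule.span_induction with
    | mem x hx =>
      obtain ⟨E, hE⟩ := hx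
      have : schrodinger ℝ hV x = E • x := by
        ext n
        exact hE.2 n
      rw [this]
      exact Submodule.smul_mem _ _ (Submodule.subset_span ⟨E, hE⟩)
    | zero => simp
    | add x z _ _ h1 h2 => rw [map_add]; exact Submodule.add_mem _ h1 h2
    | smul c x _ h1 => rw [map_smul]; exact Submodule.smul_mem _ _ h1
  have key : ∀ n : ℕ, ∀ y ∈ Sᗮ, (y n = 0 ∧ y (n + 1) = 0) ∧ (y (-n) = 0 ∧ y (-n + 1) = 0) := by
    intro n
    induction n with
    | zero => intro y hy; simpa using h y hy
    | succ n ih =>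
      intro y hy
      obtain ⟨⟨h1, h2⟩, h3, h4⟩ := ih y hy
      obtain ⟨⟨_, h6⟩, h7, _⟩ := ih _ (hinv y hy)
      rw [schrodinger_apply] at h6 h7
      simp only [add_sub_cancel_right, h1, h2, h3, h4] at h6 h7
      push_cast
      refine ⟨⟨h2, by simpa using h6⟩, ?_, ?_⟩
      · rw [neg_add, ← sub_eq_add_neg]; simpa using h7
      · simpa using h3
  intro y hy
  ext n
  obtain ⟨k, rfl | rfl⟩ := n.eq_nat_or_neg
  · exact (key k y hy).1.1
  · exact (key k y hy).2.1

/-- The matrix of the identity. -/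
def kron (n m : ℤ) : ℝ := if n = m then 1 else 0

theorem hasPurePointSpectrum_of_approx {V : ℤ → ℝ} {B : ℝ} (hV : ∀ n, |V n| ≤ B)
    (h : ∀ δ > 0, ∃ (C : ℝ) (P : ℕ → ℤ → ℤ → ℝ),
      (∀ k n m, P k n m = P k m n) ∧ (∀ k n m, |P k n m| ≤ 1) ∧
      (∀ S T : Finset ℤ, ∀ᶠ k in atTop, ∑ n ∈ S, ∑ m ∈ T, P k n m ^ 2 ≤ C) ∧
      (∀ T : Finset ℤ, ∀ᶠ k in atTop, ∑ m ∈ T, (kron 0 m - P k 0 m) ^ 2 ≤ δ) ∧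
      (∀ T : Finset ℤ, ∀ᶠ k in atTop, ∑ m ∈ T, (kron 1 m - P k 1 m) ^ 2 ≤ δ) ∧
      (∀ n m, ∀ᶠ k in atTop, P k (n + 1) m + P k (n - 1) m + V n * P k n m
        = P k n (m + 1) + P k n (m - 1) + V m * P k n m)) :
    HasPurePointSpectrum V := by
  refine hasPurePointSpectrum_of_vanish hV fun y hy => ?_
  have main : ∀ δ > 0, |y 0| ≤ √δ * ‖y‖ ∧ |y 1| ≤ √δ * ‖y‖ := by
    intro δ hδ
    obtain ⟨C, P, hsymm, hbd, hHS, h0, h1, hcomm⟩ := h δ hδ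
    let U : Ultrafilter ℕ := Ultrafilter.of atTop
    have hU : (U : Filter ℕ) ≤ atTop := Ultrafilter.of_le _
    have hlim : ∀ n m, ∃ q, Tendsto (fun k => P k n m) U (𝓝 q) := by
      intro n m
      have hc : IsCompact (Set.Icc (-1 : ℝ) 1) := isCompact_Icc
      obtain ⟨q, -, hq⟩ := hc.ultrafilter_le_nhds (U.map fun k => P k n m) (by
        rw [le_principal_iff]
        exact Filter.mem_map.2 (Eventually.of_forall fun k => abs_le.1 (hbd k n m)))
      exact ⟨q, hq⟩
    choose q hq using hlim
    obtain ⟨r, Q, hQc, hQs, hr, hQr⟩ := exists_compact_of_hilbertSchmidt (q := q) (B := C)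
      (fun n m => tendsto_nhds_unique (hq n m) ((hq m n).congr fun k => hsymm k m n))
      (fun S T => le_of_tendsto (tendsto_finsetSum _ fun n _ => tendsto_finsetSum _ fun m _ =>
        (hq n m).pow 2) (hU (hHS S T)))
    have hqc : ∀ n m, q (n + 1) m + q (n - 1) m + V n * q n m
        = q n (m + 1) + q n (m - 1) + V m * q n m := by
      intro n m
      refine tendsto_nhds_unique_of_eventuallyEq
        (((hq (n + 1) m).add (hq (n - 1) m)).add ((hq n m).const_mul (V n)))
        (((hq n (m + 1)).add (hq n (m - 1))).add ((hq n m).const_mul (V m))) (hU (hcomm n m))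
    have hQH : ∀ x, Q (schrodinger ℝ hV x) = schrodinger ℝ hV (Q x) := by
      intro x
      ext n
      rw [hQr, schrodinger_apply, hQr, hQr, hQr, ← schrodinger_isSymmetric hV]
      have : schrodinger ℝ hV (r n) = r (n + 1) + r (n - 1) + V n • r n := by
        ext m
        rw [schrodinger_apply]
        simp only [lp.coeFn_add, lp.coeFn_smul, Pi.add_apply, Pi.smul_apply, hr, smul_eq_mul]
        exact (hqc n m).symm
      rw [this, inner_add_left, inner_add_left, real_inner_smul_left]
      rfl
    have hQy := apply_eq_zero_of_orthogonal_eigenfunctions hV hQc hQs hQH hy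
    have bound : ∀ n, (∀ T : Finset ℤ, ∀ᶠ k in atTop, ∑ m ∈ T, (kron n m - P k n m) ^ 2 ≤ δ) →
        |y n| ≤ √δ * ‖y‖ := by
      intro n hn
      have e1 : y n = ⟪lp.single (E := fun _ : ℤ => ℝ) 2 n (1 : ℝ) - r n, y⟫_ℝ := by
        rw [inner_sub_left, ← hQr, hQy, lp.inner_single_left]
        simp
      rw [e1]
      refine (abs_real_inner_le_norm _ _).trans ?_
      gcongr
      refine Real.le_sqrt_of_sq_le ?_
      rw [lp_norm_sq]
      refine (summable_sq_lp _).tsum_le_of_sum_le fun T => ?_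
      have e2 : ∀ m, ‖(lp.single (E := fun _ : ℤ => ℝ) 2 n (1 : ℝ) - r n) m‖ ^ 2
          = (kron n m - q n m) ^ 2 := by
        intro m
        rw [lp.coeFn_sub, Pi.sub_apply, hr, Real.norm_eq_abs, sq_abs]
        simp [lp.single_apply, Pi.single_apply, kron, eq_comm]
      rw [Finset.sum_congr rfl fun m _ => e2 m]
      exact le_of_tendsto (tendsto_finsetSum _ fun m _ =>
        ((hq n m).const_sub (kron n m)).pow 2) (hU (hn T))
    exact ⟨bound 0 h0, bound 1 h1⟩
  have lim : Tendsto (fun δ : ℝ => √δ * ‖y‖) (𝓝[>] 0) (𝓝 0) := by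
    have : Tendsto (fun δ : ℝ => √δ * ‖y‖) (𝓝 0) (𝓝 (√0 * ‖y‖)) :=
      (Real.continuous_sqrt.mul continuous_const).tendsto 0
    simpa using this.mono_left nhdsWithin_le_nhds
  constructor <;> refine abs_nonpos_iff.1 (ge_of_tendsto lim ?_) <;>
    filter_upwards [self_mem_nhdsWithin] with δ hδ
  · exact (main δ hδ).1
  · exact (main δ hδ).2

end Criterion

section Box

theorem sum_shift_mul {a b : ℤ} {f g : ℤ → ℝ} (hf : ∀ n ∉ Finset.Icc a b, f n = 0)
    (hg : ∀ n ∉ Finset.Icc a b, g n = 0) :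
    ∑ n ∈ Finset.Icc a b, f n * g (n + 1) = ∑ n ∈ Finset.Icc a b, f (n - 1) * g n := by
  have h1 : ∑ᶠ n, f n * g (n + 1) = ∑ n ∈ Finset.Icc a b, f n * g (n + 1) := by
    refine finsum_eq_sum_of_support_subset _ fun n hn => ?_
    by_contra h
    exact hn (by simp [hf n h])
  have h2 : ∑ᶠ n, f (n - 1) * g n = ∑ n ∈ Finset.Icc a b, f (n - 1) * g n := by
    refine finsum_eq_sum_of_support_subset _ fun n hn => ?_
    by_contra h
    exact hn (by simp [hg n h])
  rw [← h1, ← h2, ← finsum_comp_equiv (Equiv.subRight (1 : ℤ))]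
  simp

theorem sum_schrodinger_symm {a b : ℤ} {f g : ℤ → ℝ} (V : ℤ → ℝ)
    (hf : ∀ n ∉ Finset.Icc a b, f n = 0) (hg : ∀ n ∉ Finset.Icc a b, g n = 0) :
    ∑ n ∈ Finset.Icc a b, f n * (g (n + 1) + g (n - 1) + V n * g n)
      = ∑ n ∈ Finset.Icc a b, (f (n + 1) + f (n - 1) + V n * f n) * g n := by
  have e1 := sum_shift_mul hf hg
  have e2 := sum_shift_mul hg hf
  have e3 : ∑ n ∈ Finset.Icc a b, f n * (g (n + 1) + g (n - 1) + V n * g n)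
      = ∑ n ∈ Finset.Icc a b, f n * g (n + 1) + ∑ n ∈ Finset.Icc a b, g (n - 1) * f n
        + ∑ n ∈ Finset.Icc a b, V n * f n * g n := by
    rw [← Finset.sum_add_distrib, ← Finset.sum_add_distrib]
    exact Finset.sum_congr rfl fun n _ => by ring
  have e4 : ∑ n ∈ Finset.Icc a b, (f (n + 1) + f (n - 1) + V n * f n) * g n
      = ∑ n ∈ Finset.Icc a b, g n * f (n + 1) + ∑ n ∈ Finset.Icc a b, f (n - 1) * g n
        + ∑ n ∈ Finset.Icc a b, V n * f n * g n := by
    rw [← Finset.sum_add_distrib, ← Finset.sum_add_distrib]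
    exact Finset.sum_congr rfl fun n _ => by ring
  rw [e3, e4, e1, e2]
  ring

/-- An orthonormal basis of eigenvectors of the Schrödinger operator restricted to an interval
with Dirichlet boundary conditions. -/
structure IsBoxBasis (V : ℤ → ℝ) (a b : ℤ) {ι : Type} [Fintype ι] (E : ι → ℝ)
    (ψ : ι → ℤ → ℝ) : Prop where
  supp : ∀ j, ∀ n ∉ Finset.Icc a b, ψ j n = 0
  eqn : ∀ j, ∀ n ∈ Finset.Icc a b, ψ j (n + 1) + ψ j (n - 1) + V n * ψ j n = E j * ψ j n
  complete : ∀ n ∈ Finset.Icc a b, ∀ m ∈ Finset.Icc a b, ∑ j, ψ j n * ψ j m = kron n m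
  norm_one : ∀ j, ∑ n ∈ Finset.Icc a b, ψ j n ^ 2 = 1
  orth : ∀ i j, i ≠ j → ∑ n ∈ Finset.Icc a b, ψ i n * ψ j n = 0

theorem exists_isBoxBasis (V : ℤ → ℝ) (a b : ℤ) :
    ∃ (E : Finset.Icc a b → ℝ) (ψ : Finset.Icc a b → ℤ → ℝ), IsBoxBasis V a b E ψ := by
  classical
  let M : Matrix (Finset.Icc a b) (Finset.Icc a b) ℝ := Matrix.of fun n m =>
    kron (n + 1) m + kron (n - 1) m + V n * kron n m
  have hM : M.IsHermitian := by
    refine Matrix.IsHermitian.ext fun n m => ?_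
    have e1 : kron ((m : ℤ) + 1) n = kron (n - 1) m := by
      simp only [kron]; congr 1; apply propext; constructor <;> intro h <;> linarith
    have e2 : kron ((m : ℤ) - 1) n = kron (n + 1) m := by
      simp only [kron]; congr 1; apply propext; constructor <;> intro h <;> linarith
    have e3 : V m * kron (m : ℤ) n = V n * kron n m := by
      simp only [kron]
      by_cases h : (m : ℤ) = n
      · simp [h]
      · simp [h, Ne.symm h]
    simp only [M, Matrix.of_apply, star_trivial, e1, e2, e3]
    ring
  let B := hM.eigenvectorBasis
  let ext : (Finset.Icc a b → ℝ) → ℤ → ℝ := fun v n => if h : n ∈ Finset.Icc a b then v ⟨n, h⟩ else 0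
  have hext : ∀ (v : Finset.Icc a b → ℝ) (k : ℤ), ∑ m : Finset.Icc a b, kron k m * v m = ext v k := by
    intro v k
    simp only [ext]
    split_ifs with h
    · rw [Finset.sum_eq_single ⟨k, h⟩]
      · simp [kron]
      · intro m _ hm
        have : k ≠ m := fun e => hm (Subtype.ext e.symm)
        simp [kron, this]
      · simp
    · refine Finset.sum_eq_zero fun m _ => ?_
      have : k ≠ m := fun e => h (e ▸ m.2)
      simp [kron, this]
  have hext' : ∀ (v : Finset.Icc a b → ℝ) (n : Finset.Icc a b), ext v n = v n := by
    intro v n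
    simp only [ext]
    rw [dif_pos n.2]
  refine ⟨hM.eigenvalues, fun j => ext (B j), ?_, ?_, ?_, ?_, ?_⟩
  · intro j n hn
    simp only [ext, dif_neg hn]
  · intro j n hn
    have h := congrFun (hM.mulVec_eigenvectorBasis j) ⟨n, hn⟩
    simp only [Matrix.mulVec, dotProduct, M, Matrix.of_apply, add_mul, Finset.sum_add_distrib,
      mul_assoc, ← Finset.mul_sum, Pi.smul_apply, smul_eq_mul] at h
    rw [hext, hext, hext, ← hext' (B j) ⟨n, hn⟩] at h
    exact h
  · intro n hn m hm
    have h := B.sum_inner_mul_inner (EuclideanSpace.single ⟨n, hn⟩ (1 : ℝ))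
      (EuclideanSpace.single ⟨m, hm⟩ (1 : ℝ))
    simp only [EuclideanSpace.inner_single_left, EuclideanSpace.inner_single_right, map_one,
      one_mul, conj_trivial] at h
    simp only [ext, dif_pos hn, dif_pos hm]
    rw [h]
    simp [kron, eq_comm]
  · intro j
    have h := B.orthonormal.1 j
    rw [← Finset.sum_coe_sort]
    have h2 := EuclideanSpace.norm_sq_eq (B j)
    rw [h] at h2
    simp only [hext']
    simpa using h2.symm
  · intro i j hij
    have h := B.orthonormal.2 hij
    rw [← Finset.sum_coe_sort]
    simp only [hext']
    simp only [PiLp.inner_apply, RCLike.inner_apply, conj_trivial] at h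
    rw [← h]
    exact Finset.sum_congr rfl fun n _ => mul_comm _ _

namespace IsBoxBasis

variable {V : ℤ → ℝ} {a b : ℤ} {ι : Type} [Fintype ι] {E : ι → ℝ} {ψ : ι → ℤ → ℝ}

theorem abs_eigenvalue_le (h : IsBoxBasis V a b E ψ) {B : ℝ} (hV : ∀ n ∈ Finset.Icc a b, |V n| ≤ B)
    (j : ι) : |E j| ≤ B + 2 := by
  have hne : (Finset.Icc a b).Nonempty := by
    by_contra hn
    have := h.norm_one j
    rw [Finset.not_nonempty_iff_eq_empty.1 hn] at this
    simp at this
  obtain ⟨n, hn, hmax⟩ := Finset.exists_max_image (Finset.Icc a b) (fun n => |ψ j n|) hne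
  have hall : ∀ m, |ψ j m| ≤ |ψ j n| := by
    intro m
    by_cases hm : m ∈ Finset.Icc a b
    · exact hmax m hm
    · rw [h.supp j m hm]; simp
  have hpos : 0 < |ψ j n| := by
    by_contra h0
    have h1 : ∀ m, ψ j m = 0 := fun m => abs_nonpos_iff.1 ((hall m).trans (not_lt.1 h0))
    have := h.norm_one j
    simp [h1] at this
  have e := h.eqn j n hn
  have : |E j| * |ψ j n| ≤ (B + 2) * |ψ j n| := by
    rw [← abs_mul, ← e]
    calc _ ≤ |ψ j (n + 1)| + |ψ j (n - 1)| + |V n * ψ j n| :=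
          (abs_add_le _ _).trans (by gcongr; exact abs_add_le _ _)
      _ ≤ |ψ j n| + |ψ j n| + B * |ψ j n| := by
          rw [abs_mul]
          exact add_le_add (add_le_add (hall _) (hall _))
            (mul_le_mul_of_nonneg_right (hV n hn) (abs_nonneg _))
      _ = _ := by ring
  exact le_of_mul_le_mul_right this hpos

theorem parseval (h : IsBoxBasis V a b E ψ) (f : ℤ → ℝ) :
    ∑ j, (∑ n ∈ Finset.Icc a b, ψ j n * f n) ^ 2 = ∑ n ∈ Finset.Icc a b, f n ^ 2 := by
  calc _ = ∑ j, ∑ n ∈ Finset.Icc a b, ∑ m ∈ Finset.Icc a b, (ψ j n * ψ j m) * (f n * f m) := by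
        refine Finset.sum_congr rfl fun j _ => ?_
        rw [sq, Finset.sum_mul_sum]
        exact Finset.sum_congr rfl fun n _ => Finset.sum_congr rfl fun m _ => by ring
    _ = ∑ n ∈ Finset.Icc a b, ∑ m ∈ Finset.Icc a b, kron n m * (f n * f m) := by
        rw [Finset.sum_comm]
        refine Finset.sum_congr rfl fun n hn => ?_
        rw [Finset.sum_comm]
        refine Finset.sum_congr rfl fun m hm => ?_
        rw [← Finset.sum_mul, h.complete n hn m hm]
    _ = _ := by
        refine Finset.sum_congr rfl fun n hn => ?_
        rw [Finset.sum_eq_single n]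
        · simp [kron, sq]
        · intro m _ hm
          simp [kron, hm.symm]
        · exact fun hn' => absurd hn hn'

theorem coeff_schrodinger (h : IsBoxBasis V a b E ψ) {f : ℤ → ℝ}
    (hf : ∀ n ∉ Finset.Icc a b, f n = 0) (j : ι) (e : ℝ) :
    ∑ n ∈ Finset.Icc a b, ψ j n * (f (n + 1) + f (n - 1) + V n * f n - e * f n)
      = (E j - e) * ∑ n ∈ Finset.Icc a b, ψ j n * f n := by
  have e1 := sum_schrodinger_symm V (h.supp j) hf
  have e2 : ∑ n ∈ Finset.Icc a b, (ψ j (n + 1) + ψ j (n - 1) + V n * ψ j n) * f n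
      = E j * ∑ n ∈ Finset.Icc a b, ψ j n * f n := by
    rw [Finset.mul_sum]
    exact Finset.sum_congr rfl fun n hn => by rw [h.eqn j n hn]; ring
  have e3 : ∑ n ∈ Finset.Icc a b, ψ j n * (f (n + 1) + f (n - 1) + V n * f n - e * f n)
      = ∑ n ∈ Finset.Icc a b, ψ j n * (f (n + 1) + f (n - 1) + V n * f n)
        - e * ∑ n ∈ Finset.Icc a b, ψ j n * f n := by
    rw [Finset.mul_sum, ← Finset.sum_sub_distrib]
    exact Finset.sum_congr rfl fun n _ => by ring
  rw [e3, e1, e2]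
  ring

theorem exists_eigenvalue_near (h : IsBoxBasis V a b E ψ) {f : ℤ → ℝ}
    (hf : ∀ n ∉ Finset.Icc a b, f n = 0) {e ξ : ℝ} (hξ : 0 ≤ ξ)
    (hpos : 0 < ∑ n ∈ Finset.Icc a b, f n ^ 2)
    (hle : ∑ n ∈ Finset.Icc a b, (f (n + 1) + f (n - 1) + V n * f n - e * f n) ^ 2
      ≤ ξ ^ 2 * ∑ n ∈ Finset.Icc a b, f n ^ 2) :
    ∃ j, |E j - e| ≤ ξ := by
  by_contra! hcon
  rw [← h.parseval] at hle hpos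
  rw [← h.parseval] at hle
  simp only [h.coeff_schrodinger hf, mul_pow] at hle
  rw [Finset.mul_sum] at hle
  have hj : ∃ j, (∑ n ∈ Finset.Icc a b, ψ j n * f n) ^ 2 ≠ 0 := by
    by_contra! h0
    simp [h0] at hpos
  obtain ⟨j, hj⟩ := hj
  have hsq : ∀ i, ξ ^ 2 < (E i - e) ^ 2 := fun i => by
    rw [← sq_abs (E i - e)]
    exact pow_lt_pow_left₀ (hcon i) hξ two_ne_zero
  refine absurd hle (not_le.2 (Finset.sum_lt_sum (fun i _ => ?_) ⟨j, Finset.mem_univ _, ?_⟩))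
  · have := (hsq i).le
    gcongr
  · exact mul_lt_mul_of_pos_right (hsq j) (lt_of_le_of_ne (sq_nonneg _) hj.symm)

end IsBoxBasis

end Box

section Captured

/-- The window `{1 - M, …, M}`, symmetric under `n ↦ 1 - n`. -/
def window (M : ℕ) : Finset ℤ := Finset.Icc (1 - (M : ℤ)) M

theorem card_window (M : ℕ) : (window M).card = 2 * M := by
  simp only [window, Int.card_Icc]; omega

theorem window_mono {M N : ℕ} (h : M ≤ N) : window M ⊆ window N := by
  intro n hn
  simp only [window, Finset.mem_Icc] at hn ⊢
  omega

/-- On the window of size `M` and its neighbours, `u` is controlled by its values at `0`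
and `1`. -/
def IsCentered (M : ℕ) (u : ℤ → ℝ) : Prop :=
  ∀ n ∈ Finset.Icc (-(M : ℤ)) (M + 1), |u n| ≤ 2 * M * max |u 0| |u 1|

open Classical in
/-- In every large box, the eigenvectors centered at scale `M` have little total mass in the
annulus between the windows of size `M` and `N`. -/
def IsCaptured (V : ℤ → ℝ) (M N D : ℕ) : Prop :=
  ∀ L : ℕ, D ≤ L → ∀ (ι : Type) [Fintype ι] (E : ι → ℝ) (ψ : ι → ℤ → ℝ),
    IsBoxBasis V (-(L : ℤ)) L E ψ →
    ∑ j with IsCentered M (ψ j), ∑ n ∈ window N \ window M, ψ j n ^ 2 ≤ 1 / M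

namespace IsBoxBasis

variable {V : ℤ → ℝ} {a b : ℤ} {ι : Type} [Fintype ι] {E : ι → ℝ} {ψ : ι → ℤ → ℝ}

theorem sum_sq_le_one (h : IsBoxBasis V a b E ψ) (n : ℤ) : ∑ j, ψ j n ^ 2 ≤ 1 := by
  by_cases hn : n ∈ Finset.Icc a b
  · have := h.complete n hn n hn
    simp only [kron, if_pos, ← sq] at this
    exact this.le
  · simp [h.supp _ n hn]

theorem sum_sq_synthesis (h : IsBoxBasis V a b E ψ) (J : Finset ι) (c : ι → ℝ) :
    ∑ n ∈ Finset.Icc a b, (∑ j ∈ J, c j * ψ j n) ^ 2 = ∑ j ∈ J, c j ^ 2 := by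
  classical
  calc _ = ∑ i ∈ J, ∑ j ∈ J, c i * c j * ∑ n ∈ Finset.Icc a b, ψ i n * ψ j n := by
        simp only [Finset.mul_sum]
        rw [Finset.sum_congr rfl fun i _ => Finset.sum_comm, Finset.sum_comm]
        refine Finset.sum_congr rfl fun n _ => ?_
        rw [sq, Finset.sum_mul_sum]
        exact Finset.sum_congr rfl fun n _ => Finset.sum_congr rfl fun m _ => by ring
    _ = _ := by
        refine Finset.sum_congr rfl fun i hi => ?_
        rw [Finset.sum_eq_single i]
        · simp only [← sq, h.norm_one, mul_one]
        · intro j _ hj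
          rw [h.orth i j hj.symm, mul_zero]
        · exact fun hn' => absurd hi hn'

theorem sum_synthesis_le (h : IsBoxBasis V a b E ψ) (J : Finset ι) (c : ι → ℝ) (T : Finset ℤ) :
    ∑ n ∈ T, (∑ j ∈ J, c j * ψ j n) ^ 2 ≤ ∑ j ∈ J, c j ^ 2 := by
  classical
  rw [← h.sum_sq_synthesis J c,
    ← Finset.sum_filter_add_sum_filter_not T (fun n => n ∈ Finset.Icc a b)]
  have h0 : ∑ n ∈ T with ¬ n ∈ Finset.Icc a b, (∑ j ∈ J, c j * ψ j n) ^ 2 = 0 := by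
    refine Finset.sum_eq_zero fun n hn => ?_
    simp [h.supp _ n (Finset.mem_filter.1 hn).2]
  rw [h0, add_zero]
  exact Finset.sum_le_sum_of_subset_of_nonneg
    (fun n hn => (Finset.mem_filter.1 hn).2) fun _ _ _ => sq_nonneg _

open Classical in
theorem sum_not_isCentered_le (h : IsBoxBasis V a b E ψ) {M : ℕ} (hM : 1 ≤ M) {x : ℤ}
    (hx : x = 0 ∨ x = 1) : ∑ j with ¬ IsCentered M (ψ j), ψ j x ^ 2 ≤ 1 / M := by
  have hM' : (1 : ℝ) ≤ M := by exact_mod_cast hM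
  calc _ ≤ ∑ j with ¬ IsCentered M (ψ j),
        ∑ n ∈ Finset.Icc (-(M : ℤ)) (M + 1), ψ j n ^ 2 / (4 * M ^ 2) := by
        refine Finset.sum_le_sum fun j hj => ?_
        have hj := (Finset.mem_filter.1 hj).2
        simp only [IsCentered] at hj
        push Not at hj
        obtain ⟨n, hn, hlt⟩ := hj
        have h1 : |ψ j x| ≤ max |ψ j 0| |ψ j 1| := by
          rcases hx with rfl | rfl
          · exact le_max_left _ _
          · exact le_max_right _ _
        have h2 : 2 * M * |ψ j x| ≤ |ψ j n| := (by gcongr : _ ≤ _).trans hlt.le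
        have h3 : ψ j x ^ 2 ≤ ψ j n ^ 2 / (4 * M ^ 2) := by
          rw [le_div_iff₀ (by positivity), ← sq_abs (ψ j x), ← sq_abs (ψ j n)]
          have := pow_le_pow_left₀ (by positivity) h2 2
          linarith
        exact h3.trans (Finset.single_le_sum
          (f := fun n => ψ j n ^ 2 / (4 * (M : ℝ) ^ 2)) (fun _ _ => by positivity) hn)
    _ ≤ ∑ j, ∑ n ∈ Finset.Icc (-(M : ℤ)) (M + 1), ψ j n ^ 2 / (4 * M ^ 2) :=
        Finset.sum_le_sum_of_subset_of_nonneg (Finset.subset_univ _)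
          fun _ _ _ => Finset.sum_nonneg fun _ _ => by positivity
    _ ≤ ∑ n ∈ Finset.Icc (-(M : ℤ)) (M + 1), 1 / (4 * (M : ℝ) ^ 2) := by
        rw [Finset.sum_comm]
        refine Finset.sum_le_sum fun n _ => ?_
        rw [← Finset.sum_div]
        have := h.sum_sq_le_one n
        gcongr
    _ = (2 * M + 2) / (4 * M ^ 2) := by
        rw [Finset.sum_const, Int.card_Icc, nsmul_eq_mul]
        have : ((M : ℤ) + 1 + 1 - -(M : ℤ)).toNat = 2 * M + 2 := by omega
        rw [this]
        push_cast
        ring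
    _ ≤ 1 / M := by
        rw [div_le_div_iff₀ (by positivity) (by positivity)]
        nlinarith

end IsBoxBasis

theorem sum_Ico_one_div_le {M : ℕ → ℕ} (h0 : 1 ≤ M 0) (hM : ∀ l, 2 * M l ≤ M (l + 1)) (i k : ℕ) :
    ∑ l ∈ Finset.Ico i k, 1 / (M l : ℝ) ≤ 2 / M i := by
  have hpos : ∀ l, 1 ≤ M l := by
    intro l
    induction l with
    | zero => exact h0
    | succ l ih => have := hM l; omega
  rcases le_or_gt k i with hk | hk
  · rw [Finset.Ico_eq_empty_of_le hk, Finset.sum_empty]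
    positivity
  suffices ∑ l ∈ Finset.Ico i k, 1 / (M l : ℝ) ≤ 2 / M i - 2 / M k by
    have : (0 : ℝ) ≤ 2 / M k := by positivity
    linarith
  induction k, hk.le using Nat.le_induction with
  | base => simp
  | succ k hk' ih =>
    rw [Finset.sum_Ico_succ_top hk']
    have ih' : ∑ l ∈ Finset.Ico i k, 1 / (M l : ℝ) ≤ 2 / M i - 2 / M k := by
      rcases hk'.eq_or_lt with rfl | hlt
      · simp
      · exact ih hlt
    have h1 : (2 : ℝ) * M k ≤ M (k + 1) := by exact_mod_cast hM k
    have h2 : (1 : ℝ) ≤ M k := by exact_mod_cast hpos k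
    have h3 : (2 : ℝ) / M (k + 1) ≤ 1 / M k := by
      rw [div_le_div_iff₀ (by linarith) (by linarith)]
      linarith
    have h4 : (2 : ℝ) / M k = 1 / M k + 1 / M k := by ring
    linarith

theorem hasPurePointSpectrum_of_isCaptured {V : ℤ → ℝ} {B : ℝ} (hV : ∀ n, |V n| ≤ B)
    {M D : ℕ → ℕ} (h0 : 1 ≤ M 0) (hM : ∀ l, 2 * M l ≤ M (l + 1))
    (hcap : ∀ l, IsCaptured V (M l) (M (l + 1)) (D l)) : HasPurePointSpectrum V := by
  classical
  have hpow : ∀ l, 2 ^ l ≤ M l := by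
    intro l
    induction l with
    | zero => exact h0
    | succ l ih => have := hM l; rw [pow_succ]; omega
  have hpos : ∀ l, 1 ≤ M l := fun l => Nat.one_le_two_pow.trans (hpow l)
  have hmono : Monotone M := monotone_nat_of_le_succ fun l => by have := hM l; omega
  refine hasPurePointSpectrum_of_approx hV fun δ hδ => ?_
  obtain ⟨i, hi⟩ : ∃ i, 2 / (M i : ℝ) ≤ δ := by
    obtain ⟨i, hi⟩ := exists_nat_gt (2 / δ)
    refine ⟨i, ?_⟩
    have h1 : (i : ℝ) ≤ M i := by exact_mod_cast (Nat.lt_two_pow_self.le).trans (hpow i)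
    have h2 : (1 : ℝ) ≤ M i := by exact_mod_cast hpos i
    rw [div_le_iff₀ (by linarith)]
    rw [div_lt_iff₀ hδ] at hi
    nlinarith
  let L : ℕ → ℕ := fun k => k + M k + 2 + ∑ l ∈ Finset.range k, D l
  have hL : ∀ k l, l < k → D l ≤ L k := by
    intro k l hl
    have := Finset.single_le_sum (f := D) (fun _ _ => Nat.zero_le _) (Finset.mem_range.2 hl)
    simp only [L]
    omega
  choose E ψ hψ using fun k => exists_isBoxBasis V (-(L k : ℤ)) (L k)
  let J : ∀ k, Finset (Finset.Icc (-(L k : ℤ)) (L k)) := fun k =>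
    Finset.univ.filter fun j => ∀ l ∈ Finset.Ico i k, IsCentered (M l) (ψ k j)
  let P : ℕ → ℤ → ℤ → ℝ := fun k n m => ∑ j ∈ J k, ψ k j n * ψ k j m
  have hev : ∀ T : Finset ℤ, ∀ᶠ k : ℕ in atTop, ∀ n ∈ T, n ∈ Finset.Icc (2 - (k : ℤ)) (k - 2) := by
    intro T
    rw [eventually_all_finset]
    intro n _
    filter_upwards [eventually_ge_atTop (n.natAbs + 2)] with k hk
    simp only [Finset.mem_Icc]
    omega
  have hbox : ∀ k : ℕ, Finset.Icc (2 - (k : ℤ)) (k - 2) ⊆ Finset.Icc (-(L k : ℤ)) (L k) := by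
    intro k
    have : k ≤ L k := by simp only [L]; omega
    apply Finset.Icc_subset_Icc <;> omega
  have hwin : ∀ k : ℕ, Finset.Icc (2 - (k : ℤ)) (k - 2) ⊆ window (M k) := by
    intro k
    have : k ≤ M k := (Nat.lt_two_pow_self.le).trans (hpow k)
    apply Finset.Icc_subset_Icc <;> omega
  have hdecay : ∀ x : ℤ, x = 0 ∨ x = 1 → ∀ T : Finset ℤ, ∀ᶠ k in atTop,
      ∑ m ∈ T, (kron x m - P k x m) ^ 2 ≤ δ := by
    intro x hx T
    filter_upwards [hev T, hev {x}] with k hT hx'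
    have hxk := hbox k (hx' x (Finset.mem_singleton_self x))
    have hk : ∀ m ∈ T, kron x m - P k x m = ∑ j ∈ (J k)ᶜ, ψ k j x * ψ k j m := by
      intro m hm
      rw [← (hψ k).complete x hxk m (hbox k (hT m hm)), ← Finset.sum_add_sum_compl (J k)]
      simp [P]
    rw [Finset.sum_congr rfl fun m hm => by rw [hk m hm]]
    refine ((hψ k).sum_synthesis_le _ _ T).trans (le_trans ?_
      ((sum_Ico_one_div_le h0 hM i k).trans hi))
    calc _ ≤ ∑ j ∈ (J k)ᶜ, ∑ l ∈ Finset.Ico i k,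
          (if IsCentered (M l) (ψ k j) then 0 else ψ k j x ^ 2) := by
          refine Finset.sum_le_sum fun j hj => ?_
          simp only [J, Finset.mem_compl, Finset.mem_filter, Finset.mem_univ, true_and] at hj
          push Not at hj
          obtain ⟨l, hl, hc⟩ := hj
          have := Finset.single_le_sum
            (f := fun l => if IsCentered (M l) (ψ k j) then (0 : ℝ) else ψ k j x ^ 2)
            (fun _ _ => by split_ifs <;> positivity) hl
          rwa [if_neg hc] at this
      _ ≤ ∑ j, ∑ l ∈ Finset.Ico i k, (if IsCentered (M l) (ψ k j) then 0 else ψ k j x ^ 2) :=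
          Finset.sum_le_sum_of_subset_of_nonneg (Finset.subset_univ _)
            fun _ _ _ => Finset.sum_nonneg fun _ _ => by split_ifs <;> positivity
      _ ≤ _ := by
          rw [Finset.sum_comm]
          refine Finset.sum_le_sum fun l _ => ?_
          have := (hψ k).sum_not_isCentered_le (hpos l) hx
          rw [Finset.sum_filter] at this
          refine le_trans (Finset.sum_le_sum fun j _ => ?_) this
          split_ifs <;> simp_all
  refine ⟨2 * M i + 2, P, ?_, ?_, ?_, hdecay 0 (Or.inl rfl), hdecay 1 (Or.inr rfl), ?_⟩
  · exact fun k n m => Finset.sum_congr rfl fun j _ => mul_comm _ _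
  · intro k n m
    have h1 : ∀ x, ∑ j ∈ J k, ψ k j x ^ 2 ≤ 1 := fun x =>
      (Finset.sum_le_sum_of_subset_of_nonneg (Finset.subset_univ _)
        fun _ _ _ => sq_nonneg _).trans ((hψ k).sum_sq_le_one x)
    calc _ ≤ ∑ j ∈ J k, |ψ k j n * ψ k j m| := Finset.abs_sum_le_sum_abs _ _
      _ ≤ ∑ j ∈ J k, (ψ k j n ^ 2 + ψ k j m ^ 2) / 2 := by
          refine Finset.sum_le_sum fun j _ => ?_
          rw [abs_mul, ← sq_abs (ψ k j n), ← sq_abs (ψ k j m)]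
          nlinarith [sq_nonneg (|ψ k j n| - |ψ k j m|)]
      _ ≤ 1 := by
          rw [← Finset.sum_div, Finset.sum_add_distrib]
          have := h1 n
          have := h1 m
          linarith
  · intro S T
    filter_upwards [hev S, eventually_gt_atTop i] with k hS hik
    calc _ ≤ ∑ n ∈ S, ∑ j ∈ J k, ψ k j n ^ 2 :=
          Finset.sum_le_sum fun n _ => (hψ k).sum_synthesis_le _ _ T
      _ ≤ ∑ n ∈ window (M k), ∑ j ∈ J k, ψ k j n ^ 2 :=
          Finset.sum_le_sum_of_subset_of_nonneg (fun n hn => hwin k (hS n hn))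
            fun _ _ _ => Finset.sum_nonneg fun _ _ => sq_nonneg _
      _ ≤ 2 * M i + ∑ l ∈ Finset.Ico i k, 1 / (M l : ℝ) := by
          suffices ∀ q, i ≤ q → q ≤ k → ∑ n ∈ window (M q), ∑ j ∈ J k, ψ k j n ^ 2
              ≤ 2 * M i + ∑ l ∈ Finset.Ico i q, 1 / (M l : ℝ) from this k hik.le le_rfl
          intro q hq
          induction q, hq using Nat.le_induction with
          | base =>
            intro _
            rw [Finset.Ico_self, Finset.sum_empty, add_zero]
            calc _ ≤ ∑ n ∈ window (M i), (1 : ℝ) := Finset.sum_le_sum fun n _ =>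
                  (Finset.sum_le_sum_of_subset_of_nonneg (Finset.subset_univ _)
                    fun _ _ _ => sq_nonneg _).trans ((hψ k).sum_sq_le_one n)
              _ = _ := by simp [card_window]
          | succ q hq ih =>
            intro hqk
            rw [Finset.sum_Ico_succ_top hq,
              ← Finset.sum_sdiff (window_mono (hmono (Nat.le_succ q)))]
            have hc := hcap q (L k) (hL k q (by omega)) _ (E k) (ψ k) (hψ k)
            have h2 : ∑ n ∈ window (M (q + 1)) \ window (M q), ∑ j ∈ J k, ψ k j n ^ 2
                ≤ 1 / M q := by
              rw [Finset.sum_comm]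
              refine le_trans (Finset.sum_le_sum_of_subset_of_nonneg (fun j hj => ?_)
                fun _ _ _ => Finset.sum_nonneg fun _ _ => sq_nonneg _) hc
              simp only [J, Finset.mem_filter, Finset.mem_univ, true_and] at hj ⊢
              exact hj q (Finset.mem_Ico.2 ⟨hq, by omega⟩)
            have := ih (by omega)
            linarith
      _ ≤ _ := by
          have h1 := sum_Ico_one_div_le h0 hM i k
          have h2 : (1 : ℝ) ≤ M i := by exact_mod_cast hpos i
          have h3 : 2 / (M i : ℝ) ≤ 2 := div_le_self (by norm_num) h2
          linarith
  · intro n m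
    filter_upwards [hev {n, m}] with k hk
    have hn := hbox k (hk n (by simp))
    have hm := hbox k (hk m (by simp))
    have e1 : P k (n + 1) m + P k (n - 1) m + V n * P k n m
        = ∑ j ∈ J k, E k j * (ψ k j n * ψ k j m) := by
      simp only [P]
      rw [Finset.mul_sum, ← Finset.sum_add_distrib, ← Finset.sum_add_distrib]
      exact Finset.sum_congr rfl fun j _ => by linear_combination (ψ k j m) * (hψ k).eqn j n hn
    have e2 : P k n (m + 1) + P k n (m - 1) + V m * P k n m
        = ∑ j ∈ J k, E k j * (ψ k j n * ψ k j m) := by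
      simp only [P]
      rw [Finset.mul_sum, ← Finset.sum_add_distrib, ← Finset.sum_add_distrib]
      exact Finset.sum_congr rfl fun j _ => by linear_combination (ψ k j n) * (hψ k).eqn j m hm
    rw [e1, e2]

end Captured

section HalfLine

/-- The solution of `u (n + 2) = c n * u (n + 1) - u n` with `u 0 = y` and `u 1 = x`. -/
def halfLineSol (c : ℕ → ℝ) (y x : ℝ) : ℕ → ℝ
  | 0 => y
  | 1 => x
  | n + 2 => c n * halfLineSol c y x (n + 1) - halfLineSol c y x n

theorem halfLineSol_eq (c : ℕ → ℝ) (y x : ℝ) (n : ℕ) :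
    halfLineSol c y x n = x * halfLineSol c 0 1 n + y * halfLineSol c 1 0 n := by
  induction n using Nat.twoStepInduction with
  | zero => simp [halfLineSol]
  | one => simp [halfLineSol]
  | more n h1 h2 =>
    simp only [halfLineSol]
    rw [h1, h2]
    ring

theorem eq_halfLineSol {c : ℕ → ℝ} {u : ℕ → ℝ} {m : ℕ}
    (hu : ∀ n < m, u (n + 2) = c n * u (n + 1) - u n) (n : ℕ) (hn : n ≤ m + 1) :
    u n = halfLineSol c (u 0) (u 1) n := by
  induction n using Nat.twoStepInduction with
  | zero => simp [halfLineSol]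
  | one => simp [halfLineSol]
  | more n h1 h2 =>
    simp only [halfLineSol]
    rw [hu n (by omega), h1 (by omega), h2 (by omega)]

theorem halfLineSol_congr {c c' : ℕ → ℝ} {m : ℕ} (h : ∀ n < m, c n = c' n) (y x : ℝ) (n : ℕ)
    (hn : n ≤ m + 1) : halfLineSol c y x n = halfLineSol c' y x n := by
  have := eq_halfLineSol (c := c') (u := halfLineSol c y x) (m := m)
    (fun n hn => by rw [← h n hn]; rfl) n hn
  simpa [halfLineSol] using this

/-- The reflection of `V` about `1 / 2`. -/
def reflect (V : ℤ → ℝ) : ℤ → ℝ := fun n => V (1 - n)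

/-- Both fundamental solutions at energy `E` on the half line `n ≥ 1` stay bounded by `Γ`
up to `m + 1`. -/
def IsSlow (V : ℤ → ℝ) (m : ℕ) (Γ E : ℝ) : Prop :=
  ∀ n ≤ m + 1, |halfLineSol (fun i => E - V (i + 1)) 0 1 n| ≤ Γ ∧
    |halfLineSol (fun i => E - V (i + 1)) 1 0 n| ≤ Γ

/-- For all energies in `[-C, C]`, some solution grows beyond `Γ` within the window of
size `m`, on both sides. -/
def HasGrowth (V : ℤ → ℝ) (m : ℕ) (Γ C : ℝ) : Prop :=
  ∀ E, |E| ≤ C → ¬ IsSlow V m Γ E ∧ ¬ IsSlow (reflect V) m Γ E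

theorem isSlow_congr {V V' : ℤ → ℝ} {m : ℕ} (h : ∀ i : ℕ, i < m → V (i + 1) = V' (i + 1))
    (Γ E : ℝ) : IsSlow V m Γ E ↔ IsSlow V' m Γ E := by
  have h' : ∀ i < m, E - V ((i : ℤ) + 1) = E - V' (i + 1) := fun i hi => by rw [h i hi]
  unfold IsSlow
  refine forall₂_congr fun n hn => ?_
  rw [halfLineSol_congr h' 0 1 n hn, halfLineSol_congr h' 1 0 n hn]

theorem hasGrowth_congr {V V' : ℤ → ℝ} {m : ℕ} (h : ∀ n ∈ window m, V n = V' n) (Γ C : ℝ) :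
    HasGrowth V m Γ C ↔ HasGrowth V' m Γ C := by
  unfold HasGrowth
  refine forall₂_congr fun E _ => ?_
  rw [isSlow_congr (V := V) (V' := V'), isSlow_congr (V := reflect V) (V' := reflect V')]
  · intro i hi
    exact h _ (by simp only [window, Finset.mem_Icc]; omega)
  · intro i hi
    exact h _ (by simp only [window, Finset.mem_Icc]; omega)

theorem exists_index_of_not_isSlow {V : ℤ → ℝ} {m : ℕ} {Γ E : ℝ} (hΓ : 1 ≤ Γ)
    (h : ¬ IsSlow V m Γ E) : ∃ n, 2 ≤ n ∧ n ≤ m + 1 ∧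
      (Γ < |halfLineSol (fun i => E - V (i + 1)) 0 1 n| ∨
        Γ < |halfLineSol (fun i => E - V (i + 1)) 1 0 n|) := by
  unfold IsSlow at h
  push Not at h
  obtain ⟨n, hn, h⟩ := h
  have h' : Γ < |halfLineSol (fun i => E - V (i + 1)) 0 1 n| ∨
      Γ < |halfLineSol (fun i => E - V (i + 1)) 1 0 n| := by
    by_contra! hcon
    exact absurd (h hcon.1) (not_lt.2 hcon.2)
  refine ⟨n, ?_, hn, h'⟩
  by_contra! hlt
  interval_cases n
  · simp [halfLineSol] at h'
    rcases h' with h' | h' <;> linarith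
  · simp [halfLineSol] at h'
    rcases h' with h' | h' <;> linarith

theorem exists_perturb_eq_zero {p q x y R Γ : ℝ} (hΓ : 0 < Γ) (h : Γ < |p| ∨ Γ < |q|)
    (hR : |x * p + y * q| ≤ R) :
    ∃ x' y', x' * p + y' * q = 0 ∧ |x' - x| ≤ R / Γ ∧ |y' - y| ≤ R / Γ := by
  have hR0 : 0 ≤ R := (abs_nonneg _).trans hR
  rcases h with h | h
  · have hp : p ≠ 0 := abs_pos.1 (hΓ.trans h)
    refine ⟨x - (x * p + y * q) / p, y, ?_, ?_, ?_⟩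
    · field_simp; ring
    · rw [sub_sub_cancel_left, abs_neg, abs_div]
      exact div_le_div₀ hR0 hR hΓ h.le
    · simpa using by positivity
  · have hp : q ≠ 0 := abs_pos.1 (hΓ.trans h)
    refine ⟨x, y - (x * p + y * q) / q, ?_, ?_, ?_⟩
    · field_simp; ring
    · simpa using by positivity
    · rw [sub_sub_cancel_left, abs_neg, abs_div]
      exact div_le_div₀ hR0 hR hΓ h.le

theorem IsBoxBasis.congr {V V' : ℤ → ℝ} {a b : ℤ} {ι : Type} [Fintype ι] {E : ι → ℝ}
    {ψ : ι → ℤ → ℝ} (h : IsBoxBasis V a b E ψ) (hV : ∀ n ∈ Finset.Icc a b, V n = V' n) :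
    IsBoxBasis V' a b E ψ :=
  ⟨h.supp, fun j n hn => by rw [← hV n hn]; exact h.eqn j n hn, h.complete, h.norm_one, h.orth⟩

set_option maxHeartbeats 800000 in
theorem exists_near_eigenvalues (V : ℤ → ℝ) (m : ℕ) : ∃ F : Finset ℝ, F.card ≤ 2 * m ^ 3 ∧
    ∀ (V' : ℤ → ℝ), (∀ n ∈ window m, V n = V' n) → ∀ (Γ C κ E : ℝ), 1 ≤ Γ → 0 ≤ κ →
    2 * κ ≤ Γ → |E| ≤ C → HasGrowth V m Γ C → ∀ ψ : ℤ → ℝ,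
    (∀ n ∈ window m, ψ (n + 1) + ψ (n - 1) + V' n * ψ n = E * ψ n) →
    (∀ n ∈ Finset.Icc (-(m : ℤ)) (m + 1), |ψ n| ≤ κ * max |ψ 0| |ψ 1|) →
    (ψ 0 ≠ 0 ∨ ψ 1 ≠ 0) → ∃ e ∈ F, |e - E| ≤ 6 * κ / Γ := by
  classical
  choose Eb ψb hb using fun a b : ℕ => exists_isBoxBasis V (2 - (a : ℤ)) (b - 1)
  refine ⟨(Finset.Icc 2 (m + 1)).biUnion fun a => (Finset.Icc 2 (m + 1)).biUnion fun b =>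
    Finset.univ.image (Eb a b), ?_, ?_⟩
  · calc _ ≤ ∑ a ∈ Finset.Icc 2 (m + 1), ∑ b ∈ Finset.Icc 2 (m + 1), 2 * m := by
          refine Finset.card_biUnion_le.trans (Finset.sum_le_sum fun a ha => ?_)
          refine Finset.card_biUnion_le.trans (Finset.sum_le_sum fun b hb => ?_)
          refine Finset.card_image_le.trans ?_
          rw [Finset.mem_Icc] at ha hb
          rw [Finset.card_univ, Fintype.card_coe, Int.card_Icc]
          omega
      _ = _ := by
          simp only [Finset.sum_const, Nat.card_Icc, smul_eq_mul]
          rw [show m + 1 + 1 - 2 = m by omega]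
          ring
  intro V' hV Γ C κ E hΓ hκ hκΓ hE hG ψ heq hbd hne
  have hΓ0 : 0 < Γ := by linarith
  set μ := max |ψ 0| |ψ 1| with hμ
  have hμ0 : 0 < μ := by
    rcases hne with h | h
    · exact (abs_pos.2 h).trans_le (le_max_left _ _)
    · exact (abs_pos.2 h).trans_le (le_max_right _ _)
  have hG' := (hasGrowth_congr hV Γ C).1 hG E hE
  obtain ⟨b, hb2, hbm, hbΓ⟩ := exists_index_of_not_isSlow hΓ hG'.1
  obtain ⟨a, ha2, ham, haΓ⟩ := exists_index_of_not_isSlow hΓ hG'.2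
  set cR : ℕ → ℝ := fun i => E - V' (i + 1) with hcR
  set cL : ℕ → ℝ := fun i => E - reflect V' (i + 1) with hcL
  have hR : ψ b = ψ 1 * halfLineSol cR 0 1 b + ψ 0 * halfLineSol cR 1 0 b := by
    rw [← halfLineSol_eq]
    have := eq_halfLineSol (c := cR) (u := fun n : ℕ => ψ n) (m := m) (fun n hn => by
      have := heq (n + 1) (by simp only [window, Finset.mem_Icc]; omega)
      simp only [hcR]
      push_cast
      rw [show (n : ℤ) + 1 + 1 = n + 2 by ring, show (n : ℤ) + 1 - 1 = n by ring] at this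
      linarith) b hbm
    simpa using this
  have hL : ψ (1 - a) = ψ 0 * halfLineSol cL 0 1 a + ψ 1 * halfLineSol cL 1 0 a := by
    rw [← halfLineSol_eq]
    have := eq_halfLineSol (c := cL) (u := fun n : ℕ => ψ (1 - n)) (m := m) (fun n hn => by
      have := heq (-n) (by simp only [window, Finset.mem_Icc]; omega)
      simp only [hcL, reflect]
      push_cast
      rw [show (1 : ℤ) - (n + 2) = -n - 1 by ring, show (1 : ℤ) - (n + 1) = -n by ring]
      rw [show -(n : ℤ) + 1 = 1 - n by ring] at this
      linarith) a ham
    simpa using this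
  obtain ⟨x, y, hxy, hx, hy⟩ := exists_perturb_eq_zero hΓ0 hbΓ
    (R := κ * μ) (hR ▸ hbd b (by rw [Finset.mem_Icc]; omega))
  obtain ⟨x', y', hxy', hx', hy'⟩ := exists_perturb_eq_zero hΓ0 haΓ
    (R := κ * μ) (hL ▸ hbd (1 - a) (by rw [Finset.mem_Icc]; omega))
  rw [← halfLineSol_eq] at hxy hxy'
  let w : ℤ → ℝ := fun n => if n ∈ Finset.Icc (2 - (a : ℤ)) (b - 1) then
    (if 1 ≤ n then halfLineSol cR y x n.toNat else halfLineSol cL y' x' (1 - n).toNat) else 0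
  have hwR : ∀ n : ℕ, 1 ≤ n → n ≤ b → w n = halfLineSol cR y x n := by
    intro n h1 h2
    simp only [w, Finset.mem_Icc]
    rcases h2.eq_or_lt with rfl | h2
    · rw [if_neg (by omega), hxy]
    · rw [if_pos (by omega), if_pos (by omega), Int.toNat_natCast]
  have hwL : ∀ n : ℕ, 1 ≤ n → n ≤ a → w (1 - n) = halfLineSol cL y' x' n := by
    intro n h1 h2
    simp only [w, Finset.mem_Icc]
    rcases h2.eq_or_lt with rfl | h2
    · rw [if_neg (by omega), hxy']
    · rw [if_pos (by omega), if_neg (by omega)]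
      congr 1
      omega
  have hw1 : w 1 = x := by simpa [halfLineSol] using hwR 1 le_rfl (by omega)
  have hw0 : w 0 = x' := by simpa [halfLineSol] using hwL 1 le_rfl (by omega)
  have hw2 : w 2 = (E - V' 1) * x - y := by
    simpa [halfLineSol, hcR] using hwR 2 (by omega) (by omega)
  have hwm : w (-1) = (E - V' 0) * x' - y' := by
    simpa [halfLineSol, hcL, reflect] using hwL 2 (by omega) (by omega)
  have hinR : ∀ n : ℕ, n + 2 < b → w (n + 2 + 1) + w (n + 2 - 1) + V' (n + 2) * w (n + 2)
      - E * w (n + 2) = 0 := by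
    intro n hn
    have e1 := hwR (n + 3) (by omega) (by omega)
    have e2 := hwR (n + 2) (by omega) (by omega)
    have e3 := hwR (n + 1) (by omega) (by omega)
    push_cast at e1 e2 e3
    rw [show (n : ℤ) + 2 + 1 = n + 3 by ring, show (n : ℤ) + 2 - 1 = n + 1 by ring, e1, e2, e3]
    have : halfLineSol cR y x (n + 3)
      = cR (n + 1) * halfLineSol cR y x (n + 2) - halfLineSol cR y x (n + 1) := rfl
    rw [this]
    simp only [hcR]
    push_cast
    rw [show (n : ℤ) + 1 + 1 = n + 2 by ring]
    ring
  have hinL : ∀ n : ℕ, n + 2 < a → w (-1 - n + 1) + w (-1 - n - 1) + V' (-1 - n) * w (-1 - n)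
      - E * w (-1 - n) = 0 := by
    intro n hn
    have e1 := hwL (n + 3) (by omega) (by omega)
    have e2 := hwL (n + 2) (by omega) (by omega)
    have e3 := hwL (n + 1) (by omega) (by omega)
    push_cast at e1 e2 e3
    rw [show (1 : ℤ) - (n + 3) = -1 - n - 1 by ring] at e1
    rw [show (1 : ℤ) - (n + 2) = -1 - n by ring] at e2
    rw [show (1 : ℤ) - (n + 1) = -1 - n + 1 by ring] at e3
    rw [e1, e2, e3]
    have : halfLineSol cL y' x' (n + 3)
      = cL (n + 1) * halfLineSol cL y' x' (n + 2) - halfLineSol cL y' x' (n + 1) := rfl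
    rw [this]
    simp only [hcL, reflect]
    push_cast
    rw [show (1 : ℤ) - (n + 1 + 1) = -1 - n by ring]
    ring
  set s := κ * μ / Γ with hs
  have hs0 : 0 ≤ s := by positivity
  have hsμ : s ≤ μ / 2 := by
    rw [hs, div_le_iff₀ hΓ0]
    calc κ * μ = (2 * κ) * (μ / 2) := by ring
      _ ≤ Γ * (μ / 2) := by gcongr
      _ = _ := mul_comm _ _
  have herr : ∀ n ∈ Finset.Icc (2 - (a : ℤ)) (b - 1),
      (w (n + 1) + w (n - 1) + V' n * w n - E * w n) ^ 2
        ≤ if n ∈ ({0, 1} : Finset ℤ) then (2 * s) ^ 2 else 0 := by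
    intro n hn
    rw [Finset.mem_Icc] at hn
    have two : ∀ z t u : ℝ, |z - t| ≤ s → |u - t| ≤ s → (z - u) ^ 2 ≤ (2 * s) ^ 2 := by
      intro z t u h1 h2
      rw [abs_le] at h1 h2
      exact sq_le_sq' (by linarith [h1.1, h2.2]) (by linarith [h1.2, h2.1])
    rcases lt_or_ge n 0 with h | h
    · obtain ⟨k, rfl⟩ : ∃ k : ℕ, n = -1 - k := ⟨(-1 - n).toNat, by omega⟩
      rw [hinL k (by omega), if_neg (by simp only [Finset.mem_insert, Finset.mem_singleton]; omega)]
      simp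
    rcases lt_or_ge 1 n with h' | h'
    · obtain ⟨k, rfl⟩ : ∃ k : ℕ, n = k + 2 := ⟨(n - 2).toNat, by omega⟩
      rw [hinR k (by omega), if_neg (by simp only [Finset.mem_insert, Finset.mem_singleton]; omega)]
      simp
    interval_cases n
    · simp only [zero_add, zero_sub, hw1, hwm, hw0]
      have := two x (ψ 1) y' hx hy'
      simp only [Finset.mem_insert, true_or, if_true]
      convert this using 1
      ring
    · norm_num [hw0, hw1, hw2]
      have := two x' (ψ 0) y hx' hy
      convert this using 1
      ring
  have hsub : ({0, 1} : Finset ℤ) ⊆ Finset.Icc (2 - (a : ℤ)) (b - 1) := by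
    intro n hn
    simp only [Finset.mem_insert, Finset.mem_singleton, Finset.mem_Icc] at hn ⊢
    omega
  have hsum1 : ∑ n ∈ Finset.Icc (2 - (a : ℤ)) (b - 1),
      (w (n + 1) + w (n - 1) + V' n * w n - E * w n) ^ 2 ≤ 8 * s ^ 2 := by
    refine (Finset.sum_le_sum herr).trans ?_
    rw [← Finset.sum_filter, Finset.sum_const, Finset.filter_mem_eq_inter,
      Finset.inter_eq_right.2 hsub]
    simp only [Finset.mem_singleton, zero_ne_one, not_false_eq_true, Finset.card_insert_of_notMem,
      Finset.card_singleton, nsmul_eq_mul]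
    apply le_of_eq
    push_cast
    ring
  have hsum2 : μ ^ 2 / 4 ≤ ∑ n ∈ Finset.Icc (2 - (a : ℤ)) (b - 1), w n ^ 2 := by
    have half : ∀ z t : ℝ, |t| = μ → |z - t| ≤ s → μ ^ 2 / 4 ≤ z ^ 2 := by
      intro z t h1 h2
      have := abs_sub_abs_le_abs_sub t z
      rw [abs_sub_comm] at this
      have h3 : μ / 2 ≤ |z| := by linarith
      rw [← sq_abs z]
      have := pow_le_pow_left₀ (by positivity) h3 2
      linarith
    refine le_trans ?_ (Finset.sum_le_sum_of_subset_of_nonneg hsub fun _ _ _ => sq_nonneg _)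
    rw [Finset.sum_pair zero_ne_one, hw0, hw1]
    rcases max_choice |ψ 0| |ψ 1| with h | h
    · have := half x' (ψ 0) h.symm hx'
      linarith [sq_nonneg x]
    · have := half x (ψ 1) h.symm hx
      linarith [sq_nonneg x']
  obtain ⟨j, hj⟩ := ((hb a b).congr (V' := V') fun n hn => hV n (by
      simp only [window, Finset.mem_Icc] at hn ⊢; omega)).exists_eigenvalue_near (f := w) (e := E)
    (ξ := 6 * κ / Γ) (fun n hn => if_neg hn) (by positivity)
    (lt_of_lt_of_le (by positivity) hsum2) (hsum1.trans (by
      have : (6 * κ / Γ) ^ 2 * (μ ^ 2 / 4) = 9 * s ^ 2 := by rw [hs]; ring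
      have h2 : (6 * κ / Γ) ^ 2 * (μ ^ 2 / 4) ≤ (6 * κ / Γ) ^ 2 *
        ∑ n ∈ Finset.Icc (2 - (a : ℤ)) (b - 1), w n ^ 2 := by gcongr
      linarith [sq_nonneg s]))
  refine ⟨Eb a b j, ?_, hj⟩
  simp only [Finset.mem_biUnion, Finset.mem_image, Finset.mem_univ, true_and]
  exact ⟨a, Finset.mem_Icc.2 ⟨ha2, ham⟩, b, Finset.mem_Icc.2 ⟨hb2, hbm⟩, j, rfl⟩

end HalfLine

section Duhamel

theorem halfLineSol_wronskian (c : ℕ → ℝ) (n : ℕ) :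
    halfLineSol c 0 1 (n + 1) * halfLineSol c 1 0 n
      - halfLineSol c 0 1 n * halfLineSol c 1 0 (n + 1) = 1 := by
  induction n with
  | zero => simp [halfLineSol]
  | succ n ih =>
    simp only [halfLineSol]
    linear_combination ih

theorem abs_halfLineSol_le_of_close {c c' : ℕ → ℝ} {m : ℕ} {h Γ : ℝ}
    (hc : ∀ n < m, |c' n - c n| ≤ h) (hh : 0 ≤ h) (hhΓ : 4 * h * Γ ^ 2 * (m + 1) ≤ 1)
    (hp : ∀ n ≤ m + 1, |halfLineSol c 0 1 n| ≤ Γ) (hq : ∀ n ≤ m + 1, |halfLineSol c 1 0 n| ≤ Γ)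
    {y x : ℝ} (hxy : |x| + |y| ≤ 1) (n : ℕ) (hn : n ≤ m + 1) :
    |halfLineSol c' y x n| ≤ 2 * Γ := by
  have hΓ : 0 ≤ Γ := (abs_nonneg _).trans (hp 0 (by omega))
  set p := halfLineSol c 0 1 with hpdef
  set q := halfLineSol c 1 0 with hqdef
  set u := halfLineSol c' y x with hudef
  have hW : ∀ n, p (n + 1) * q n - p n * q (n + 1) = 1 := halfLineSol_wronskian c
  have hpr : ∀ n, p (n + 2) = c n * p (n + 1) - p n := fun n => rfl
  have hqr : ∀ n, q (n + 2) = c n * q (n + 1) - q n := fun n => rfl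
  have hur : ∀ n, u (n + 2) = c' n * u (n + 1) - u n := fun n => rfl
  let α : ℕ → ℝ := fun n => u (n + 1) * q n - u n * q (n + 1)
  let β : ℕ → ℝ := fun n => p (n + 1) * u n - p n * u (n + 1)
  have hu0 : ∀ n, u n = α n * p n + β n * q n := fun n => by
    simp only [α, β]; linear_combination (-u n) * hW n
  have hu1 : ∀ n, u (n + 1) = α n * p (n + 1) + β n * q (n + 1) := fun n => by
    simp only [α, β]; linear_combination (-u (n + 1)) * hW n
  have hα : ∀ n, α (n + 1) = α n + (c' n - c n) * u (n + 1) * q (n + 1) := fun n => by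
    simp only [α, hur, hqr]; ring
  have hβ : ∀ n, β (n + 1) = β n + -((c' n - c n) * u (n + 1) * p (n + 1)) := fun n => by
    simp only [β, hur, hpr]; ring
  have comb : ∀ a b P Q S : ℝ, |a| + |b| ≤ S → |P| ≤ Γ → |Q| ≤ Γ → |a * P + b * Q| ≤ S * Γ := by
    intro a b P Q S hS hP hQ
    calc _ ≤ |a| * |P| + |b| * |Q| := by rw [← abs_mul, ← abs_mul]; exact abs_add_le _ _
      _ ≤ |a| * Γ + |b| * Γ := by gcongr
      _ = (|a| + |b|) * Γ := by ring
      _ ≤ _ := by gcongr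
  have hs : ∀ n ≤ m, |α n| + |β n| ≤ 1 + 4 * h * Γ ^ 2 * n := by
    intro n
    induction n with
    | zero =>
      intro _
      have e1 : α 0 = x := by simp [α, q, u, halfLineSol]
      have e2 : β 0 = y := by simp [β, p, u, halfLineSol]
      rw [e1, e2]
      simpa using hxy
    | succ n ih =>
      intro hn
      have ih := ih (by omega)
      have hn' : (n : ℝ) ≤ m + 1 := by
        have : (n : ℝ) ≤ m := by exact_mod_cast (by omega : n ≤ m)
        linarith
      have h2 : |α n| + |β n| ≤ 2 := by
        have : 4 * h * Γ ^ 2 * n ≤ 4 * h * Γ ^ 2 * (m + 1) := by gcongr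
        linarith
      have hu : |u (n + 1)| ≤ 2 * Γ := by
        rw [hu1]
        exact comb _ _ _ _ _ h2 (hp _ (by omega)) (hq _ (by omega))
      have inc : ∀ z, |z| ≤ Γ → |(c' n - c n) * u (n + 1) * z| ≤ h * (2 * Γ) * Γ := by
        intro z hz
        rw [abs_mul, abs_mul]
        have := hc n (by omega)
        gcongr
      rw [hα, hβ]
      have i1 := (abs_add_le (α n) ((c' n - c n) * u (n + 1) * q (n + 1)))
      have i2 := (abs_add_le (β n) (-((c' n - c n) * u (n + 1) * p (n + 1))))
      rw [abs_neg] at i2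
      have i3 := inc _ (hq (n + 1) (by omega))
      have i4 := inc _ (hp (n + 1) (by omega))
      push_cast
      nlinarith
  have hs2 : ∀ n ≤ m, |α n| + |β n| ≤ 2 := by
    intro n hn
    have hn' : (n : ℝ) ≤ m + 1 := by
      have : (n : ℝ) ≤ m := by exact_mod_cast hn
      linarith
    have : 4 * h * Γ ^ 2 * n ≤ 4 * h * Γ ^ 2 * (m + 1) := by gcongr
    have := hs n hn
    linarith
  rcases hn.eq_or_lt with rfl | hn
  · rw [hu1]
    exact comb _ _ _ _ _ (hs2 m le_rfl) (hp _ le_rfl) (hq _ le_rfl)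
  · rw [hu0]
    exact comb _ _ _ _ _ (hs2 n (by omega)) (hp _ (by omega)) (hq _ (by omega))

theorem IsSlow.of_close {V : ℤ → ℝ} {m : ℕ} {Γ E E' h : ℝ} (hS : IsSlow V m Γ E)
    (hE : |E' - E| ≤ h) (hhΓ : 4 * h * Γ ^ 2 * (m + 1) ≤ 1) : IsSlow V m (2 * Γ) E' := by
  have hc : ∀ n < m, |(fun i : ℕ => E' - V (i + 1)) n - (fun i : ℕ => E - V (i + 1)) n| ≤ h := by
    intro n _
    simpa using hE
  have hh : 0 ≤ h := (abs_nonneg _).trans hE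
  intro n hn
  exact ⟨abs_halfLineSol_le_of_close hc hh hhΓ (fun n hn => (hS n hn).1) (fun n hn => (hS n hn).2)
    (by simp) n hn, abs_halfLineSol_le_of_close hc hh hhΓ (fun n hn => (hS n hn).1)
    (fun n hn => (hS n hn).2) (by simp) n hn⟩

end Duhamel

section SpectralAveraging

theorem sum_lorentz_le {α β h : ℝ} (hh : 0 < h) (hβ : h ≤ β) (J : ℕ) :
    ∑ j ∈ Finset.range J, h * (β / ((α + j * h) ^ 2 + β ^ 2)) ≤ 10 := by
  have hβ0 : 0 < β := hh.trans_le hβ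
  have step : ∀ j : ℕ, h * (β / ((α + j * h) ^ 2 + β ^ 2))
      ≤ 3 * (Real.arctan ((α + (j + 1 : ℕ) * h) / β) - Real.arctan ((α + j * h) / β)) := by
    intro j
    have hlt : (α + j * h) / β < (α + (j + 1 : ℕ) * h) / β := by
      apply div_lt_div_of_pos_right _ hβ0
      push_cast
      linarith
    obtain ⟨ξ, hξ, hd⟩ := exists_deriv_eq_slope Real.arctan hlt
      Real.continuous_arctan.continuousOn Real.differentiable_arctan.differentiableOn
    have hdiff : (α + (j + 1 : ℕ) * h) / β - (α + j * h) / β = h / β := by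
      push_cast
      field_simp
      ring
    rw [Real.deriv_arctan, hdiff, eq_div_iff (by positivity)] at hd
    rw [← hd]
    have h1 : α + j * h < ξ * β := (div_lt_iff₀ hβ0).1 hξ.1
    have h2 : ξ * β < α + j * h + h := by
      have := (lt_div_iff₀ hβ0).1 hξ.2
      push_cast at this
      linarith
    have key : (ξ * β) ^ 2 + β ^ 2 ≤ 3 * ((α + j * h) ^ 2 + β ^ 2) := by
      set s := α + j * h
      have e1 : (ξ * β - s) ^ 2 ≤ β ^ 2 := sq_le_sq' (by linarith) (by linarith)
      nlinarith [sq_nonneg (ξ * β - 2 * s)]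
    have e2 : 3 * (1 / (1 + ξ ^ 2) * (h / β)) = h * (β * (3 / ((ξ * β) ^ 2 + β ^ 2))) := by
      have : (ξ * β) ^ 2 + β ^ 2 = β ^ 2 * (1 + ξ ^ 2) := by ring
      rw [this]
      field_simp
    rw [e2, div_eq_mul_one_div]
    gcongr h * (β * ?_)
    rw [div_le_div_iff₀ (by positivity) (by positivity)]
    linarith
  calc _ ≤ ∑ j ∈ Finset.range J, 3 * (Real.arctan ((α + (j + 1 : ℕ) * h) / β)
        - Real.arctan ((α + j * h) / β)) := Finset.sum_le_sum fun j _ => step j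
    _ = 3 * (Real.arctan ((α + J * h) / β) - Real.arctan (α / β)) := by
        rw [← Finset.mul_sum, Finset.sum_range_sub (fun j : ℕ => Real.arctan ((α + j * h) / β))]
        simp
    _ ≤ 10 := by
        have h1 := Real.arctan_lt_pi_div_two ((α + J * h) / β)
        have h2 := Real.neg_pi_div_two_lt_arctan (α / β)
        have h3 := Real.pi_lt_d2
        linarith

variable {H : Type*} [NormedAddCommGroup H] [InnerProductSpace ℂ H]

open scoped InnerProductSpace

theorem im_inner_resolvent {A : H →ₗ[ℂ] H} (hA : A.IsSymmetric) {u x : H} {z : ℂ} {t : ℝ}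
    (hx : A x + ((t : ℂ) * ⟪u, x⟫_ℂ) • u - z • x = u) : z.im * ‖x‖ ^ 2 = (⟪u, x⟫_ℂ).im := by
  have h1 : A x = u + z • x - ((t : ℂ) * ⟪u, x⟫_ℂ) • u :=
    eq_sub_of_add_eq (eq_add_of_sub_eq hx)
  have h2 : ⟪x, A x⟫_ℂ = ⟪x, u⟫_ℂ + z * ⟪x, x⟫_ℂ - t * ⟪u, x⟫_ℂ * ⟪x, u⟫_ℂ := by
    rw [h1, inner_sub_right, inner_add_right, inner_smul_right, inner_smul_right]
  have h3 : (⟪x, A x⟫_ℂ).im = 0 := by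
    simpa using hA.im_inner_self_apply x
  have h4 : ⟪x, u⟫_ℂ = (starRingEnd ℂ) ⟪u, x⟫_ℂ := (inner_conj_symm _ _).symm
  have h5 : ⟪x, x⟫_ℂ = ((‖x‖ ^ 2 : ℝ) : ℂ) := by
    rw [inner_self_eq_norm_sq_to_K]; simp
  rw [h2, h4, h5, mul_assoc, Complex.mul_conj] at h3
  simp only [Complex.sub_im, Complex.add_im, Complex.conj_im, Complex.im_mul_ofReal,
    ← Complex.ofReal_mul, Complex.ofReal_im] at h3
  linarith

theorem eq_zero_of_symmetric_apply_eq {A : H →ₗ[ℂ] H} (hA : A.IsSymmetric) {v : H} {z : ℂ}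
    (hz : z.im ≠ 0) (hv : A v = z • v) : v = 0 := by
  have h := im_inner_resolvent hA (u := 0) (x := v) (z := z) (t := 0) (by simp [hv])
  simpa [hz] using h

theorem sum_resolvent_le {A : H →ₗ[ℂ] H} (hA : A.IsSymmetric) {u : H} (hu : ‖u‖ = 1) {z : ℂ}
    {h : ℝ} (hh : 0 < h) (hz : h ≤ z.im) {x : ℕ → H} {J : ℕ}
    (hx : ∀ j < J, A (x j) + (((j * h : ℝ) : ℂ) * ⟪u, x j⟫_ℂ) • u - z • x j = u) :
    ∑ j ∈ Finset.range J, h * (z.im * ‖x j‖ ^ 2) ≤ 10 := by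
  rcases Nat.eq_zero_or_pos J with rfl | hJ
  · simp
  have hw : 0 < z.im := hh.trans_le hz
  have hx0 : A (x 0) - z • x 0 = u := by simpa using hx 0 hJ
  have hrel : ∀ j < J, x j = (1 - ((j * h : ℝ) : ℂ) * ⟪u, x j⟫_ℂ) • x 0 := by
    intro j hj
    rw [← sub_eq_zero]
    refine eq_zero_of_symmetric_apply_eq hA hw.ne' (z := z) ?_
    have e1 := hx j hj
    set c := ((j * h : ℝ) : ℂ) * ⟪u, x j⟫_ℂ
    have e2 : A (x j) = u - c • u + z • x j := by
      rw [eq_sub_of_add_eq (eq_add_of_sub_eq e1)]; abel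
    have e3 : A (x 0) = u + z • x 0 := eq_add_of_sub_eq hx0
    rw [map_sub, map_smul, e2, e3]
    module
  have hx0ne : x 0 ≠ 0 := by
    intro h0
    rw [h0] at hx0
    simp only [map_zero, smul_zero, sub_zero] at hx0
    rw [← hx0] at hu
    simp at hu
  have him : ∀ j < J, z.im * ‖x j‖ ^ 2 = (⟪u, x j⟫_ℂ).im := fun j hj => im_inner_resolvent hA (hx j hj)
  set g := ⟪u, x 0⟫_ℂ with hg
  have hgim : z.im * ‖x 0‖ ^ 2 = g.im := him 0 hJ
  have hgpos : 0 < g.im := by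
    rw [← hgim]
    have := norm_pos_iff.2 hx0ne
    positivity
  have hN : Complex.normSq g ≤ ‖x 0‖ ^ 2 := by
    rw [Complex.normSq_eq_norm_sq]
    have := norm_inner_le_norm (𝕜 := ℂ) u (x 0)
    rw [hu, one_mul] at this
    exact pow_le_pow_left₀ (norm_nonneg _) this 2
  have hg0 : g ≠ 0 := fun h0 => by simp [h0] at hgpos
  have hN0 : 0 < Complex.normSq g := Complex.normSq_pos.2 hg0
  set α := g.re / Complex.normSq g with hα
  set β := g.im / Complex.normSq g with hβ
  have hβh : h ≤ β := by
    refine hz.trans ?_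
    rw [hβ, le_div_iff₀ hN0, ← hgim]
    gcongr
  refine le_trans (Finset.sum_le_sum fun j hj => ?_) (sum_lorentz_le (α := α) hh hβh J)
  rw [Finset.mem_range] at hj
  rw [him j hj]
  apply le_of_eq
  congr 1
  set t : ℝ := j * h with ht
  have e1 : ⟪u, x j⟫_ℂ = (1 - (t : ℂ) * ⟪u, x j⟫_ℂ) * g := by
    conv_lhs => rw [hrel j hj, inner_smul_right]
  set k := ⟪u, x j⟫_ℂ
  have e2 : k * (1 + t * g) = g := by linear_combination e1
  have e3 : k * (g⁻¹ + t) = 1 := by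
    have : k * (g⁻¹ + t) * g = g := by
      rw [mul_assoc, add_mul, inv_mul_cancel₀ hg0]; exact e2
    exact mul_right_cancel₀ hg0 (by rw [this, one_mul])
  have e4 : k = (g⁻¹ + t)⁻¹ := eq_inv_of_mul_eq_one_left e3
  rw [e4, Complex.inv_im]
  have e5 : (g⁻¹ + (t : ℂ)).im = -β := by
    simp [Complex.inv_im, hβ, neg_div]
  have e6 : (g⁻¹ + (t : ℂ)).re = α + t := by
    simp [Complex.inv_re, hα]
  rw [Complex.normSq_apply, e5, e6]
  ring_nf

end SpectralAveraging

section Green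

theorem single_one_apply (n m : ℤ) :
    (lp.single 2 n (1 : ℂ) : lp (fun _ : ℤ => ℂ) 2) m = kron n m := by
  rw [lp.single_apply, Pi.single_apply, kron]
  by_cases h : n = m
  · simp [h]
  · simp [h, Ne.symm h]

/-- `x = (H - e - iw)⁻¹ δₙ`. -/
def IsGreenVector (V : ℤ → ℝ) (e w : ℝ) (n : ℤ) (x : lp (fun _ : ℤ => ℂ) 2) : Prop :=
  ∀ m, x (m + 1) + x (m - 1) + V m * x m - (⟨e, w⟩ : ℂ) * x m = kron n m

theorem exists_isGreenVector {V : ℤ → ℝ} {B : ℝ} (hV : ∀ n, |V n| ≤ B) (e : ℝ) {w : ℝ}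
    (hw : 0 < w) (n : ℤ) : ∃ x, IsGreenVector V e w n x := by
  have hsa : IsSelfAdjoint (schrodingerCLM ℂ hV) :=
    ContinuousLinearMap.isSelfAdjoint_iff_isSymmetric.2 (schrodinger_isSymmetric hV)
  have hz : (⟨e, w⟩ : ℂ) ∉ spectrum ℂ (schrodingerCLM ℂ hV) := by
    intro h
    have := hsa.mem_spectrum_eq_re h
    simp [Complex.ext_iff] at this
    exact hw.ne' this
  rw [spectrum.notMem_iff] at hz
  obtain ⟨R, hR⟩ := hz.exists_right_inv
  refine ⟨-R (lp.single 2 n 1), fun m => ?_⟩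
  have h := congrArg (fun T : lp (fun _ : ℤ => ℂ) 2 →L[ℂ] lp (fun _ : ℤ => ℂ) 2 =>
    T (lp.single 2 n 1) m) hR
  simp only [mul_apply_eq_comp, sub_apply,
    one_apply_eq_self, lp.coeFn_sub, Pi.sub_apply,
    ContinuousLinearMap.algebraMap_apply, lp.coeFn_smul, Pi.smul_apply, smul_eq_mul] at h
  have h2 : schrodingerCLM ℂ hV (R (lp.single 2 n 1)) m = (R (lp.single 2 n 1)) (m + 1)
    + (R (lp.single 2 n 1)) (m - 1) + V m * (R (lp.single 2 n 1)) m := rfl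
  rw [h2] at h
  rw [single_one_apply] at h
  simp only [lp.coeFn_neg, Pi.neg_apply]
  linear_combination h

open Classical in
/-- The squared norm of `(H - e - iw)⁻¹ δₙ`. -/
def greenNormSq (V : ℤ → ℝ) (e w : ℝ) (n : ℤ) : ℝ :=
  if h : ∃ x, IsGreenVector V e w n x then ‖h.choose‖ ^ 2 else 0

theorem greenNormSq_nonneg (V : ℤ → ℝ) (e w : ℝ) (n : ℤ) : 0 ≤ greenNormSq V e w n := by
  unfold greenNormSq
  split_ifs <;> positivity

theorem exists_norm_sq_eq_greenNormSq {V : ℤ → ℝ} {B : ℝ} (hV : ∀ n, |V n| ≤ B) (e : ℝ) {w : ℝ}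
    (hw : 0 < w) (n : ℤ) : ∃ x, IsGreenVector V e w n x ∧ ‖x‖ ^ 2 = greenNormSq V e w n := by
  have h := exists_isGreenVector hV e hw n
  refine ⟨h.choose, h.choose_spec, ?_⟩
  rw [greenNormSq, dif_pos h]

theorem sum_greenNormSq_le {V : ℤ → ℝ} {B : ℝ} (hV : ∀ n, |V n| ≤ B) (e : ℝ) {w h : ℝ}
    (hh : 0 < h) (hw : h ≤ w) (n : ℤ) (J : ℕ) :
    ∑ j ∈ Finset.range J, h * (w * greenNormSq (Function.update V n (V n + j * h)) e w n) ≤ 10 := by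
  have hVj : ∀ j m, |Function.update V n (V n + (j : ℕ) * h) m| ≤ B + j * h := by
    intro j m
    have hj : 0 ≤ j * h := by positivity
    rcases eq_or_ne m n with rfl | hm
    · rw [Function.update_self]
      exact (abs_add_le _ _).trans (add_le_add (hV _) (abs_of_nonneg hj).le)
    · rw [Function.update_of_ne hm]
      linarith [hV m]
  choose x hx hxn using fun j : ℕ => exists_norm_sq_eq_greenNormSq (hVj j) e (hh.trans_le hw) n
  simp only [← hxn]
  have hu : ‖(lp.single 2 n (1 : ℂ) : lp (fun _ : ℤ => ℂ) 2)‖ = 1 := by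
    rw [lp.norm_single (by norm_num)]; simp
  refine sum_resolvent_le (schrodinger_isSymmetric (𝕜 := ℂ) hV) hu (z := ⟨e, w⟩) hh hw
    fun j _ => ?_
  ext m
  have h1 := hx j m
  have h4 : inner ℂ (lp.single 2 n (1 : ℂ) : lp (fun _ : ℤ => ℂ) 2) (x j) = x j n := by
    rw [lp.inner_single_left]
    simp
  simp only [lp.coeFn_sub, lp.coeFn_add, lp.coeFn_smul, Pi.sub_apply, Pi.add_apply, Pi.smul_apply,
    smul_eq_mul, schrodinger_apply, single_one_apply, h4]
  rcases eq_or_ne m n with rfl | hm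
  · rw [Function.update_self] at h1
    have hk : kron m m = 1 := if_pos rfl
    rw [hk] at h1 ⊢
    push_cast at h1 ⊢
    linear_combination h1
  · have hk : kron n m = 0 := if_neg hm.symm
    rw [Function.update_of_ne hm, hk] at h1
    rw [hk]
    simp only [Complex.ofReal_zero, mul_zero, add_zero]
    exact h1

/-- A finitely supported approximate solution of `(H - e) a + w b = δₙ`. -/
def HasCertificate (V : ℤ → ℝ) (e w : ℝ) (n : ℤ) (η : ℝ) (D : ℕ) : Prop :=
  n ∈ Finset.Icc (-(D : ℤ)) D ∧ ∃ a b : ℤ → ℝ, (∀ m ∉ Finset.Icc (-(D : ℤ)) D, a m = 0) ∧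
    (∀ m ∉ Finset.Icc (-(D : ℤ)) D, b m = 0) ∧
    w ^ 2 * ∑ m ∈ Finset.Icc (-(D : ℤ)) D, (a m ^ 2 + b m ^ 2)
    + ∑ m ∈ Finset.Icc (-(D : ℤ) - 1) (D + 1),
      (a (m + 1) + a (m - 1) + V m * a m - e * a m + w * b m - kron n m) ^ 2 ≤ η

theorem eventually_hasCertificate {V : ℤ → ℝ} {B : ℝ} (hV : ∀ n, |V n| ≤ B) (e : ℝ) {w η : ℝ}
    (hw : 0 < w) (n : ℤ) (hη : w ^ 2 * greenNormSq V e w n < η) :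
    ∀ᶠ D in atTop, HasCertificate V e w n η D := by
  obtain ⟨x, hx, hxn⟩ := exists_norm_sq_eq_greenNormSq hV e hw n
  rw [← hxn] at hη
  have hsum := summable_sq_lp x
  have hlim : Tendsto (fun k : ℤ => ‖x k‖ ^ 2) cofinite (𝓝 0) := hsum.tendsto_cofinite_zero
  have hshift : ∀ f : ℕ → ℤ, Function.Injective f →
      Tendsto (fun D => ‖x (f D)‖ ^ 2) atTop (𝓝 0) := by
    intro f hf
    rw [← Nat.cofinite_eq_atTop]
    exact hlim.comp hf.tendsto_cofinite
  have l1 := hshift (fun D => D) Nat.cast_injective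
  have l2 := hshift (fun D => D + 1) fun a b h => by simpa using h
  have l3 := hshift (fun D => -D) fun a b h => by simpa using h
  have l4 := hshift (fun D => -D - 1) fun a b h => by simpa using h
  have l := ((l1.add l2).add (l3.add l4))
  simp only [add_zero] at l
  have hpos : 0 < η - w ^ 2 * ‖x‖ ^ 2 := by linarith
  filter_upwards [l.eventually (gt_mem_nhds hpos), eventually_ge_atTop (n.natAbs + 1)] with D hD hDn
  let a : ℤ → ℝ := fun m => if m ∈ Finset.Icc (-(D : ℤ)) D then (x m).re else 0
  let b : ℤ → ℝ := fun m => if m ∈ Finset.Icc (-(D : ℤ)) D then (x m).im else 0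
  refine ⟨by rw [Finset.mem_Icc]; omega, a, b, fun m hm => if_neg hm, fun m hm => if_neg hm, ?_⟩
  have h1 : ∑ m ∈ Finset.Icc (-(D : ℤ)) D, (a m ^ 2 + b m ^ 2) ≤ ‖x‖ ^ 2 := by
    rw [lp_norm_sq]
    refine le_trans (le_of_eq ?_) (hsum.sum_le_tsum (Finset.Icc (-(D : ℤ)) D)
      fun _ _ => by positivity)
    refine Finset.sum_congr rfl fun m hm => ?_
    simp only [a, b, if_pos hm]
    rw [← Complex.normSq_eq_norm_sq, Complex.normSq_apply]
    ring
  have hre : ∀ m, (x (m + 1)).re + (x (m - 1)).re + V m * (x m).re - e * (x m).re + w * (x m).im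
      - kron n m = 0 := by
    intro m
    have := congrArg Complex.re (hx m)
    simp at this
    linarith
  have habs : ∀ m, (x m).re ^ 2 ≤ ‖x m‖ ^ 2 := by
    intro m
    rw [← sq_abs]
    exact pow_le_pow_left₀ (abs_nonneg _) (Complex.abs_re_le_norm _) 2
  have hker : ∀ m : ℤ, m < -D ∨ (D : ℤ) < m → kron n m = 0 := fun m hm => by
    simp only [kron]
    rw [if_neg]
    omega
  set r : ℤ → ℝ := fun m => a (m + 1) + a (m - 1) + V m * a m - e * a m + w * b m - kron n m
    with hr
  have hr0 : ∀ m ∈ Finset.Icc (-(D : ℤ) - 1) (D + 1),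
      m ∉ ({(D : ℤ), (D : ℤ) + 1, -(D : ℤ), -(D : ℤ) - 1} : Finset ℤ) → r m ^ 2 = 0 := by
    intro m hm hm'
    simp only [Finset.mem_Icc, Finset.mem_insert, Finset.mem_singleton, not_or] at hm hm'
    simp only [hr, a, b, Finset.mem_Icc]
    rw [if_pos (by omega), if_pos (by omega), if_pos (by omega), if_pos (by omega), hre m]
    simp
  have hsub : ({(D : ℤ), (D : ℤ) + 1, -(D : ℤ), -(D : ℤ) - 1} : Finset ℤ)
      ⊆ Finset.Icc (-(D : ℤ) - 1) (D + 1) := by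
    intro m hm
    simp only [Finset.mem_Icc, Finset.mem_insert, Finset.mem_singleton] at hm ⊢
    omega
  have h2 : ∑ m ∈ Finset.Icc (-(D : ℤ) - 1) (D + 1), r m ^ 2
      ≤ ‖x D‖ ^ 2 + ‖x (D + 1)‖ ^ 2 + (‖x (-D)‖ ^ 2 + ‖x (-D - 1)‖ ^ 2) := by
    rw [← Finset.sum_subset hsub hr0]
    have hD1 : 1 ≤ D := by omega
    rw [Finset.sum_insert (by simp only [Finset.mem_insert, Finset.mem_singleton]; omega),
      Finset.sum_insert (by simp only [Finset.mem_insert, Finset.mem_singleton]; omega),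
      Finset.sum_pair (by omega)]
    have k1 : r D = -(x (D + 1)).re := by
      simp only [hr, a, b, Finset.mem_Icc]
      rw [if_neg (by omega), if_pos (by omega), if_pos (by omega), if_pos (by omega)]
      linarith [hre D]
    have k2 : r (D + 1) = (x D).re := by
      simp only [hr, a, b, Finset.mem_Icc]
      rw [if_neg (by omega), if_pos (by omega), if_neg (by omega), if_neg (by omega),
        hker _ (by omega), add_sub_cancel_right]
      ring
    have k3 : r (-D) = -(x (-D - 1)).re := by
      simp only [hr, a, b, Finset.mem_Icc]
      rw [if_pos (by omega), if_neg (by omega), if_pos (by omega), if_pos (by omega)]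
      linarith [hre (-D)]
    have k4 : r (-D - 1) = (x (-D)).re := by
      simp only [hr, a, b, Finset.mem_Icc]
      rw [if_pos (by omega), if_neg (by omega), if_neg (by omega), if_neg (by omega),
        hker _ (by omega), sub_add_cancel]
      ring
    rw [k1, k2, k3, k4, neg_sq, neg_sq]
    have := habs D
    have := habs (D + 1)
    have := habs (-D)
    have := habs (-D - 1)
    linarith
  have h3 : w ^ 2 * ∑ m ∈ Finset.Icc (-(D : ℤ)) D, (a m ^ 2 + b m ^ 2) ≤ w ^ 2 * ‖x‖ ^ 2 := by
    gcongr
  linarith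

end Green

section Capture

namespace IsBoxBasis

variable {V : ℤ → ℝ} {ι : Type} [Fintype ι] {E : ι → ℝ} {ψ : ι → ℤ → ℝ}

theorem sum_sq_le_of_certificate {V' : ℤ → ℝ} {L D : ℕ} (hb : IsBoxBasis V' (-(L : ℤ)) L E ψ)
    (hD : D + 1 ≤ L) {e w η : ℝ} {n : ℤ} (hc : HasCertificate V e w n η D)
    (hV : ∀ m ∈ Finset.Icc (-(D : ℤ)) D, |V' m - V m| ≤ w) {J : Finset ι}
    (hJ : ∀ j ∈ J, |E j - e| ≤ w) : ∑ j ∈ J, ψ j n ^ 2 ≤ 8 * η := by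
  obtain ⟨hn, a, b, ha, hb', hη⟩ := hc
  set I := Finset.Icc (-(L : ℤ)) L with hI
  have hDI : Finset.Icc (-(D : ℤ)) D ⊆ I := Finset.Icc_subset_Icc (by omega) (by omega)
  have hDI' : Finset.Icc (-(D : ℤ) - 1) (D + 1) ⊆ I := Finset.Icc_subset_Icc (by omega) (by omega)
  have haI : ∀ m ∉ I, a m = 0 := fun m hm => ha m fun h => hm (hDI h)
  let r : ℤ → ℝ := fun m =>
    a (m + 1) + a (m - 1) + V m * a m - e * a m + w * b m - kron n m
  have hr : ∑ m ∈ I, r m ^ 2 = ∑ m ∈ Finset.Icc (-(D : ℤ) - 1) (D + 1), r m ^ 2 := by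
    refine (Finset.sum_subset hDI' fun m _ hm => ?_).symm
    simp only [Finset.mem_Icc] at hm hn
    simp only [r, kron]
    rw [ha _ (by rw [Finset.mem_Icc]; omega), ha _ (by rw [Finset.mem_Icc]; omega),
      ha _ (by rw [Finset.mem_Icc]; omega), hb' _ (by rw [Finset.mem_Icc]; omega),
      if_neg (by omega)]
    simp
  have haD : ∑ m ∈ I, a m ^ 2 = ∑ m ∈ Finset.Icc (-(D : ℤ)) D, a m ^ 2 :=
    (Finset.sum_subset hDI fun m _ hm => by rw [ha m hm]; simp).symm
  have hbD : ∑ m ∈ I, b m ^ 2 = ∑ m ∈ Finset.Icc (-(D : ℤ)) D, b m ^ 2 :=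
    (Finset.sum_subset hDI fun m _ hm => by rw [hb' m hm]; simp).symm
  have hU : ∑ m ∈ I, ((V m - V' m) * a m) ^ 2 ≤ w ^ 2 * ∑ m ∈ I, a m ^ 2 := by
    rw [Finset.mul_sum]
    refine Finset.sum_le_sum fun m _ => ?_
    by_cases hm : m ∈ Finset.Icc (-(D : ℤ)) D
    · rw [mul_pow]
      have := sq_le_sq' (by linarith [(abs_le.1 (hV m hm)).2] : -w ≤ V m - V' m)
        (by linarith [(abs_le.1 (hV m hm)).1])
      gcongr
    · rw [ha m hm]
      simp
  let c : (ℤ → ℝ) → ι → ℝ := fun f j => ∑ m ∈ I, ψ j m * f m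
  have hpars : ∀ f, ∑ j ∈ J, c f j ^ 2 ≤ ∑ m ∈ I, f m ^ 2 := fun f => by
    rw [← hb.parseval f]
    exact Finset.sum_le_sum_of_subset_of_nonneg (Finset.subset_univ _) fun _ _ _ => sq_nonneg _
  have hψ : ∀ j, ψ j n = (E j - e) * c a j + w * c b j - c r j
      + c (fun m => (V m - V' m) * a m) j := by
    intro j
    have h1 := hb.coeff_schrodinger haI j e
    have h2 : ψ j n = ∑ m ∈ I, ψ j m * kron n m := by
      rw [Finset.sum_eq_single n]
      · simp [kron]
      · intro m _ hm
        simp [kron, hm.symm]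
      · exact fun h => absurd (hDI hn) h
    simp only [c]
    rw [← h1, h2, Finset.mul_sum, ← Finset.sum_add_distrib, ← Finset.sum_sub_distrib,
      ← Finset.sum_add_distrib]
    refine Finset.sum_congr rfl fun m _ => ?_
    simp only [r]
    ring
  have hsq : ∀ j ∈ J, ψ j n ^ 2 ≤ 4 * (w ^ 2 * c a j ^ 2 + w ^ 2 * c b j ^ 2 + c r j ^ 2
      + c (fun m => (V m - V' m) * a m) j ^ 2) := by
    intro j hj
    rw [hψ j]
    have h1 : (E j - e) ^ 2 ≤ w ^ 2 :=
      sq_le_sq' (by linarith [(abs_le.1 (hJ j hj)).1]) (abs_le.1 (hJ j hj)).2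
    have h2 : ((E j - e) * c a j) ^ 2 ≤ w ^ 2 * c a j ^ 2 := by
      rw [mul_pow]
      gcongr
    have h3 : ∀ p q s t : ℝ, (p + q - s + t) ^ 2 ≤ 4 * (p ^ 2 + q ^ 2 + s ^ 2 + t ^ 2) := by
      intro p q s t
      nlinarith [sq_nonneg (p - q), sq_nonneg (p + s), sq_nonneg (p - t), sq_nonneg (q + s),
        sq_nonneg (q - t), sq_nonneg (s + t)]
    refine (h3 _ _ _ _).trans ?_
    rw [mul_pow w]
    linarith
  refine (Finset.sum_le_sum hsq).trans ?_
  rw [← Finset.mul_sum, Finset.sum_add_distrib, Finset.sum_add_distrib, Finset.sum_add_distrib,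
    ← Finset.mul_sum, ← Finset.mul_sum]
  have q1 : w ^ 2 * ∑ j ∈ J, c a j ^ 2 ≤ w ^ 2 * ∑ m ∈ I, a m ^ 2 := by
    have := hpars a
    gcongr
  have q2 : w ^ 2 * ∑ j ∈ J, c b j ^ 2 ≤ w ^ 2 * ∑ m ∈ I, b m ^ 2 := by
    have := hpars b
    gcongr
  have q3 := hpars r
  have q4 := (hpars (fun m => (V m - V' m) * a m)).trans hU
  have q5 : w ^ 2 * ∑ m ∈ I, a m ^ 2 + w ^ 2 * ∑ m ∈ I, b m ^ 2 + ∑ m ∈ I, r m ^ 2 ≤ η := by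
    rw [haD, hbD, hr, ← mul_add, ← Finset.sum_add_distrib]
    exact hη
  have q6 : 0 ≤ ∑ m ∈ I, r m ^ 2 := Finset.sum_nonneg fun _ _ => sq_nonneg _
  have q7 : 0 ≤ w ^ 2 * ∑ m ∈ I, b m ^ 2 :=
    mul_nonneg (sq_nonneg _) (Finset.sum_nonneg fun _ _ => sq_nonneg _)
  linarith

theorem ne_zero_or_ne_zero {L : ℕ} (hb : IsBoxBasis V (-(L : ℤ)) L E ψ) (j : ι) :
    ψ j 0 ≠ 0 ∨ ψ j 1 ≠ 0 := by
  by_contra! hcon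
  have hR : ∀ n : ℕ, n ≤ L + 1 → ψ j n = 0 := by
    intro n hn
    have := eq_halfLineSol (c := fun i => E j - V (i + 1)) (u := fun n : ℕ => ψ j n) (m := L)
      (fun n hn => by
        have := hb.eqn j (n + 1) (by rw [Finset.mem_Icc]; omega)
        push_cast
        rw [show (n : ℤ) + 1 + 1 = n + 2 by ring, show (n : ℤ) + 1 - 1 = n by ring] at this
        linarith) n hn
    simp only [Nat.cast_zero, Nat.cast_one, hcon.1, hcon.2] at this
    rw [this, halfLineSol_eq]
    simp
  have hL : ∀ n : ℕ, n ≤ L + 1 → ψ j (1 - n) = 0 := by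
    intro n hn
    have := eq_halfLineSol (c := fun i => E j - V (-i)) (u := fun n : ℕ => ψ j (1 - n)) (m := L)
      (fun n hn => by
        have := hb.eqn j (-n) (by rw [Finset.mem_Icc]; omega)
        push_cast
        rw [show (1 : ℤ) - (n + 2) = -n - 1 by ring, show (1 : ℤ) - (n + 1) = -n by ring]
        rw [show -(n : ℤ) + 1 = 1 - n by ring] at this
        linarith) n hn
    simp only [Nat.cast_zero, Nat.cast_one, sub_zero, sub_self, hcon.1, hcon.2] at this
    rw [this, halfLineSol_eq]
    simp
  have h1 := hb.norm_one j
  rw [Finset.sum_eq_zero] at h1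
  · exact zero_ne_one h1
  intro n hn
  rw [Finset.mem_Icc] at hn
  rcases le_or_gt 0 n with h | h
  · have := hR n.toNat (by omega)
    rw [show ((n.toNat : ℕ) : ℤ) = n by omega] at this
    simp [this]
  · have := hL (1 - n).toNat (by omega)
    rw [show (1 : ℤ) - ((1 - n).toNat : ℕ) = n by omega] at this
    simp [this]

end IsBoxBasis

/-- The energies in `F` approximate those of all centered solutions, for every potential that
agrees with `V` on the window of size `M`. -/
def IsNearSet (V : ℤ → ℝ) (M : ℕ) (C ξ : ℝ) (F : Finset ℝ) : Prop :=
  ∀ V' : ℤ → ℝ, (∀ n ∈ window M, V n = V' n) → ∀ E, |E| ≤ C → ∀ ψ : ℤ → ℝ,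
    (∀ n ∈ window M, ψ (n + 1) + ψ (n - 1) + V' n * ψ n = E * ψ n) →
    IsCentered M ψ → (ψ 0 ≠ 0 ∨ ψ 1 ≠ 0) → ∃ e ∈ F, |E - e| ≤ ξ

theorem exists_isNearSet {V : ℤ → ℝ} {M : ℕ} {Γ C : ℝ} (hΓ : 1 ≤ Γ) (hM : 4 * M ≤ Γ)
    (hG : HasGrowth V M Γ C) :
    ∃ F : Finset ℝ, F.card ≤ 2 * M ^ 3 ∧ IsNearSet V M C (12 * M / Γ) F := by
  obtain ⟨F, hF, h⟩ := exists_near_eigenvalues V M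
  refine ⟨F, hF, fun V' hV E hE ψ hψ hc hne => ?_⟩
  obtain ⟨e, he, hle⟩ := h V' hV Γ C (2 * M) E hΓ (by positivity) (by linarith) hE hG ψ hψ hc hne
  refine ⟨e, he, ?_⟩
  rw [abs_sub_comm]
  convert hle using 2
  ring

theorem isCaptured_of_certificates {V V₁ V₂ : ℤ → ℝ} {M N D : ℕ} {B w : ℝ} {F : Finset ℝ}
    (hB : ∀ n, |V₂ n| ≤ B) (hF : IsNearSet V M (B + 2) w F) (hV : ∀ n ∈ window M, V n = V₂ n)
    (hclose : ∀ n ∈ Finset.Icc (-(D : ℤ)) D, |V₂ n - V₁ n| ≤ w)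
    {η : ℤ → ℝ → ℝ} (hcert : ∀ n ∈ window N \ window M, ∀ e ∈ F, HasCertificate V₁ e w n (η n e) D)
    (hη : 8 * ∑ n ∈ window N \ window M, ∑ e ∈ F, η n e ≤ 1 / M) :
    IsCaptured V₂ M N (D + M + 1) := by
  classical
  intro L hL ι _ E ψ hb
  refine le_trans ?_ hη
  rw [Finset.sum_comm, Finset.mul_sum]
  refine Finset.sum_le_sum fun n hn => ?_
  rw [Finset.mul_sum]
  calc _ ≤ ∑ j with IsCentered M (ψ j), ∑ e ∈ F, (if |E j - e| ≤ w then ψ j n ^ 2 else 0) := by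
        refine Finset.sum_le_sum fun j hj => ?_
        obtain ⟨e, he, hle⟩ := hF V₂ hV (E j) (hb.abs_eigenvalue_le (fun n _ => hB n) j) (ψ j)
          (fun n hn => hb.eqn j n (by simp only [window, Finset.mem_Icc] at hn ⊢; omega))
          (Finset.mem_filter.1 hj).2 (hb.ne_zero_or_ne_zero j)
        have := Finset.single_le_sum (f := fun e => if |E j - e| ≤ w then ψ j n ^ 2 else 0)
          (fun _ _ => by split_ifs <;> positivity) he
        rwa [if_pos hle] at this
    _ ≤ ∑ j, ∑ e ∈ F, (if |E j - e| ≤ w then ψ j n ^ 2 else 0) :=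
        Finset.sum_le_sum_of_subset_of_nonneg (Finset.subset_univ _)
          fun _ _ _ => Finset.sum_nonneg fun _ _ => by split_ifs <;> positivity
    _ ≤ _ := by
        rw [Finset.sum_comm]
        refine Finset.sum_le_sum fun e he => ?_
        rw [← Finset.sum_filter]
        exact hb.sum_sq_le_of_certificate (by omega) (hcert n hn e he) hclose
          fun j hj => (Finset.mem_filter.1 hj).2

theorem IsNearSet.mono {V : ℤ → ℝ} {M : ℕ} {C ξ ξ' : ℝ} {F : Finset ℝ} (h : IsNearSet V M C ξ F)
    (hξ : ξ ≤ ξ') : IsNearSet V M C ξ' F := by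
  intro V' hV E hE ψ hψ hc hne
  obtain ⟨e, he, hle⟩ := h V' hV E hE ψ hψ hc hne
  exact ⟨e, he, hle.trans hξ⟩

end Capture

section Contraction

/-- Square integrable functions on the plane. -/
abbrev PlaneL2 : Type := Lp ℝ 2 (volume : Measure (Fin 2 → ℝ))

theorem measurePreserving_mulVec (g : Matrix.SpecialLinearGroup (Fin 2) ℝ) :
    MeasurePreserving (fun v : Fin 2 → ℝ => Matrix.mulVec g.1 v) volume volume := by
  refine ⟨(Matrix.mulVecLin g.1).continuous_of_finiteDimensional.measurable, ?_⟩
  have h := Real.map_matrix_volume_pi_eq_smul_volume_pi (M := g.1) (by simp [g.2])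
  have h2 : (Matrix.toLin' g.1 : (Fin 2 → ℝ) → Fin 2 → ℝ)
      = fun v : Fin 2 → ℝ => Matrix.mulVec g.1 v := by
    ext v; simp
  rw [h2, g.2] at h
  simpa using h

/-- Composition of a square integrable function with a matrix of determinant one. -/
def pull (g : Matrix.SpecialLinearGroup (Fin 2) ℝ) : PlaneL2 →ₗᵢ[ℝ] PlaneL2 :=
  Lp.compMeasurePreservingₗᵢ ℝ (fun v => Matrix.mulVec g.1 v) (measurePreserving_mulVec g)

theorem coeFn_pull (g : Matrix.SpecialLinearGroup (Fin 2) ℝ) (F : PlaneL2) :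
    pull g F =ᵐ[volume] fun v => F (Matrix.mulVec g.1 v) :=
  Lp.coeFn_compMeasurePreserving F (measurePreserving_mulVec g)

theorem pull_mul (g h : Matrix.SpecialLinearGroup (Fin 2) ℝ) (F : PlaneL2) :
    pull (g * h) F = pull h (pull g F) := by
  refine Lp.ext ?_
  filter_upwards [coeFn_pull (g * h) F, coeFn_pull h (pull g F),
    (measurePreserving_mulVec h).quasiMeasurePreserving.ae (coeFn_pull g F)] with v h1 h2 h3
  rw [h1, h2, h3, Matrix.mulVec_mulVec, Matrix.SpecialLinearGroup.coe_mul]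

theorem pull_one (F : PlaneL2) : pull 1 F = F := by
  refine Lp.ext ?_
  filter_upwards [coeFn_pull 1 F] with v h1
  rw [h1, Matrix.SpecialLinearGroup.coe_one, Matrix.one_mulVec]

/-- The one-step transfer matrix. -/
def transferMatrix (c : ℝ) : Matrix.SpecialLinearGroup (Fin 2) ℝ :=
  ⟨!![c, -1; 1, 0], by simp [Matrix.det_fin_two_of]⟩

/-- The horizontal shear. -/
def shear (s : ℝ) : Matrix.SpecialLinearGroup (Fin 2) ℝ :=
  ⟨!![1, s; 0, 1], by simp [Matrix.det_fin_two_of]⟩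

theorem shear_mul_transferMatrix (s c : ℝ) :
    shear s * transferMatrix c = transferMatrix (c + s) := by
  refine Subtype.ext ?_
  rw [Matrix.SpecialLinearGroup.coe_mul]
  simp [shear, transferMatrix]

theorem shear_mul_shear (s t : ℝ) : shear s * shear t = shear (s + t) := by
  refine Subtype.ext ?_
  rw [Matrix.SpecialLinearGroup.coe_mul]
  simp [shear, add_comm]

theorem shear_zero : shear 0 = 1 := by
  ext i j
  fin_cases i <;> fin_cases j <;> simp [shear]

theorem norm_pull_shear_sub_le (s : ℝ) (F : PlaneL2) (k : ℕ) :
    ‖pull (shear (k * s)) F - F‖ ≤ k * ‖pull (shear s) F - F‖ := by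
  induction k with
  | zero => simp [shear_zero, pull_one]
  | succ k ih =>
    have h : pull (shear ((k + 1 : ℕ) * s)) F - F
        = pull (shear s) (pull (shear (k * s)) F - F) + (pull (shear s) F - F) := by
      rw [map_sub, ← pull_mul, shear_mul_shear]
      push_cast
      rw [add_one_mul]
      abel
    rw [h]
    refine (norm_add_le _ _).trans ?_
    rw [(pull (shear s)).norm_map]
    push_cast
    linarith

theorem norm_pull_shear_neg_sub (s : ℝ) (F : PlaneL2) :
    ‖pull (shear (-s)) F - F‖ = ‖pull (shear s) F - F‖ := by
  rw [← (pull (shear s)).norm_map (pull (shear (-s)) F - F), map_sub, ← pull_mul,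
    shear_mul_shear, neg_add_cancel, shear_zero, pull_one, norm_sub_rev]

/-- The norm of the restriction of a square integrable function to a set. -/
def normOn (P : Set (Fin 2 → ℝ)) (F : PlaneL2) : ℝ :=
  ‖LpToLpRestrictCLM (Fin 2 → ℝ) ℝ ℝ volume 2 P F‖

theorem normOn_nonneg (P : Set (Fin 2 → ℝ)) (F : PlaneL2) : 0 ≤ normOn P F := norm_nonneg _

theorem normOn_le_add (P : Set (Fin 2 → ℝ)) (F G : PlaneL2) :
    normOn P F ≤ normOn P G + ‖G - F‖ := by
  have h : normOn P F - normOn P G ≤ ‖F - G‖ := by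
    refine (norm_sub_norm_le _ _).trans ?_
    rw [← map_sub]
    exact norm_Lp_toLp_restrict_le P (F - G)
  rw [norm_sub_rev] at h
  linarith

theorem norm_sq_eq_integral_sq {μ : Measure (Fin 2 → ℝ)} (F : Lp ℝ 2 μ) :
    ‖F‖ ^ 2 = ∫ v, (F v) ^ 2 ∂μ := by
  rw [← real_inner_self_eq_norm_sq, L2.inner_def]
  exact integral_congr_ae (ae_of_all _ fun v => by simp [sq])

theorem normOn_sq (P : Set (Fin 2 → ℝ)) (F : PlaneL2) :
    normOn P F ^ 2 = ∫ v in P, (F v) ^ 2 := by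
  rw [normOn, norm_sq_eq_integral_sq]
  refine integral_congr_ae ?_
  filter_upwards [LpToLpRestrictCLM_coeFn ℝ P F] with v hv
  rw [hv]

theorem integrable_sq (F : PlaneL2) : Integrable fun v => (F v) ^ 2 :=
  (Lp.memLp F).integrable_sq

theorem normOn_preimage_pull (g : Matrix.SpecialLinearGroup (Fin 2) ℝ)
    {P : Set (Fin 2 → ℝ)} (hP : MeasurableSet P) (F : PlaneL2) :
    normOn ((fun v => Matrix.mulVec g.1 v) ⁻¹' P) (pull g F) = normOn P F := by
  have hg := measurePreserving_mulVec g
  rw [← sq_eq_sq₀ (normOn_nonneg _ _) (normOn_nonneg _ _), normOn_sq, normOn_sq]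
  have h1 : ∫ v in (fun v => Matrix.mulVec g.1 v) ⁻¹' P, (pull g F v) ^ 2
      = ∫ v in (fun v => Matrix.mulVec g.1 v) ⁻¹' P, (F (Matrix.mulVec g.1 v)) ^ 2 := by
    refine integral_congr_ae (ae_restrict_of_ae ?_)
    filter_upwards [coeFn_pull g F] with v hv
    rw [hv]
  rw [h1]
  have h2 : ∀ f : (Fin 2 → ℝ) → ℝ, AEStronglyMeasurable f volume →
      ∫ v in (fun v => Matrix.mulVec g.1 v) ⁻¹' P, f (Matrix.mulVec g.1 v) = ∫ v in P, f v := by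
    intro f hf
    conv_rhs => rw [← hg.map_eq]
    rw [setIntegral_map hP (by rwa [hg.map_eq]) hg.measurable.aemeasurable]
  exact h2 (fun v => (F v) ^ 2) (integrable_sq F).aestronglyMeasurable

/-- A double cone around the vertical axis sheared by `t`. -/
def cone (r t : ℝ) : Set (Fin 2 → ℝ) := {v | |v 0 - t * v 1| ≤ r * |v 1| ∧ v 1 ≠ 0}

theorem measurableSet_cone (r t : ℝ) : MeasurableSet (cone r t) := by
  have h1 : MeasurableSet {v : Fin 2 → ℝ | |v 0 - t * v 1| ≤ r * |v 1|} :=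
    measurableSet_le (by fun_prop) (by fun_prop)
  exact h1.inter ((measurableSet_singleton (0 : ℝ)).compl.preimage (measurable_pi_apply 1))

theorem preimage_shear_cone (r s t : ℝ) :
    (fun v => Matrix.mulVec (shear s).1 v) ⁻¹' cone r t = cone r (t - s) := by
  ext v
  simp only [cone, shear, Set.mem_preimage, Set.mem_ofPred_eq, Matrix.mulVec, dotProduct,
    Fin.sum_univ_two, Matrix.of_apply, Matrix.cons_val_zero, Matrix.cons_val_one,
    Matrix.cons_val_fin_one, one_mul, zero_mul, zero_add]
  rw [show v 0 + s * v 1 - t * v 1 = v 0 - (t - s) * v 1 by ring]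

theorem disjoint_cone {r s t : ℝ} (h : 2 * r < |s - t|) : Disjoint (cone r s) (cone r t) := by
  rw [Set.disjoint_left]
  rintro v ⟨h1, h0⟩ ⟨h2, -⟩
  have h3 : |s - t| * |v 1| ≤ 2 * r * |v 1| := by
    rw [← abs_mul]
    calc |(s - t) * v 1| = |(v 0 - t * v 1) - (v 0 - s * v 1)| := by ring_nf
      _ ≤ _ := abs_sub _ _
      _ ≤ _ := by linarith
  have := abs_pos.2 h0
  nlinarith

theorem sum_normOn_sq_le {P Q R : Set (Fin 2 → ℝ)}
    (hQ : MeasurableSet Q) (hR : MeasurableSet R)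
    (hPQ : Disjoint P Q) (hPR : Disjoint P R) (hQR : Disjoint Q R) (F : PlaneL2) :
    normOn P F ^ 2 + normOn Q F ^ 2 + normOn R F ^ 2 ≤ ‖F‖ ^ 2 := by
  have hF := integrable_sq F
  rw [normOn_sq, normOn_sq, normOn_sq, norm_sq_eq_integral_sq,
    ← setIntegral_union hPQ hQ hF.integrableOn hF.integrableOn,
    ← setIntegral_union (Set.disjoint_union_left.2 ⟨hPR, hQR⟩) hR hF.integrableOn
      hF.integrableOn]
  exact setIntegral_le_integral hF (ae_of_all _ fun v => sq_nonneg _)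

theorem norm_le_of_normOn_cone {r s : ℝ} {k : ℕ} (hk : 2 * r < k * |s|) (hr : 0 ≤ r) {F : PlaneL2}
    (hF : ‖F‖ ^ 2 ≤ 2 * normOn (cone r 0) F ^ 2) :
    ‖F‖ ≤ 5 * k * ‖pull (shear s) F - F‖ := by
  have key : ∀ σ : ℝ, ‖pull (shear σ) F - F‖ ≤ k * ‖pull (shear s) F - F‖ →
      normOn (cone r 0) F - k * ‖pull (shear s) F - F‖ ≤ normOn (cone r σ) F := by
    intro σ hσ
    have h1 := normOn_preimage_pull (shear σ) (measurableSet_cone r σ) F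
    rw [preimage_shear_cone, sub_self] at h1
    have h2 := normOn_le_add (cone r 0) F (pull (shear σ) F)
    linarith
  have k1 := key _ (norm_pull_shear_sub_le s F k)
  have k2 := key (-(k * s)) (by
    rw [norm_pull_shear_neg_sub]; exact norm_pull_shear_sub_le s F k)
  have hks : k * |s| = |k * s| := by rw [abs_mul, Nat.abs_cast]
  rw [hks] at hk
  have h3 := sum_normOn_sq_le (P := cone r 0) (measurableSet_cone r (k * s))
    (measurableSet_cone r (-(k * s))) (disjoint_cone (by simpa using hk))
    (disjoint_cone (by simpa using hk))
    (disjoint_cone (by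
      rw [sub_neg_eq_add, ← two_mul, abs_mul, abs_two]; linarith)) F
  by_contra! hlt
  have ha := normOn_nonneg (cone r 0) F
  have hn := norm_nonneg F
  have hd := norm_nonneg (pull (shear s) F - F)
  set a := normOn (cone r 0) F
  set x := k * ‖pull (shear s) F - F‖ with hx
  have hx0 : 0 ≤ x := by positivity
  have hlt' : 5 * x < ‖F‖ := by rw [hx]; linarith
  have ha1 : 7 / 10 * ‖F‖ ≤ a := by
    refine le_of_sq_le_sq ?_ ha
    nlinarith
  have hb : 0 ≤ a - x := by linarith
  have hb1 : (a - x) ^ 2 ≤ normOn (cone r (k * s)) F ^ 2 := pow_le_pow_left₀ hb k1 2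
  have hb2 : (a - x) ^ 2 ≤ normOn (cone r (-(k * s))) F ^ 2 := pow_le_pow_left₀ hb k2 2
  have hb3 : (‖F‖ / 2) ^ 2 < (a - x) ^ 2 := pow_lt_pow_left₀ (by linarith) (by positivity) two_ne_zero
  nlinarith

/-- The average of `F` and its composition with a shear. -/
def shearAvg (s : ℝ) (F : PlaneL2) : PlaneL2 := (2⁻¹ : ℝ) • (F + pull (shear s) F)

theorem norm_shearAvg_sq (s : ℝ) (F : PlaneL2) :
    ‖shearAvg s F‖ ^ 2 = ‖F‖ ^ 2 - ‖pull (shear s) F - F‖ ^ 2 / 4 := by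
  have h := parallelogram_law_with_norm ℝ (pull (shear s) F) F
  rw [(pull (shear s)).norm_map] at h
  rw [shearAvg, norm_smul, Real.norm_of_nonneg (by norm_num), add_comm F]
  nlinarith

theorem norm_sq_le_normOn_cone {c K : ℝ} (hc : |c| ≤ K) (F : PlaneL2) :
    ‖F‖ ^ 2 ≤ normOn (cone (K + 1) 0) F ^ 2
      + normOn (cone (K + 1) 0) (pull (transferMatrix c) F) ^ 2 := by
  have hK : 0 ≤ K := (abs_nonneg c).trans hc
  set P := cone (K + 1) 0
  set Q : Set (Fin 2 → ℝ) := {v | |v 1| ≤ (K + 1) * |c * v 1 - v 0| ∧ c * v 1 - v 0 ≠ 0}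
  have hQ : MeasurableSet Q := by
    have h1 : MeasurableSet {v : Fin 2 → ℝ | |v 1| ≤ (K + 1) * |c * v 1 - v 0|} :=
      measurableSet_le (by fun_prop) (by fun_prop)
    have h2 : Measurable fun v : Fin 2 → ℝ => c * v 1 - v 0 := by fun_prop
    exact h1.inter ((measurableSet_singleton (0 : ℝ)).compl.preimage h2)
  have hpre : (fun v => Matrix.mulVec (transferMatrix c).1 v) ⁻¹' Q = P := by
    ext v
    simp only [P, Q, cone, transferMatrix, Set.mem_preimage, Set.mem_ofPred_eq, Matrix.mulVec,
      dotProduct, Fin.sum_univ_two, Matrix.of_apply, Matrix.cons_val_zero, Matrix.cons_val_one,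
      Matrix.cons_val_fin_one, one_mul, zero_mul, sub_zero, add_zero]
    rw [show c * v 0 - (c * v 0 + -1 * v 1) = v 1 by ring]
  have h1 := normOn_preimage_pull (transferMatrix c) hQ F
  rw [hpre] at h1
  rw [h1, normOn_sq, normOn_sq, norm_sq_eq_integral_sq]
  have hF := integrable_sq F
  have hPQ : P ∪ Q ∪ {0} = Set.univ := by
    refine Set.eq_univ_of_forall fun v => ?_
    by_contra hv
    simp only [P, Q, cone, Set.mem_union, Set.mem_ofPred_eq, Set.mem_singleton_iff, not_or, zero_mul,
      sub_zero, not_and_or, not_not, not_le] at hv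
    obtain ⟨⟨ha, hb⟩, h0⟩ := hv
    have hcv : |c * v 1| ≤ K * |v 1| := by
      rw [abs_mul]; exact mul_le_mul_of_nonneg_right hc (abs_nonneg _)
    have ht : |v 0| ≤ |c * v 1| + |c * v 1 - v 0| := by
      have := abs_sub (c * v 1) (c * v 1 - v 0)
      rwa [sub_sub_cancel] at this
    have h10 : v 1 ≠ 0 := by
      intro h
      refine h0 (funext fun i => ?_)
      fin_cases i
      · rcases hb with hb | hb
        · simp only [h, abs_zero, mul_zero, zero_sub, abs_neg] at hb
          exact absurd hb (not_lt.2 (by positivity))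
        · simpa [h] using hb
      · exact h
    have h1 : 0 < |v 1| := abs_pos.2 h10
    have ha' : (K + 1) * |v 1| < |v 0| := ha.resolve_right h10
    rcases hb with hb | hb
    · nlinarith [abs_nonneg (c * v 1 - v 0)]
    · rw [hb, abs_zero] at ht
      nlinarith
  have hnull : (P ∪ Q : Set (Fin 2 → ℝ)) =ᵐ[volume] Set.univ := by
    rw [← hPQ]
    exact (union_ae_eq_left_of_ae_eq_empty (by simp)).symm
  rw [← setIntegral_univ (μ := volume) (f := fun v => (F v) ^ 2), ← setIntegral_congr_set hnull]
  rw [← Set.union_sdiff_self, setIntegral_union Set.disjoint_sdiff_right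
    (hQ.diff (measurableSet_cone _ _)) hF.integrableOn hF.integrableOn]
  refine add_le_add le_rfl ?_
  exact setIntegral_mono_set hF.integrableOn (ae_of_all _ fun v => sq_nonneg _)
    (show (Q \ P : Set (Fin 2 → ℝ)) ⊆ Q from Set.sdiff_subset).eventuallyLE

theorem norm_shearAvg_pull_shearAvg_le {c K s : ℝ} {k : ℕ} (hc : |c| ≤ K)
    (hk : 2 * (K + 1) < k * |s|) (F : PlaneL2) :
    ‖shearAvg s (pull (transferMatrix c) (shearAvg s F))‖
      ≤ (1 - 1 / (400 * (k : ℝ) ^ 2)) * ‖F‖ := by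
  have hK : 0 ≤ K := (abs_nonneg c).trans hc
  have hk0 : (1 : ℝ) ≤ k := by
    rcases Nat.eq_zero_or_pos k with rfl | h
    · simp at hk; linarith
    · exact_mod_cast h
  set U := pull (transferMatrix c)
  set H := U (shearAvg s F) with hH
  set d₁ := ‖pull (shear s) F - F‖ with hd₁
  set d₂ := ‖pull (shear s) H - H‖ with hd₂
  have hd₁0 : 0 ≤ d₁ := norm_nonneg _
  have hd₂0 : 0 ≤ d₂ := norm_nonneg _
  have e1 := norm_shearAvg_sq s H
  rw [hH, U.norm_map, norm_shearAvg_sq s F, ← hH, ← hd₁, ← hd₂] at e1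
  have hUH : ‖U F - H‖ = d₁ / 2 := by
    have h2 : F - shearAvg s F = (-2⁻¹ : ℝ) • (pull (shear s) F - F) := by
      rw [shearAvg]; module
    rw [hH, ← map_sub, U.norm_map, h2, norm_smul, norm_neg, Real.norm_of_nonneg (by norm_num)]
    ring
  have hUd : ‖pull (shear s) (U F) - U F‖ ≤ d₁ + d₂ := by
    have h3 : pull (shear s) (U F) - U F
        = pull (shear s) (U F - H) + (pull (shear s) H - H) - (U F - H) := by
      rw [map_sub]; abel
    rw [h3]
    refine (norm_sub_le _ _).trans ((add_le_add_left (norm_add_le _ _) _).trans ?_)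
    rw [(pull (shear s)).norm_map, hUH]
    linarith
  have hF5 : ‖F‖ ≤ 5 * k * (d₁ + d₂) := by
    rcases le_total (normOn (cone (K + 1) 0) F ^ 2) (normOn (cone (K + 1) 0) (U F) ^ 2) with h | h
    · have := norm_le_of_normOn_cone (F := U F) hk (by linarith) (by
        rw [U.norm_map]; linarith [norm_sq_le_normOn_cone hc F])
      rw [U.norm_map] at this
      refine this.trans ?_
      gcongr
    · have := norm_le_of_normOn_cone (F := F) hk (by linarith) (by linarith [norm_sq_le_normOn_cone hc F])
      refine this.trans ?_
      gcongr
      linarith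
  have hn := norm_nonneg F
  have hq : 0 < 1 / (400 * (k : ℝ) ^ 2) := by positivity
  have hq1 : 1 / (400 * (k : ℝ) ^ 2) ≤ 1 / 400 := by
    apply one_div_le_one_div_of_le (by norm_num)
    nlinarith
  have hsq : ‖F‖ ^ 2 ≤ 25 * (k : ℝ) ^ 2 * (2 * (d₁ ^ 2 + d₂ ^ 2)) := by
    calc ‖F‖ ^ 2 ≤ (5 * k * (d₁ + d₂)) ^ 2 := by gcongr
      _ = 25 * (k : ℝ) ^ 2 * (d₁ + d₂) ^ 2 := by ring
      _ ≤ _ := by gcongr; nlinarith [sq_nonneg (d₁ - d₂)]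
  have hsq' : 2 * (1 / (400 * (k : ℝ) ^ 2)) * ‖F‖ ^ 2 ≤ (d₁ ^ 2 + d₂ ^ 2) / 4 := by
    rw [mul_one_div, div_mul_eq_mul_div, div_le_iff₀ (by positivity)]
    linarith
  refine le_of_sq_le_sq ?_ (mul_nonneg (by linarith) hn)
  rw [e1, mul_pow]
  set q := 1 / (400 * (k : ℝ) ^ 2)
  nlinarith [sq_nonneg (q * ‖F‖)]

theorem transferMatrix_average_eq (c s : ℝ) (F : PlaneL2) :
    (2⁻¹ : ℝ) • (pull (transferMatrix c) F + pull (transferMatrix (c + s)) F)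
      = pull (transferMatrix c) (shearAvg s F) := by
  rw [shearAvg, map_smul, map_add, ← pull_mul, shear_mul_transferMatrix]

end Contraction

section NoiseAverage

variable {X : Type*} [AddCommGroup X] [Module ℝ X]

/-- The average of `f` over the values `0, …, Q - 1` of the coordinate `n`. -/
def siteAvg (Q : ℕ) (n : ℤ) (f : (ℤ → ℕ) → X) : (ℤ → ℕ) → X :=
  fun t => (Q : ℝ)⁻¹ • ∑ v ∈ Finset.range Q, f (Function.update t n v)

/-- The average of `f` over the coordinates in `l`. -/
def noiseAvg (Q : ℕ) (l : List ℤ) (f : (ℤ → ℕ) → X) : (ℤ → ℕ) → X :=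
  l.foldr (siteAvg Q) f

theorem noiseAvg_append (Q : ℕ) (l l' : List ℤ) (f : (ℤ → ℕ) → X) :
    noiseAvg Q (l ++ l') f = noiseAvg Q l (noiseAvg Q l' f) := List.foldr_append

theorem siteAvg_comm (Q : ℕ) (n m : ℤ) (f : (ℤ → ℕ) → X) :
    siteAvg Q n (siteAvg Q m f) = siteAvg Q m (siteAvg Q n f) := by
  rcases eq_or_ne n m with rfl | h
  · rfl
  funext t
  simp only [siteAvg]
  simp_rw [Finset.smul_sum]
  rw [Finset.sum_comm]
  refine Finset.sum_congr rfl fun v _ => Finset.sum_congr rfl fun w _ => ?_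
  rw [Function.update_comm h]

theorem noiseAvg_perm (Q : ℕ) {l l' : List ℤ} (h : l.Perm l') (f : (ℤ → ℕ) → X) :
    noiseAvg Q l f = noiseAvg Q l' f := by
  induction h with
  | nil => rfl
  | cons a _ ih => exact congrArg (siteAvg Q a) ih
  | swap a b l => exact siteAvg_comm Q b a _
  | trans _ _ h1 h2 => exact h1.trans h2

theorem noiseAvg_map {Y : Type*} [AddCommGroup Y] [Module ℝ Y] (L : X →ₗ[ℝ] Y) (Q : ℕ)
    (l : List ℤ) (f : (ℤ → ℕ) → X) (t : ℤ → ℕ) :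
    noiseAvg Q l (fun t => L (f t)) t = L (noiseAvg Q l f t) := by
  induction l generalizing t with
  | nil => rfl
  | cons a l ih =>
    change siteAvg Q a _ t = L (siteAvg Q a _ t)
    simp only [siteAvg, map_smul, map_sum]
    congr 1
    exact Finset.sum_congr rfl fun v _ => ih _

theorem noiseAvg_mono {Q : ℕ} {f g : (ℤ → ℕ) → ℝ} (h : ∀ t, f t ≤ g t) (l : List ℤ)
    (t : ℤ → ℕ) : noiseAvg Q l f t ≤ noiseAvg Q l g t := by
  induction l generalizing t with
  | nil => exact h t
  | cons a l ih =>
    change siteAvg Q a _ t ≤ siteAvg Q a _ t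
    simp only [siteAvg, smul_eq_mul]
    gcongr
    exact ih _

theorem noiseAvg_const {Q : ℕ} (hQ : 0 < Q) (x : X) (l : List ℤ) (t : ℤ → ℕ) :
    noiseAvg Q l (fun _ => x) t = x := by
  induction l generalizing t with
  | nil => rfl
  | cons a l ih =>
    change siteAvg Q a (noiseAvg Q l _) t = x
    simp only [siteAvg, ih, Finset.sum_const, Finset.card_range]
    rw [← Nat.cast_smul_eq_nsmul ℝ, smul_smul, inv_mul_cancel₀ (by positivity), one_smul]

theorem noiseAvg_le {Q : ℕ} (hQ : 0 < Q) {f : (ℤ → ℕ) → ℝ} {b : ℝ} (h : ∀ t, f t ≤ b)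
    (l : List ℤ) (t : ℤ → ℕ) : noiseAvg Q l f t ≤ b :=
  (noiseAvg_mono h l t).trans_eq (noiseAvg_const hQ b l t)

theorem noiseAvg_le_of_subset {Q : ℕ} (hQ : 0 < Q) {f : (ℤ → ℕ) → ℝ} {b : ℝ} {l l' : List ℤ}
    (hl : l'.Nodup) (hsub : l' ⊆ l) (h : ∀ t, noiseAvg Q l' f t ≤ b) (t : ℤ → ℕ) :
    noiseAvg Q l f t ≤ b := by
  have hsp := List.subperm_of_subset hl hsub
  have hp : l.Perm (l.diff l' ++ l') :=
    (List.subperm_append_diff_self_of_count_le (fun x _ => hsp.count_le x)).symm.trans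
      List.perm_append_comm
  rw [noiseAvg_perm Q hp, noiseAvg_append]
  exact noiseAvg_le hQ h _ t

theorem noiseAvg_add (Q : ℕ) (l : List ℤ) (f g : (ℤ → ℕ) → X) (t : ℤ → ℕ) :
    noiseAvg Q l (fun t => f t + g t) t = noiseAvg Q l f t + noiseAvg Q l g t := by
  induction l generalizing t with
  | nil => rfl
  | cons a l ih =>
    change siteAvg Q a (noiseAvg Q l _) t
      = siteAvg Q a (noiseAvg Q l _) t + siteAvg Q a (noiseAvg Q l _) t
    simp only [siteAvg, ih, Finset.sum_add_distrib, smul_add]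

theorem noiseAvg_sum {ι : Type*} (s : Finset ι) (Q : ℕ) (l : List ℤ) (f : ι → (ℤ → ℕ) → X)
    (t : ℤ → ℕ) :
    noiseAvg Q l (fun t => ∑ i ∈ s, f i t) t = ∑ i ∈ s, noiseAvg Q l (f i) t := by
  induction l generalizing t with
  | nil => rfl
  | cons a l ih =>
    change siteAvg Q a (noiseAvg Q l _) t = ∑ i ∈ s, siteAvg Q a (noiseAvg Q l _) t
    simp only [siteAvg, ih]
    rw [Finset.sum_comm, Finset.smul_sum]

theorem exists_lt_of_noiseAvg_lt {Q : ℕ} (hQ : 0 < Q) {f : (ℤ → ℕ) → ℝ} {b : ℝ} {l : List ℤ}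
    {t : ℤ → ℕ} (h : noiseAvg Q l f t < b) :
    ∃ t', (∀ n ∉ l, t' n = t n) ∧ (∀ n ∈ l, t' n < Q) ∧ f t' < b := by
  induction l generalizing t with
  | nil => exact ⟨t, by simp, by simp, h⟩
  | cons a l ih =>
    change siteAvg Q a (noiseAvg Q l f) t < b at h
    obtain ⟨v, hv, hlt⟩ : ∃ v ∈ Finset.range Q, noiseAvg Q l f (Function.update t a v) < b := by
      by_contra! hc
      have := Finset.card_nsmul_le_sum _ _ _ hc
      rw [Finset.card_range, nsmul_eq_mul] at this
      simp only [siteAvg, smul_eq_mul] at h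
      rw [inv_mul_lt_iff₀ (by positivity)] at h
      linarith
    obtain ⟨t', h1, h2, h3⟩ := ih hlt
    refine ⟨t', fun n hn => ?_, fun n hn => ?_, h3⟩
    · rw [List.mem_cons, not_or] at hn
      rw [h1 n hn.2, Function.update_of_ne hn.1]
    · by_cases hl : n ∈ l
      · exact h2 n hl
      · rw [h1 n hl, (List.mem_cons.1 hn).resolve_right hl, Function.update_self]
        exact Finset.mem_range.1 hv

end NoiseAverage

section TransferAverage

/-- The product of the first `n` transfer matrices. -/
def transferProd (c : ℕ → ℝ) : ℕ → Matrix.SpecialLinearGroup (Fin 2) ℝ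
  | 0 => 1
  | n + 1 => transferMatrix (c n) * transferProd c n

theorem transferProd_mulVec (c : ℕ → ℝ) (v : Fin 2 → ℝ) (n : ℕ) :
    Matrix.mulVec (transferProd c n).1 v
      = ![halfLineSol c (v 1) (v 0) (n + 1), halfLineSol c (v 1) (v 0) n] := by
  induction n with
  | zero =>
    ext i
    fin_cases i <;> simp [transferProd, halfLineSol]
  | succ n ih =>
    rw [transferProd, Matrix.SpecialLinearGroup.coe_mul, ← Matrix.mulVec_mulVec, ih]
    ext i
    fin_cases i <;> simp [transferMatrix, halfLineSol, sub_eq_add_neg, mul_comm]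

theorem transferProd_congr {c c' : ℕ → ℝ} {n : ℕ} (h : ∀ i < n, c i = c' i) :
    transferProd c n = transferProd c' n := by
  induction n with
  | zero => rfl
  | succ n ih =>
    rw [transferProd, transferProd, h n n.lt_succ_self, ih fun i hi => h i (by omega)]

/-- The average of the one-step transfer operators over `Q` energies spaced by `h`. -/
def transferAvg (Q : ℕ) (h c : ℝ) (F : PlaneL2) : PlaneL2 :=
  (Q : ℝ)⁻¹ • ∑ v ∈ Finset.range Q, pull (transferMatrix (c - h * v)) F

theorem transferAvg_two_mul (Q : ℕ) (h c : ℝ) (F : PlaneL2) :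
    transferAvg (2 * Q) h c F = (Q : ℝ)⁻¹ • ∑ v ∈ Finset.range Q,
      pull (transferMatrix (c - h * v)) (shearAvg (-(h * Q)) F) := by
  simp_rw [← transferMatrix_average_eq, transferAvg, two_mul Q, Finset.sum_range_add,
    ← Finset.smul_sum, Finset.sum_add_distrib, smul_smul]
  push_cast
  rw [← mul_inv, ← two_mul, mul_comm (2 : ℝ)]
  congr 2
  refine Finset.sum_congr rfl fun v _ => ?_
  congr 3
  ring

theorem norm_average_le {E : Type*} [NormedAddCommGroup E] [NormedSpace ℝ E] {Q : ℕ} {f : ℕ → E}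
    {b : ℝ} (hb : 0 ≤ b) (h : ∀ v < Q, ‖f v‖ ≤ b) :
    ‖(Q : ℝ)⁻¹ • ∑ v ∈ Finset.range Q, f v‖ ≤ b := by
  have h1 : ‖∑ v ∈ Finset.range Q, f v‖ ≤ Q * b := by
    refine (norm_sum_le_of_le _ fun v hv => h v (Finset.mem_range.1 hv)).trans_eq ?_
    simp
  rw [norm_smul, norm_inv, Real.norm_natCast]
  rcases Nat.eq_zero_or_pos Q with rfl | hQ
  · simpa using hb
  · rwa [inv_mul_le_iff₀ (by positivity)]

theorem norm_transferAvg_transferAvg_le {Q k : ℕ} {h c c' K : ℝ} (hQ : 0 < Q)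
    (hc : ∀ v < Q, |c' - h * v| ≤ K) (hk : 2 * (K + 1) < k * |h * Q|) (F : PlaneL2) :
    ‖transferAvg (2 * Q) h c (transferAvg (2 * Q) h c' F)‖
      ≤ (1 - 1 / (400 * (k : ℝ) ^ 2)) * ‖F‖ := by
  rw [← abs_neg] at hk
  have hb : 0 ≤ (1 - 1 / (400 * (k : ℝ) ^ 2)) * ‖F‖ :=
    (norm_nonneg _).trans (norm_shearAvg_pull_shearAvg_le (hc 0 hQ) hk F)
  have hcomm : shearAvg (-(h * Q)) (transferAvg (2 * Q) h c' F) = (Q : ℝ)⁻¹ •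
      ∑ v ∈ Finset.range Q, shearAvg (-(h * Q)) (pull (transferMatrix (c' - h * v))
        (shearAvg (-(h * Q)) F)) := by
    rw [transferAvg_two_mul]
    generalize shearAvg (-(h * Q)) F = G
    simp only [shearAvg, map_smul, map_sum, ← Finset.smul_sum, Finset.sum_add_distrib]
    module
  rw [transferAvg_two_mul]
  refine norm_average_le hb fun v hv => ?_
  rw [(pull _).norm_map, hcomm]
  exact norm_average_le hb fun w hw => norm_shearAvg_pull_shearAvg_le (hc w hw) hk F

theorem siteAvg_pull_transferProd {Q n : ℕ} {h E : ℝ} {V : ℤ → ℝ} {s : ℕ → ℤ}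
    (hs : Function.Injective s) (F : PlaneL2) (t : ℤ → ℕ) :
    siteAvg Q (s n) (fun t => pull (transferProd (fun i => E - (V (s i) + h * t (s i))) (n + 1)) F) t
      = pull (transferProd (fun i => E - (V (s i) + h * t (s i))) n)
          (transferAvg Q h (E - V (s n)) F) := by
  simp only [siteAvg, transferAvg, map_smul, map_sum]
  congr 1
  refine Finset.sum_congr rfl fun v _ => ?_
  rw [transferProd, pull_mul, Function.update_self, ← sub_sub]
  congr 2
  refine transferProd_congr fun i hi => ?_
  rw [Function.update_of_ne (hs.ne hi.ne)]

theorem norm_noiseAvg_pull_transferProd_le {Q k M p : ℕ} {h E K : ℝ} {V : ℤ → ℝ} {s : ℕ → ℤ}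
    (hQ : 0 < Q) (hs : Function.Injective s)
    (hc : ∀ i < M + 2 * p, ∀ v < Q, |E - V (s i) - h * v| ≤ K)
    (hk : 2 * (K + 1) < k * |h * Q|) (F : PlaneL2) (t : ℤ → ℕ) :
    ‖noiseAvg (2 * Q) ((List.range' M (2 * p)).map s) (fun t =>
      pull (transferProd (fun i => E - (V (s i) + h * t (s i))) (M + 2 * p)) F) t‖
      ≤ (1 - 1 / (400 * (k : ℝ) ^ 2)) ^ p * ‖F‖ := by
  induction p generalizing F with
  | zero => simp [noiseAvg]
  | succ p ih =>
    have hl : (List.range' M (2 * (p + 1))).map s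
        = (List.range' M (2 * p)).map s ++ [s (M + 2 * p), s (M + 2 * p + 1)] := by
      rw [mul_add_one, ← List.range'_append, List.map_append]
      simp [List.range'_succ]
    rw [hl, noiseAvg_append]
    have h1 : noiseAvg (2 * Q) [s (M + 2 * p), s (M + 2 * p + 1)] (fun t =>
          pull (transferProd (fun i => E - (V (s i) + h * t (s i))) (M + 2 * (p + 1))) F)
        = fun t => pull (transferProd (fun i => E - (V (s i) + h * t (s i))) (M + 2 * p))
          (transferAvg (2 * Q) h (E - V (s (M + 2 * p)))
            (transferAvg (2 * Q) h (E - V (s (M + 2 * p + 1))) F)) := by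
      change siteAvg _ _ (siteAvg _ _ _) = _
      rw [show M + 2 * (p + 1) = M + 2 * p + 1 + 1 by ring]
      funext t
      rw [← siteAvg_pull_transferProd hs]
      congr 1
      funext t
      exact siteAvg_pull_transferProd hs F t
    rw [h1]
    refine (ih (fun i hi => hc i (by omega)) _).trans ?_
    have h2 := norm_transferAvg_transferAvg_le (c := E - V (s (M + 2 * p))) hQ
      (hc (M + 2 * p + 1) (by omega)) hk F
    have hρ : 0 ≤ 1 - 1 / (400 * (k : ℝ) ^ 2) := by
      have hK := (abs_nonneg _).trans (hc M (by omega) 0 hQ)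
      have hk1 : (1 : ℝ) ≤ k := by
        rcases Nat.eq_zero_or_pos k with rfl | h
        · simp at hk; linarith
        · exact_mod_cast h
      rw [sub_nonneg, div_le_one (by positivity)]
      nlinarith
    rw [pow_succ _ p, mul_assoc]
    gcongr

/-- The characteristic function of the square `[-1, 1]²`. -/
def unitSquare : PlaneL2 :=
  indicatorConstLp 2 (μ := volume) (measurableSet_closedBall (x := (0 : Fin 2 → ℝ)) (ε := 1))
    measure_closedBall_lt_top.ne (1 : ℝ)

theorem norm_unitSquare : ‖unitSquare‖ = 2 := by
  rw [unitSquare, norm_indicatorConstLp two_ne_zero ENNReal.ofNat_ne_top, measureReal_def,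
    Real.volume_pi_closedBall _ zero_le_one]
  norm_num

theorem inner_unitSquare (F : PlaneL2) :
    inner ℝ unitSquare F = ∫ v in Metric.closedBall (0 : Fin 2 → ℝ) 1, F v :=
  L2.inner_indicatorConstLp_one _ _ F

theorem coeFn_pull_unitSquare (g : Matrix.SpecialLinearGroup (Fin 2) ℝ) :
    pull g unitSquare =ᵐ[volume] fun v =>
      (Metric.closedBall (0 : Fin 2 → ℝ) 1).indicator (fun _ => (1 : ℝ)) (Matrix.mulVec g.1 v) := by
  filter_upwards [coeFn_pull g unitSquare,
    (measurePreserving_mulVec g).quasiMeasurePreserving.ae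
      (indicatorConstLp_coeFn (p := 2) (μ := volume)
        (hs := measurableSet_closedBall (x := (0 : Fin 2 → ℝ)) (ε := 1))
        (hμs := measure_closedBall_lt_top.ne) (c := (1 : ℝ)))] with v h1 h2
  rw [h1, ← h2]
  rfl

theorem inner_unitSquare_pull_nonneg (g : Matrix.SpecialLinearGroup (Fin 2) ℝ) :
    0 ≤ inner ℝ unitSquare (pull g unitSquare) := by
  rw [inner_unitSquare]
  refine integral_nonneg_of_ae (ae_restrict_of_ae ?_)
  filter_upwards [coeFn_pull_unitSquare g] with v hv
  rw [hv]
  exact Set.indicator_nonneg (fun _ _ => zero_le_one) _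

theorem le_inner_unitSquare_pull {g : Matrix.SpecialLinearGroup (Fin 2) ℝ} {Γ : ℝ} (hΓ : 1 ≤ Γ)
    (hg : ∀ v : Fin 2 → ℝ, ‖v‖ ≤ 1 / (2 * Γ) → ‖Matrix.mulVec g.1 v‖ ≤ 1) :
    1 / Γ ^ 2 ≤ inner ℝ unitSquare (pull g unitSquare) := by
  have hΓ0 : 0 < Γ := by linarith
  set B := Metric.closedBall (0 : Fin 2 → ℝ) (1 / (2 * Γ))
  have hB : B ⊆ Metric.closedBall (0 : Fin 2 → ℝ) 1 :=
    Metric.closedBall_subset_closedBall (by rw [div_le_one (by positivity)]; linarith)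
  rw [inner_unitSquare]
  have hintegrable : IntegrableOn (fun v => pull g unitSquare v) (Metric.closedBall (0 : Fin 2 → ℝ) 1) :=
    integrableOn_Lp_of_measure_ne_top _ one_le_two measure_closedBall_lt_top.ne
  calc 1 / Γ ^ 2 = ∫ v in B, (1 : ℝ) := by
        rw [setIntegral_const, measureReal_def, Real.volume_pi_closedBall _ (by positivity),
          ENNReal.toReal_ofReal (by positivity)]
        simp
        field_simp
    _ = ∫ v in B, pull g unitSquare v := by
        refine setIntegral_congr_ae measurableSet_closedBall ?_
        filter_upwards [coeFn_pull_unitSquare g] with v hv hvB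
        rw [hv, Set.indicator_of_mem]
        rw [mem_closedBall_zero_iff] at hvB ⊢
        exact hg v hvB
    _ ≤ _ := by
        refine setIntegral_mono_set hintegrable (ae_restrict_of_ae ?_) hB.eventuallyLE
        filter_upwards [coeFn_pull_unitSquare g] with v hv
        rw [hv]
        exact Set.indicator_nonneg (fun _ _ => zero_le_one) _

theorem le_inner_of_isSlow {W : ℤ → ℝ} {m : ℕ} {Γ E : ℝ} (hΓ : 1 ≤ Γ) (h : IsSlow W m Γ E) :
    1 / Γ ^ 2 ≤ inner ℝ unitSquare
      (pull (transferProd (fun i => E - W (i + 1)) m) unitSquare) := by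
  refine le_inner_unitSquare_pull hΓ fun v hv => ?_
  have key : ∀ n ≤ m + 1, |halfLineSol (fun i => E - W (i + 1)) (v 1) (v 0) n| ≤ 1 := by
    intro n hn
    rw [halfLineSol_eq]
    obtain ⟨h1, h2⟩ := h n hn
    have e0 : |v 0| ≤ 1 / (2 * Γ) := (norm_le_pi_norm v 0).trans hv
    have e1 : |v 1| ≤ 1 / (2 * Γ) := (norm_le_pi_norm v 1).trans hv
    refine (abs_add_le _ _).trans ?_
    rw [abs_mul, abs_mul]
    calc _ ≤ 1 / (2 * Γ) * Γ + 1 / (2 * Γ) * Γ := by gcongr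
      _ = 1 := by field_simp; norm_num
  rw [transferProd_mulVec, pi_norm_le_iff_of_nonneg zero_le_one]
  intro i
  fin_cases i
  · exact key (m + 1) le_rfl
  · exact key m (by omega)

open Classical in
theorem noiseAvg_isSlow_le {Q k M p : ℕ} {h E K Γ : ℝ} {V : ℤ → ℝ} {s : ℕ → ℤ}
    (hQ : 0 < Q) (hs : Function.Injective s)
    (hc : ∀ i < M + 2 * p, ∀ v < Q, |E - V (s i) - h * v| ≤ K)
    (hk : 2 * (K + 1) < k * |h * Q|) (hΓ : 1 ≤ Γ) {W : (ℤ → ℕ) → ℤ → ℝ}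
    (hW : ∀ t (i : ℕ), W t (i + 1) = V (s i) + h * t (s i)) (t : ℤ → ℕ) :
    noiseAvg (2 * Q) ((List.range' M (2 * p)).map s)
      (fun t => if IsSlow (W t) (M + 2 * p) Γ E then (1 : ℝ) else 0) t
      ≤ 4 * Γ ^ 2 * (1 - 1 / (400 * (k : ℝ) ^ 2)) ^ p := by
  have hle : ∀ t, (if IsSlow (W t) (M + 2 * p) Γ E then (1 : ℝ) else 0)
      ≤ ((Γ ^ 2) • (innerSL ℝ unitSquare).toLinearMap)
        (pull (transferProd (fun i => E - (V (s i) + h * t (s i))) (M + 2 * p)) unitSquare) := by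
    intro t
    rw [LinearMap.smul_apply, smul_eq_mul]
    split_ifs with hS
    · have := le_inner_of_isSlow hΓ hS
      rw [div_le_iff₀' (by positivity)] at this
      simp only [hW] at this
      exact this
    · exact mul_nonneg (by positivity) (inner_unitSquare_pull_nonneg _)
  refine (noiseAvg_mono hle _ t).trans ?_
  rw [noiseAvg_map, LinearMap.smul_apply, smul_eq_mul]
  have h1 := norm_noiseAvg_pull_transferProd_le hQ hs hc hk unitSquare t
  rw [norm_unitSquare] at h1
  have h2 := real_inner_le_norm unitSquare (noiseAvg (2 * Q) ((List.range' M (2 * p)).map s) (fun t =>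
      pull (transferProd (fun i => E - (V (s i) + h * t (s i))) (M + 2 * p)) unitSquare) t)
  rw [norm_unitSquare] at h2
  calc _ ≤ Γ ^ 2 * (2 * ((1 - 1 / (400 * (k : ℝ) ^ 2)) ^ p * 2)) := by
        gcongr
        exact h2.trans (by gcongr)
    _ = _ := by ring

end TransferAverage

section NoiseSelection

/-- The potential `V` perturbed by the noise `h * t`. -/
def noisy (V : ℤ → ℝ) (h : ℝ) (t : ℤ → ℕ) : ℤ → ℝ := fun n => V n + h * t n

theorem siteAvg_greenNormSq_le {V : ℤ → ℝ} {B : ℝ} (hV : ∀ n, |V n| ≤ B) (e : ℝ) {w h : ℝ}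
    (hh : 0 < h) (hw : h ≤ w) {Q : ℕ} (hQ : 0 < Q) (n : ℤ) (t : ℤ → ℕ) :
    siteAvg Q n (fun t => w ^ 2 * greenNormSq (noisy V h fun m => min (t m) Q) e w n) t
      ≤ 10 * w / (h * Q) := by
  set U : ℤ → ℝ := noisy V h (Function.update (fun m => min (t m) Q) n 0) with hU
  have hUB : ∀ m, |U m| ≤ B + h * Q := by
    intro m
    have h1 : Function.update (fun m => min (t m) Q) n 0 m ≤ Q := by
      rcases eq_or_ne m n with rfl | hm
      · simp
      · rw [Function.update_of_ne hm]; exact min_le_right _ _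
    rw [hU]
    refine (abs_add_le _ _).trans (add_le_add (hV m) ?_)
    rw [abs_mul, abs_of_pos hh, Nat.abs_cast]
    gcongr
  have hsum := sum_greenNormSq_le hUB e hh hw n Q
  have heq : ∀ v ∈ Finset.range Q, noisy V h (fun m => min (Function.update t n v m) Q)
      = Function.update U n (U n + v * h) := by
    intro v hv
    have hv' := (Finset.mem_range.1 hv).le
    funext m
    rcases eq_or_ne m n with rfl | hm
    · simp [noisy, hU, hv', mul_comm]
    · simp [noisy, hU, hm]
  simp only [siteAvg, smul_eq_mul]
  rw [Finset.sum_congr rfl fun v hv => by rw [heq v hv]]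
  rw [le_div_iff₀ (by positivity)]
  calc _ = w * ∑ v ∈ Finset.range Q, h * (w * greenNormSq (Function.update U n (U n + v * h)) e w n) := by
        rw [Finset.mul_sum, Finset.mul_sum, Finset.sum_mul]
        refine Finset.sum_congr rfl fun v _ => ?_
        field_simp
    _ ≤ w * 10 := by gcongr; linarith
    _ = _ := by ring

theorem exists_grid_near {C : ℝ} (hC : 0 < C) {J : ℕ} (hJ : 0 < J) {E : ℝ} (hE : |E| ≤ C) :
    ∃ j ∈ Finset.range (J + 1), |E - (-C + 2 * C * j / J)| ≤ 2 * C / J := by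
  rw [abs_le] at hE
  have hJ' : (0 : ℝ) < J := by exact_mod_cast hJ
  set x := (E + C) * J / (2 * C) with hx
  have hx0 : 0 ≤ x := div_nonneg (mul_nonneg (by linarith) hJ'.le) (by linarith)
  have hxJ : x ≤ J := by rw [hx, div_le_iff₀ (by linarith)]; nlinarith
  refine ⟨⌊x⌋₊, ?_, ?_⟩
  · rw [Finset.mem_range, Nat.lt_succ_iff]
    exact Nat.floor_le_of_le hxJ
  · have h1 := Nat.floor_le hx0
    have h2 := (Nat.lt_floor_add_one x).le
    have hE : E - (-C + 2 * C * ⌊x⌋₊ / J) = 2 * C / J * (x - ⌊x⌋₊) := by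
      rw [hx]; field_simp; ring
    rw [hE, abs_mul, abs_of_pos (by positivity)]
    refine mul_le_of_le_one_right (by positivity) ?_
    rw [abs_le]
    constructor <;> linarith

theorem abs_grid_le {C : ℝ} (hC : 0 < C) {J j : ℕ} (hJ : 0 < J) (hj : j ∈ Finset.range (J + 1)) :
    |-C + 2 * C * j / J| ≤ C := by
  have hJ' : (0 : ℝ) < J := by exact_mod_cast hJ
  have hj' : (j : ℝ) ≤ J := by exact_mod_cast Nat.lt_succ_iff.1 (Finset.mem_range.1 hj)
  have h1 : 2 * C * j / J ≤ 2 * C := by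
    rw [div_le_iff₀ hJ']; gcongr
  have h2 : 0 ≤ 2 * C * j / J := by positivity
  rw [abs_le]
  constructor <;> linarith

open Classical in
theorem exists_noise {V : ℤ → ℝ} {B C Γ w h β : ℝ} {M p Q k J : ℕ} (hV : ∀ n, |V n| ≤ B)
    (hC : 0 < C) (hΓ : 1 ≤ Γ) (hh : 0 < h) (hw : h ≤ w) (hQ : 0 < Q) (hJ : 0 < J) (hβ : 0 < β)
    (hk : 2 * (C + B + h * Q + 1) < k * (h * Q))
    (hJΓ : 8 * C * Γ ^ 2 * ((M + 2 * p : ℕ) + 1) ≤ J) (F : Finset ℝ)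
    (hsmall : 2 * (J + 1) * (4 * (2 * Γ) ^ 2 * (1 - 1 / (400 * (k : ℝ) ^ 2)) ^ p)
      + β⁻¹ * (4 * p * (F.card * (10 * w / (h * (2 * Q))))) < 1) :
    ∃ t : ℤ → ℕ, (∀ n ∉ window (M + 2 * p) \ window M, t n = 0) ∧ (∀ n, t n < 2 * Q) ∧
      HasGrowth (noisy V h t) (M + 2 * p) Γ C ∧
      ∑ n ∈ window (M + 2 * p) \ window M, ∑ e ∈ F,
        w ^ 2 * greenNormSq (noisy V h t) e w n < β := by
  set A := window (M + 2 * p) \ window M with hA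
  set N := M + 2 * p with hN
  set grid : ℕ → ℝ := fun j => -C + 2 * C * j / J with hgrid
  set ρ := 1 - 1 / (400 * (k : ℝ) ^ 2) with hρ
  set R : ℕ → (ℤ → ℕ) → ℝ := fun j t =>
    if IsSlow (noisy V h t) N (2 * Γ) (grid j) then 1 else 0 with hR
  set L : ℕ → (ℤ → ℕ) → ℝ := fun j t =>
    if IsSlow (reflect (noisy V h t)) N (2 * Γ) (grid j) then 1 else 0 with hL
  set G : (ℤ → ℕ) → ℝ := fun t => ∑ n ∈ A, ∑ e ∈ F,
    w ^ 2 * greenNormSq (noisy V h fun m => min (t m) (2 * Q)) e w n with hG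
  set f : (ℤ → ℕ) → ℝ := fun t => ∑ j ∈ Finset.range (J + 1), (R j t + L j t) + β⁻¹ • G t with hf
  have hc : ∀ j ∈ Finset.range (J + 1), ∀ (s : ℕ → ℤ), ∀ i < M + 2 * p, ∀ v < Q,
      |grid j - V (s i) - h * v| ≤ C + B + h * Q := by
    intro j hj s i _ v hv
    refine (abs_sub _ _).trans (add_le_add ((abs_sub _ _).trans
      (add_le_add (abs_grid_le hC hJ hj) (hV _))) ?_)
    rw [abs_mul, abs_of_pos hh, Nat.abs_cast]
    gcongr
  have hk' : 2 * (C + B + h * Q + 1) < k * |h * Q| := by rwa [abs_of_pos (by positivity)]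
  have hRavg : ∀ j ∈ Finset.range (J + 1), ∀ t,
      noiseAvg (2 * Q) A.toList (R j) t ≤ 4 * (2 * Γ) ^ 2 * ρ ^ p := by
    intro j hj t
    have hs : Function.Injective fun i : ℕ => (i : ℤ) + 1 := fun a b hab => by
      simp only at hab; omega
    refine noiseAvg_le_of_subset (by omega) ((List.nodup_range').map hs) ?_
      (noiseAvg_isSlow_le hQ hs (hc j hj _) hk' (by linarith) fun t i => rfl) t
    intro n hn
    obtain ⟨i, hi, rfl⟩ := List.mem_map.1 hn
    rw [List.mem_range'_1] at hi
    simp only [hA, window, Finset.mem_toList, Finset.mem_sdiff, Finset.mem_Icc]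
    omega
  have hLavg : ∀ j ∈ Finset.range (J + 1), ∀ t,
      noiseAvg (2 * Q) A.toList (L j) t ≤ 4 * (2 * Γ) ^ 2 * ρ ^ p := by
    intro j hj t
    have hs : Function.Injective fun i : ℕ => -(i : ℤ) := fun a b hab => by
      simp only at hab; omega
    refine noiseAvg_le_of_subset (by omega) ((List.nodup_range').map hs) ?_
      (noiseAvg_isSlow_le hQ hs (hc j hj _) hk' (by linarith) fun t i => ?_) t
    · intro n hn
      obtain ⟨i, hi, rfl⟩ := List.mem_map.1 hn
      rw [List.mem_range'_1] at hi
      simp only [hA, window, Finset.mem_toList, Finset.mem_sdiff, Finset.mem_Icc]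
      omega
    · simp only [reflect, noisy]
      rw [show (1 : ℤ) - (i + 1) = -i by ring]
  have hcard : (A.card : ℝ) = 4 * p := by
    rw [hA, Finset.card_sdiff_of_subset (window_mono (by omega)), card_window, card_window,
      show 2 * (M + 2 * p) - 2 * M = 4 * p by omega]
    push_cast; ring
  have hGavg : ∀ t, noiseAvg (2 * Q) A.toList G t
      ≤ 4 * p * (F.card * (10 * w / (h * (2 * Q)))) := by
    intro t
    rw [hG, noiseAvg_sum, ← hcard, ← nsmul_eq_mul]
    refine Finset.sum_le_card_nsmul _ _ _ fun n hn => ?_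
    rw [noiseAvg_sum, ← nsmul_eq_mul]
    refine Finset.sum_le_card_nsmul _ _ _ fun e _ => ?_
    refine noiseAvg_le_of_subset (l' := [n]) (by omega) (List.nodup_singleton n) ?_ (fun t => ?_) t
    · simpa using hn
    · have := siteAvg_greenNormSq_le hV e hh hw (Q := 2 * Q) (by omega) n t
      push_cast at this
      exact this
  have hfavg : noiseAvg (2 * Q) A.toList f (fun _ => 0) < 1 := by
    rw [hf, noiseAvg_add, noiseAvg_sum]
    have h1 := noiseAvg_map (LinearMap.lsmul ℝ ℝ β⁻¹) (2 * Q) A.toList G (fun _ => 0)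
    simp only [LinearMap.lsmul_apply] at h1
    rw [h1, smul_eq_mul]
    refine lt_of_le_of_lt ?_ hsmall
    refine add_le_add ?_ (by gcongr; exact hGavg _)
    refine (Finset.sum_le_card_nsmul _ _ (2 * (4 * (2 * Γ) ^ 2 * ρ ^ p)) fun j hj => ?_).trans_eq ?_
    · rw [noiseAvg_add]
      linarith [hRavg j hj fun _ => 0, hLavg j hj fun _ => 0]
    · rw [Finset.card_range, nsmul_eq_mul]; push_cast; ring
  obtain ⟨t, ht0, htQ, hft⟩ := exists_lt_of_noiseAvg_lt (by omega) hfavg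
  simp only [Finset.mem_toList] at ht0 htQ
  have htlt : ∀ n, t n < 2 * Q := fun n => by
    by_cases hn : n ∈ A
    · exact htQ n hn
    · rw [ht0 n hn]; omega
  have hmin : (fun m => min (t m) (2 * Q)) = t := funext fun m => min_eq_left (htlt m).le
  have hR0 : ∀ j, 0 ≤ R j t := fun j => by simp only [hR]; split_ifs <;> norm_num
  have hL0 : ∀ j, 0 ≤ L j t := fun j => by simp only [hL]; split_ifs <;> norm_num
  have hG0 : 0 ≤ G t := Finset.sum_nonneg fun n _ => Finset.sum_nonneg fun e _ =>
    mul_nonneg (sq_nonneg _) (greenNormSq_nonneg _ _ _ _)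
  have hlt1 : ∀ j ∈ Finset.range (J + 1), R j t + L j t < 1 := by
    intro j hj
    have h1 := Finset.single_le_sum (f := fun j => R j t + L j t)
      (fun i _ => add_nonneg (hR0 i) (hL0 i)) hj
    have h2 : 0 ≤ β⁻¹ • G t := by rw [smul_eq_mul]; positivity
    simp only [hf] at hft
    linarith
  refine ⟨t, ht0, htlt, fun E hE => ?_, ?_⟩
  · obtain ⟨j, hj, hEj⟩ := exists_grid_near hC hJ hE
    rw [abs_sub_comm] at hEj
    have hcl : 4 * (2 * C / J) * Γ ^ 2 * (N + 1) ≤ 1 := by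
      have : (0 : ℝ) < J := by exact_mod_cast hJ
      rw [show 4 * (2 * C / J) * Γ ^ 2 * ((N : ℝ) + 1) = 8 * C * Γ ^ 2 * (N + 1) / J by ring]
      rw [div_le_one this]
      exact hJΓ
    refine ⟨fun hS => ?_, fun hS => ?_⟩
    · have h1 : R j t = 1 := if_pos (hS.of_close hEj hcl)
      linarith [hlt1 j hj, hL0 j]
    · have h1 : L j t = 1 := if_pos (hS.of_close hEj hcl)
      linarith [hlt1 j hj, hR0 j]
  · have h1 : β⁻¹ * G t < 1 := by
      have h2 : 0 ≤ ∑ j ∈ Finset.range (J + 1), (R j t + L j t) :=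
        Finset.sum_nonneg fun j _ => add_nonneg (hR0 j) (hL0 j)
      simp only [hf, smul_eq_mul] at hft
      linarith
    rw [inv_mul_lt_iff₀ hβ, mul_one] at h1
    simpa only [hG, hmin] using h1

end NoiseSelection

section Scales

theorem eventually_mul_pow_lt {A r : ℝ} (hr : 0 ≤ r) (hr1 : r < 1) (d : ℕ) {b : ℝ} (hb : 0 < b) :
    ∀ᶠ n : ℕ in atTop, A * ((n : ℝ) ^ d * r ^ n) < b := by
  have h := (tendsto_pow_const_mul_const_pow_of_abs_lt_one d
    (by rwa [abs_of_nonneg hr])).const_mul A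
  rw [mul_zero] at h
  exact h.eventually (gt_mem_nhds hb)

/-- The number of grid energies needed at scale `N`. -/
def gridSize (B N : ℕ) : ℕ := 8 * (B + 2) * (N ^ 17) ^ 2 * (N + 1)

theorem growth_factor_le {B N : ℕ} (hN : 1 ≤ N) {x : ℝ} (hx : 0 ≤ x) :
    2 * ((gridSize B N : ℕ) + 1) * (4 * (2 * (N : ℝ) ^ 17) ^ 2 * x)
      ≤ 1024 * (B + 2) * (N : ℝ) ^ 69 * x := by
  have hN' : (1 : ℝ) ≤ N := by exact_mod_cast hN
  have h1 : ((gridSize B N : ℕ) : ℝ) = 8 * (B + 2) * N ^ 34 * (N + 1) := by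
    rw [gridSize]; push_cast; ring
  have h2 : (gridSize B N : ℝ) + 1 ≤ 32 * (B + 2) * (N : ℝ) ^ 35 := by
    rw [h1]
    have h34 : (1 : ℝ) ≤ (N : ℝ) ^ 34 := one_le_pow₀ hN'
    have hB : (0 : ℝ) ≤ B := B.cast_nonneg
    have h35 : (N : ℝ) ^ 35 = N ^ 34 * N := by ring
    rw [h35]
    have h4 : 8 * ((B : ℝ) + 2) * N ^ 34 * (N + 1) ≤ 8 * ((B : ℝ) + 2) * N ^ 34 * (2 * N) := by
      gcongr; linarith
    have h5 : 1 ≤ ((B : ℝ) + 2) * (N ^ 34 * N) := by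
      have : (1 : ℝ) ≤ N ^ 34 * N := one_le_mul_of_one_le_of_one_le h34 hN'
      nlinarith
    nlinarith
  calc 2 * ((gridSize B N : ℕ) + 1) * (4 * (2 * (N : ℝ) ^ 17) ^ 2 * x)
      ≤ 2 * (32 * (B + 2) * (N : ℝ) ^ 35) * (4 * (2 * (N : ℝ) ^ 17) ^ 2 * x) := by gcongr
    _ = _ := by ring

theorem exists_initial_noise (B : ℕ) {ε : ℝ} (hε : 0 < ε) :
    ∀ᶠ p : ℕ in atTop, ∀ V : ℤ → ℝ, (∀ n, |V n| ≤ B) → ∃ U : ℤ → ℝ,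
      (∀ n, |U n| ≤ ε) ∧ (∀ n ∉ window (2 * p), U n = 0) ∧
      HasGrowth (fun n => V n + U n) (2 * p) ((2 * p : ℕ) ^ 17) (B + 2) := by
  set h := ε / 2 with hh
  have hh0 : 0 < h := by positivity
  obtain ⟨k, hk⟩ := exists_nat_gt (2 * (((B : ℝ) + 2) + B + h * (1 : ℕ) + 1) / h)
  have hk0 : (1 : ℝ) ≤ k := by
    have : (0 : ℝ) < k := lt_trans (by positivity) hk
    exact_mod_cast this
  set ρ := 1 - 1 / (400 * (k : ℝ) ^ 2) with hρ
  have hρ0 : 0 ≤ ρ := by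
    rw [hρ, sub_nonneg, div_le_one (by positivity)]
    nlinarith
  have hρ1 : ρ < 1 := by
    have : 0 < 1 / (400 * (k : ℝ) ^ 2) := by positivity
    linarith
  filter_upwards [eventually_mul_pow_lt (A := 1024 * (B + 2) * 2 ^ 69) hρ0 hρ1 69 one_pos,
    eventually_ge_atTop 1] with p hp hp1 V hV
  have hx : 0 ≤ ρ ^ p := pow_nonneg hρ0 p
  have hN : 1 ≤ 2 * p := by omega
  obtain ⟨t, ht0, htQ, hg, -⟩ := exists_noise (V := V) (B := B) (C := B + 2)
    (Γ := ((2 * p : ℕ) : ℝ) ^ 17) (w := h) (h := h) (β := 1) (M := 0) (p := p) (Q := 1) (k := k)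
    (J := gridSize B (2 * p)) hV (by positivity) (one_le_pow₀ (by exact_mod_cast hN)) hh0 le_rfl
    one_pos (by rw [gridSize]; positivity) one_pos
    (by rw [div_lt_iff₀ hh0] at hk; simpa using hk)
    (by rw [gridSize]; push_cast; rw [zero_add]) ∅ (by
      refine lt_of_le_of_lt ?_ hp
      have := growth_factor_le (B := B) hN hx
      push_cast at this ⊢
      rw [mul_pow] at this
      simp only [Finset.card_empty, Nat.cast_zero, zero_mul, mul_zero, add_zero]
      linarith)
  refine ⟨fun n => h * t n, fun n => ?_, fun n hn => ?_, ?_⟩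
  · have : (t n : ℝ) ≤ 2 := by exact_mod_cast (htQ n).le
    rw [abs_of_nonneg (by positivity)]
    nlinarith
  · have : t n = 0 := ht0 n (by simpa [window] using hn)
    simp [this]
  · rw [zero_add] at hg
    exact hg

theorem contraction_pow_le {K M : ℕ} (hM : 1 ≤ M) :
    (1 - 1 / (400 * ((K * M ^ 2 : ℕ) : ℝ) ^ 2)) ^ M ^ 8
      ≤ Real.exp (-(1 / (400 * (K : ℝ) ^ 2))) ^ M := by
  have hM' : (1 : ℝ) ≤ M := by exact_mod_cast hM
  rcases Nat.eq_zero_or_pos K with rfl | hK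
  · simp
  have hK' : (1 : ℝ) ≤ K := by exact_mod_cast hK
  have hKM : (1 : ℝ) ≤ K * (M : ℝ) ^ 2 :=
    one_le_mul_of_one_le_of_one_le hK' (one_le_pow₀ hM')
  have h0 : 0 ≤ 1 - 1 / (400 * ((K * M ^ 2 : ℕ) : ℝ) ^ 2) := by
    push_cast
    rw [sub_nonneg, div_le_one (by positivity)]
    nlinarith
  refine (pow_le_pow_left₀ h0 (Real.one_sub_le_exp_neg _) _).trans ?_
  rw [← Real.exp_nat_mul, ← Real.exp_nat_mul, Real.exp_le_exp]
  push_cast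
  rw [mul_neg, mul_neg, neg_le_neg_iff]
  rw [show (M : ℝ) ^ 8 * (1 / (400 * (K * (M : ℝ) ^ 2) ^ 2)) = M ^ 4 * (1 / (400 * (K : ℝ) ^ 2)) by
    field_simp]
  gcongr
  exact le_self_pow₀ hM' (by norm_num)

theorem exists_next_noise (B : ℕ) :
    ∀ᶠ M : ℕ in atTop, ∀ V : ℤ → ℝ, (∀ n, |V n| ≤ B) → ∀ F : Finset ℝ, F.card ≤ 2 * M ^ 3 →
      ∃ U : ℤ → ℝ, (∀ n, |U n| ≤ 2 / (M : ℝ) ^ 2) ∧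
        (∀ n ∉ window (M + 2 * M ^ 8) \ window M, U n = 0) ∧
        HasGrowth (fun n => V n + U n) (M + 2 * M ^ 8) ((M + 2 * M ^ 8 : ℕ) ^ 17) (B + 2) ∧
        ∑ n ∈ window (M + 2 * M ^ 8) \ window M, ∑ e ∈ F,
          (1 / (M : ℝ) ^ 15) ^ 2 * greenNormSq (fun n => V n + U n) e (1 / (M : ℝ) ^ 15) n
            < 1 / (8 * (M : ℝ)) := by
  set K := 4 * B + 9 with hK
  set r := Real.exp (-(1 / (400 * (K : ℝ) ^ 2))) with hr
  have hr0 : 0 ≤ r := (Real.exp_pos _).le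
  have hr1 : r < 1 := Real.exp_lt_one_iff.2 (neg_lt_zero.2 (by positivity))
  filter_upwards [eventually_mul_pow_lt (A := 1024 * (B + 2) * 3 ^ 69) hr0 hr1 552
    (b := 1 / 2) (by norm_num), eventually_gt_atTop 640] with M hpow hM V hV F hF
  have hM1 : 1 ≤ M := by omega
  have hM' : (640 : ℝ) < M := by exact_mod_cast hM
  have hM0 : (0 : ℝ) < M := by linarith
  set N := M + 2 * M ^ 8 with hN
  have hN1 : 1 ≤ N := by omega
  have hN3 : (N : ℝ) ≤ 3 * (M : ℝ) ^ 8 := by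
    have : (M : ℝ) ≤ (M : ℝ) ^ 8 := le_self_pow₀ (by linarith) (by norm_num)
    rw [hN]; push_cast; linarith
  set ρ := 1 - 1 / (400 * ((K * M ^ 2 : ℕ) : ℝ) ^ 2) with hρ
  have hρp : ρ ^ M ^ 8 ≤ r ^ M := contraction_pow_le hM1
  have hrM : 0 ≤ r ^ M := pow_nonneg hr0 M
  have hhQ : 1 / (M : ℝ) ^ 15 * ((M ^ 13 : ℕ) : ℝ) = 1 / (M : ℝ) ^ 2 := by
    push_cast; field_simp
  have hM2 : 1 / (M : ℝ) ^ 2 ≤ 1 := by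
    rw [div_le_one (by positivity)]; exact one_le_pow₀ (by linarith)
  obtain ⟨t, ht0, htQ, hg, hsum⟩ := exists_noise (V := V) (B := B) (C := B + 2)
    (Γ := (N : ℝ) ^ 17) (w := 1 / (M : ℝ) ^ 15) (h := 1 / (M : ℝ) ^ 15) (β := 1 / (8 * M))
    (M := M) (p := M ^ 8) (Q := M ^ 13) (k := K * M ^ 2) (J := gridSize B N) hV
    (by positivity) (one_le_pow₀ (by exact_mod_cast hN1)) (by positivity) le_rfl
    (by positivity) (by rw [gridSize]; positivity) (by positivity)
    (by
      rw [hhQ]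
      have : ((K * M ^ 2 : ℕ) : ℝ) * (1 / (M : ℝ) ^ 2) = 4 * B + 9 := by
        rw [hK]; push_cast; field_simp
      rw [this]
      linarith)
    (by rw [gridSize, ← hN]; push_cast; rfl) F (by
      have h1 : 2 * ((gridSize B N : ℕ) + 1) * (4 * (2 * (N : ℝ) ^ 17) ^ 2 * ρ ^ M ^ 8) < 1 / 2 := by
        calc _ ≤ 2 * ((gridSize B N : ℕ) + 1) * (4 * (2 * (N : ℝ) ^ 17) ^ 2 * r ^ M) := by gcongr
          _ ≤ 1024 * (B + 2) * (N : ℝ) ^ 69 * r ^ M := growth_factor_le hN1 hrM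
          _ ≤ 1024 * (B + 2) * (3 * (M : ℝ) ^ 8) ^ 69 * r ^ M := by gcongr
          _ = 1024 * (B + 2) * 3 ^ 69 * ((M : ℝ) ^ 552 * r ^ M) := by ring
          _ < 1 / 2 := hpow
      have hF' : (F.card : ℝ) ≤ 2 * (M : ℝ) ^ 3 := by exact_mod_cast hF
      have h2 : (1 / (8 * (M : ℝ)))⁻¹ * (4 * (M ^ 8 : ℕ) * (F.card *
          (10 * (1 / (M : ℝ) ^ 15) / (1 / (M : ℝ) ^ 15 * (2 * (M ^ 13 : ℕ)))))) ≤ 1 / 2 := by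
        calc _ ≤ (1 / (8 * (M : ℝ)))⁻¹ * (4 * (M ^ 8 : ℕ) * (2 * (M : ℝ) ^ 3 *
          (10 * (1 / (M : ℝ) ^ 15) / (1 / (M : ℝ) ^ 15 * (2 * (M ^ 13 : ℕ)))))) := by gcongr
          _ = 320 / M := by push_cast; field_simp; norm_num
          _ ≤ 1 / 2 := by rw [div_le_iff₀ hM0]; linarith
      linarith)
  refine ⟨fun n => 1 / (M : ℝ) ^ 15 * t n, fun n => ?_, fun n hn => ?_, ?_, ?_⟩
  · have : (t n : ℝ) ≤ 2 * (M ^ 13 : ℕ) := by exact_mod_cast (htQ n).le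
    rw [abs_of_nonneg (by positivity)]
    calc 1 / (M : ℝ) ^ 15 * t n ≤ 1 / (M : ℝ) ^ 15 * (2 * (M ^ 13 : ℕ)) := by gcongr
      _ = 2 / (M : ℝ) ^ 2 := by push_cast; field_simp
  · have : t n = 0 := ht0 n hn
    simp [this]
  · exact_mod_cast hg
  · exact hsum

theorem exists_next_potential (B : ℕ) :
    ∀ᶠ M : ℕ in atTop, ∀ V : ℤ → ℝ, (∀ n, |V n| ≤ B) → HasGrowth V M ((M : ℝ) ^ 17) (B + 2) →
      ∃ (U : ℤ → ℝ) (D : ℕ), M + 2 * M ^ 8 ≤ D ∧ (∀ n, |U n| ≤ 2 / (M : ℝ) ^ 2) ∧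
        (∀ n ∈ window M, U n = 0) ∧
        HasGrowth (fun n => V n + U n) (M + 2 * M ^ 8) ((M + 2 * M ^ 8 : ℕ) ^ 17) (B + 2) ∧
        ∀ V₂ : ℤ → ℝ, (∀ n, |V₂ n| ≤ B) → (∀ n ∈ window M, V n = V₂ n) →
          (∀ n ∈ Finset.Icc (-(D : ℤ)) D, |V₂ n - (V n + U n)| ≤ 1 / (M : ℝ) ^ 15) →
          IsCaptured V₂ M (M + 2 * M ^ 8) (D + M + 1) := by
  filter_upwards [exists_next_noise B, eventually_ge_atTop 12] with M hnoise hM V hV hG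
  have hM' : (12 : ℝ) ≤ M := by exact_mod_cast hM
  have hM0 : (0 : ℝ) < M := by linarith
  have hM2 : (M : ℝ) ^ 2 ≤ (M : ℝ) ^ 17 := pow_le_pow_right₀ (by linarith) (by norm_num)
  obtain ⟨F, hFc, hF⟩ := exists_isNearSet (one_le_pow₀ (by linarith)) (by nlinarith) hG
  have hF' : IsNearSet V M (B + 2) (1 / (M : ℝ) ^ 15) F := by
    refine hF.mono ?_
    rw [div_le_div_iff₀ (by positivity) (by positivity)]
    calc 12 * (M : ℝ) * M ^ 15 ≤ M * M * M ^ 15 := by gcongr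
      _ = _ := by ring
  obtain ⟨U, hU, hU0, hg, hsum⟩ := hnoise V hV F hFc
  set A := window (M + 2 * M ^ 8) \ window M
  set w := 1 / (M : ℝ) ^ 15
  have hw : 0 < w := by positivity
  set W : ℤ → ℝ := fun n => V n + U n with hW
  have hWb : ∀ n, |W n| ≤ B + 2 / (M : ℝ) ^ 2 := fun n =>
    (abs_add_le _ _).trans (add_le_add (hV n) (hU n))
  obtain ⟨τ, hτ0, hτ⟩ : ∃ τ > 0, ∑ n ∈ A, ∑ e ∈ F, (w ^ 2 * greenNormSq W e w n + τ : ℝ)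
      ≤ 1 / (8 * (M : ℝ)) := by
    set S := ∑ n ∈ A, ∑ e ∈ F, w ^ 2 * greenNormSq W e w n with hS
    refine ⟨(1 / (8 * M) - S) / (A.card * F.card + 1), div_pos (by linarith) (by positivity), ?_⟩
    have h1 : (0 : ℝ) < A.card * F.card + 1 := by positivity
    simp only [Finset.sum_add_distrib, Finset.sum_const, nsmul_eq_mul, ← hS]
    have h2 : (A.card : ℝ) * (F.card * ((1 / (8 * M) - S) / (A.card * F.card + 1)))
        ≤ 1 / (8 * M) - S := by
      rw [← mul_assoc, ← mul_div_assoc, div_le_iff₀ h1]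
      nlinarith
    linarith
  have hev : ∀ᶠ D in atTop, ∀ n ∈ A, ∀ e ∈ F,
      HasCertificate W e w n (w ^ 2 * greenNormSq W e w n + τ) D := by
    rw [Filter.eventually_all_finset]
    intro n _
    rw [Filter.eventually_all_finset]
    intro e _
    exact eventually_hasCertificate hWb e hw n (by linarith)
  obtain ⟨D, hD, hDN⟩ := (hev.and (eventually_ge_atTop (M + 2 * M ^ 8))).exists
  refine ⟨U, D, hDN, hU, fun n hn => hU0 n (by simp [A, hn]), hg, fun V₂ hB hV₂ hcl => ?_⟩
  refine isCaptured_of_certificates hB hF' hV₂ hcl hD ?_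
  calc _ ≤ 8 * (1 / (8 * (M : ℝ))) := by gcongr
    _ = 1 / M := by field_simp

end Scales

section Construction

variable {Ω : Type*} [MetricSpace Ω] [CompactSpace Ω]

theorem injective_orbit {Ω : Type*} {T : Equiv.Perm Ω} {ω : Ω}
    (h : (Set.range fun n : ℤ => (T ^ n) ω).Infinite) :
    Function.Injective fun n : ℤ => (T ^ n) ω := by
  by_contra hinj
  apply h
  obtain ⟨p, hp, hTp⟩ : ∃ p : ℤ, 0 < p ∧ (T ^ p) ω = ω := by
    have key : ∀ a b : ℤ, a < b → (T ^ a) ω = (T ^ b) ω → ∃ p : ℤ, 0 < p ∧ (T ^ p) ω = ω := by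
      intro a b hab he
      refine ⟨b - a, by omega, ?_⟩
      rw [sub_eq_neg_add, zpow_add, Equiv.Perm.mul_apply, ← he, ← Equiv.Perm.mul_apply, ← zpow_add]
      simp
    simp only [Function.Injective, not_forall] at hinj
    obtain ⟨a, b, he, hab⟩ := hinj
    rcases lt_or_gt_of_ne hab with hlt | hlt
    · exact key a b hlt he
    · exact key b a hlt he.symm
  have hmul : ∀ k : ℤ, ((T ^ p) ^ k) ω = ω := fun k =>
    Equiv.Perm.zpow_apply_eq_self_of_apply_eq_self hTp k
  refine ((Set.finite_Ico (0 : ℤ) p).image fun n : ℤ => (T ^ n) ω).subset ?_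
  rintro _ ⟨n, rfl⟩
  refine ⟨n % p, ⟨Int.emod_nonneg _ hp.ne', Int.emod_lt_of_pos _ hp⟩, ?_⟩
  conv_rhs => rw [← Int.emod_add_mul_ediv n p]
  simp only [zpow_add, zpow_mul, Equiv.Perm.mul_apply, hmul]

theorem exists_continuousMap_eq_on_orbit {x : ℤ → Ω} (hx : Function.Injective x) {U : ℤ → ℝ}
    {ε : ℝ} (hU : ∀ n, |U n| ≤ ε) (S : Finset ℤ) :
    ∃ g : C(Ω, ℝ), ‖g‖ ≤ ε ∧ ∀ n ∈ S, g (x n) = U n := by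
  have hε : 0 ≤ ε := (abs_nonneg _).trans (hU 0)
  have he : Topology.IsClosedEmbedding fun n : S => x n :=
    .of_continuous_injective_isClosedMap continuous_of_discreteTopology
      (hx.comp Subtype.val_injective) fun s _ => (s.toFinite.image _).isClosed
  obtain ⟨g, hg, hgU⟩ := ContinuousMap.exists_extension_forall_mem_of_isClosedEmbedding
    (⟨fun n : S => U n, continuous_of_discreteTopology⟩ : C(S, ℝ)) (t := Set.Icc (-ε) ε)
    (fun n => abs_le.1 (hU n)) ⟨0, by simpa using hε⟩ he
  exact ⟨g, (ContinuousMap.norm_le g hε).2 fun y => by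
    rw [Real.norm_eq_abs]; exact abs_le.2 (hg y), fun n hn => congrFun hgU ⟨n, hn⟩⟩

theorem window_subset_Icc {N D : ℕ} (h : N ≤ D) : window N ⊆ Finset.Icc (-(D : ℤ)) D :=
  Finset.Icc_subset_Icc (by omega) (by omega)

/-- The refinement of a sampling function from one scale to the next. -/
def IsRefinement (x : ℤ → Ω) (B M N : ℕ) (f f' : C(Ω, ℝ)) : Prop :=
  ‖f' - f‖ ≤ 2 / (M : ℝ) ^ 2 ∧ (∀ n ∈ window M, f' (x n) = f (x n)) ∧
    ∃ D : ℕ, ∀ V : ℤ → ℝ, (∀ n, |V n| ≤ B) → (∀ n ∈ window M, f (x n) = V n) →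
      (∀ n, |V n - f' (x n)| ≤ 1 / (M : ℝ) ^ 15) → IsCaptured V M N D

/-- Admissible sampling functions at scale `M`. -/
def IsAdmissible (x : ℤ → Ω) (B M : ℕ) (f : C(Ω, ℝ)) : Prop :=
  HasGrowth (fun n => f (x n)) M ((M : ℝ) ^ 17) (B + 2) ∧ ‖f‖ + 4 / (M : ℝ) ^ 2 ≤ B

theorem four_div_sq_nextScale_le {M : ℕ} (hM : 1 ≤ M) :
    4 / ((M + 2 * M ^ 8 : ℕ) : ℝ) ^ 2 ≤ 1 / (M : ℝ) ^ 15 := by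
  have hM' : (1 : ℝ) ≤ M := by exact_mod_cast hM
  rw [div_le_div_iff₀ (by positivity) (by positivity), one_mul]
  push_cast
  calc 4 * (M : ℝ) ^ 15 ≤ 4 * (M : ℝ) ^ 16 := by gcongr; norm_num
    _ = (2 * (M : ℝ) ^ 8) ^ 2 := by ring
    _ ≤ _ := by gcongr; linarith

theorem four_div_sq_add_le {M : ℕ} (hM : 1 ≤ M) :
    2 / (M : ℝ) ^ 2 + 4 / ((M + 2 * M ^ 8 : ℕ) : ℝ) ^ 2 ≤ 4 / (M : ℝ) ^ 2 := by
  have hM' : (1 : ℝ) ≤ M := by exact_mod_cast hM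
  have h : 1 / (M : ℝ) ^ 15 ≤ 1 / (M : ℝ) ^ 2 := by gcongr; norm_num
  have h2 := four_div_sq_nextScale_le hM
  have h3 : 4 / (M : ℝ) ^ 2 = 2 / (M : ℝ) ^ 2 + 2 * (1 / (M : ℝ) ^ 2) := by ring
  have h4 : 0 ≤ 1 / (M : ℝ) ^ 2 := by positivity
  linarith

theorem exists_isRefinement {x : ℤ → Ω} (hx : Function.Injective x) (B : ℕ) :
    ∀ᶠ M : ℕ in atTop, ∀ f : C(Ω, ℝ), IsAdmissible x B M f →
      ∃ f', IsRefinement x B M (M + 2 * M ^ 8) f f' ∧ IsAdmissible x B (M + 2 * M ^ 8) f' := by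
  filter_upwards [exists_next_potential B, eventually_ge_atTop 1] with M hM hM1 f hf
  have hfB : ∀ n, |f (x n)| ≤ B := fun n => by
    have h1 := f.norm_coe_le_norm (x n)
    have h2 : 0 ≤ 4 / (M : ℝ) ^ 2 := by positivity
    have h3 := hf.2
    rw [Real.norm_eq_abs] at h1
    linarith
  obtain ⟨U, D, hD, hU, hU0, hG, hcap⟩ := hM (fun n => f (x n)) hfB hf.1
  obtain ⟨g, hg, hgU⟩ := exists_continuousMap_eq_on_orbit hx hU (Finset.Icc (-(D : ℤ)) D)
  have hMN : window M ⊆ window (M + 2 * M ^ 8) := window_mono (by omega)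
  have hND := window_subset_Icc hD
  refine ⟨f + g, ⟨by simpa using hg, fun n hn => ?_, D + M + 1, fun V hV hVf hVg => ?_⟩, ?_, ?_⟩
  · simp [hgU n (hND (hMN hn)), hU0 n hn]
  · refine hcap V hV hVf fun n hn => ?_
    have := hVg n
    rwa [ContinuousMap.add_apply, hgU n hn] at this
  · refine (hasGrowth_congr (fun n hn => ?_) _ _).1 hG
    simp [hgU n (hND hn)]
  · have h1 := norm_add_le f g
    have h2 := four_div_sq_add_le hM1
    have h3 := hf.2
    linarith

theorem exists_hasPurePointSpectrum_of_isAdmissible {x : ℤ → Ω} (hx : Function.Injective x)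
    (B : ℕ) : ∀ᶠ M : ℕ in atTop, ∀ f : C(Ω, ℝ), IsAdmissible x B M f →
      ∃ f' : C(Ω, ℝ), ‖f' - f‖ ≤ 4 / (M : ℝ) ^ 2 ∧ HasPurePointSpectrum fun n => f' (x n) := by
  obtain ⟨M₁, hM₁⟩ := eventually_atTop.1 (exists_isRefinement hx B)
  filter_upwards [eventually_ge_atTop (M₁ + 1)] with m hm f₀ hf₀
  set M : ℕ → ℕ := fun l => (fun k => k + 2 * k ^ 8)^[l] m with hMdef
  have hMs : ∀ l, M (l + 1) = M l + 2 * M l ^ 8 := fun l => Function.iterate_succ_apply' _ _ _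
  have hMm : ∀ l, m ≤ M l := by
    intro l
    induction l with
    | zero => exact le_rfl
    | succ l ih => rw [hMs]; omega
  choose! F hF using hM₁
  let f : ℕ → C(Ω, ℝ) := fun l => l.rec f₀ fun j g => F (M j) g
  have hadm : ∀ l, IsAdmissible x B (M l) (f l) := by
    intro l
    induction l with
    | zero => exact hf₀
    | succ l ih =>
      rw [hMs]
      exact (hF (M l) (by have := hMm l; omega) (f l) ih).2
  have href : ∀ l, IsRefinement x B (M l) (M (l + 1)) (f l) (f (l + 1)) := by
    intro l
    rw [hMs]
    exact (hF (M l) (by have := hMm l; omega) (f l) (hadm l)).1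
  have hM1 : ∀ l, 1 ≤ M l := fun l => by have := hMm l; omega
  have hdist : ∀ l k, ‖f (l + k) - f l‖ + 4 / (M (l + k) : ℝ) ^ 2 ≤ 4 / (M l : ℝ) ^ 2 := by
    intro l k
    induction k with
    | zero => simp
    | succ k ih =>
      have h1 := (href (l + k)).1
      have h2 := four_div_sq_add_le (hM1 (l + k))
      rw [← hMs] at h2
      have h3 := norm_sub_le_norm_sub_add_norm_sub (f (l + k + 1)) (f (l + k)) (f l)
      rw [← add_assoc]
      linarith
  have hMlt : StrictMono M := strictMono_nat_of_lt_succ fun l => by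
    rw [hMs]; have := Nat.pow_pos (n := 8) (hM1 l); omega
  have hlim : Tendsto (fun l => 4 / (M l : ℝ) ^ 2) atTop (𝓝 0) := by
    have : Tendsto (fun l => (M l : ℝ) ^ 2) atTop atTop :=
      (tendsto_pow_atTop two_ne_zero).comp (tendsto_natCast_atTop_atTop.comp hMlt.tendsto_atTop)
    exact this.const_div_atTop 4
  have hcauchy : CauchySeq f := by
    refine cauchySeq_of_le_tendsto_0' (fun l => 4 / (M l : ℝ) ^ 2) (fun l j hlj => ?_) hlim
    obtain ⟨k, rfl⟩ := Nat.exists_eq_add_of_le hlj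
    have h1 := hdist l k
    have h2 : 0 ≤ 4 / (M (l + k) : ℝ) ^ 2 := by positivity
    rw [dist_comm, dist_eq_norm]
    linarith
  obtain ⟨g, hg⟩ := cauchySeq_tendsto_of_complete hcauchy
  have hgd : ∀ l, ‖g - f l‖ ≤ 4 / (M l : ℝ) ^ 2 := by
    intro l
    refine le_of_tendsto (hg.sub_const (f l)).norm ?_
    filter_upwards [eventually_ge_atTop l] with j hlj
    obtain ⟨k, rfl⟩ := Nat.exists_eq_add_of_le hlj
    have h1 := hdist l k
    have h2 : 0 ≤ 4 / (M (l + k) : ℝ) ^ 2 := by positivity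
    linarith
  have hgw : ∀ l, ∀ n ∈ window (M l), f l (x n) = g (x n) := by
    intro l n hn
    have hconst : ∀ k, f (l + k) (x n) = f l (x n) := by
      intro k
      induction k with
      | zero => rfl
      | succ k ih =>
        rw [← ih]
        exact (href (l + k)).2.1 n (window_mono (hMlt.monotone (Nat.le_add_right l k)) hn)
    have hev : Tendsto (fun j => f j (x n)) atTop (𝓝 (g (x n))) :=
      ((continuous_eval_const (F := C(Ω, ℝ)) (x n)).tendsto g).comp hg
    refine tendsto_nhds_unique (tendsto_const_nhds.congr' ?_) hev
    filter_upwards [eventually_ge_atTop l] with j hlj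
    obtain ⟨k, rfl⟩ := Nat.exists_eq_add_of_le hlj
    exact (hconst k).symm
  have hgB : ∀ n, |g (x n)| ≤ B := by
    intro n
    have h1 := g.norm_coe_le_norm (x n)
    have h2 := norm_le_norm_add_norm_sub' g (f 0)
    have h3 := hgd 0
    have h4 := (hadm 0).2
    rw [Real.norm_eq_abs] at h1
    linarith
  choose D hD using fun l => (href l).2.2
  refine ⟨g, hgd 0, hasPurePointSpectrum_of_isCaptured hgB (hM1 0) (fun l => ?_) fun l =>
    hD l _ hgB (hgw l) fun n => ?_⟩
  · rw [hMs]
    have := Nat.le_self_pow (n := 8) (by norm_num) (M l)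
    omega
  · have h1 := (g - f (l + 1)).norm_coe_le_norm (x n)
    have h2 := hgd (l + 1)
    have h3 := four_div_sq_nextScale_le (hM1 l)
    rw [← hMs] at h3
    rw [Real.norm_eq_abs, ContinuousMap.sub_apply] at h1
    linarith

theorem exists_isAdmissible {x : ℤ → Ω} (hx : Function.Injective x) (f : C(Ω, ℝ)) {ε : ℝ}
    (hε : 0 < ε) : ∃ B : ℕ, ∀ᶠ p : ℕ in atTop,
      ∃ f', ‖f' - f‖ ≤ ε ∧ IsAdmissible x B (2 * p) f' := by
  obtain ⟨B, hB⟩ := exists_nat_ge (‖f‖ + ε + 1)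
  refine ⟨B, ?_⟩
  filter_upwards [exists_initial_noise B hε, eventually_ge_atTop 1] with p hp hp1
  have hfB : ∀ n, |f (x n)| ≤ B := fun n => by
    have h1 := f.norm_coe_le_norm (x n)
    rw [Real.norm_eq_abs] at h1
    linarith
  obtain ⟨U, hU, -, hG⟩ := hp (fun n => f (x n)) hfB
  obtain ⟨g, hg, hgU⟩ := exists_continuousMap_eq_on_orbit hx hU (window (2 * p))
  refine ⟨f + g, by simpa using hg, (hasGrowth_congr (fun n hn => ?_) _ _).1 hG, ?_⟩
  · simp [hgU n hn]
  · have h1 := norm_add_le f g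
    have h2 : 4 / ((2 * p : ℕ) : ℝ) ^ 2 ≤ 1 := by
      have : (1 : ℝ) ≤ p := by exact_mod_cast hp1
      rw [div_le_one (by positivity)]
      push_cast
      nlinarith
    linarith

end Construction

/-- Let `Ω` be a compact metric space, `T : Ω → Ω` an invertible map, and `ω ∈ Ω` a point
with infinite `T`-orbit. Then the set of continuous `f : Ω → ℝ` for which the Schrödinger
operator with potential `V(n) = f(Tⁿω)` has pure point spectrum is dense in `C(Ω,ℝ)`. -/
theorem dense_purePoint_sampling (Ω : Type*) [MetricSpace Ω] [CompactSpace Ω]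
    (T : Equiv.Perm Ω) (ω : Ω)
    (horbit : (Set.range fun n : ℤ => (T ^ n) ω).Infinite) :
    Dense {f : C(Ω, ℝ) | HasPurePointSpectrum fun n : ℤ => f ((T ^ n) ω)} := by
  have hx := injective_orbit horbit
  refine Metric.dense_iff.2 fun f ε hε => ?_
  obtain ⟨B, hB⟩ := exists_isAdmissible hx f (half_pos hε)
  have hdouble : Tendsto (fun p : ℕ => 2 * p) atTop atTop :=
    tendsto_id.const_mul_atTop' two_pos
  have hsmall : ∀ᶠ M : ℕ in atTop, 4 / (M : ℝ) ^ 2 < ε / 2 :=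
    (((tendsto_pow_atTop two_ne_zero).comp tendsto_natCast_atTop_atTop).const_div_atTop 4).eventually
      (gt_mem_nhds (half_pos hε))
  obtain ⟨p, ⟨f', hf', hadm⟩, hstep, hp⟩ := (hB.and (hdouble.eventually
    ((exists_hasPurePointSpectrum_of_isAdmissible hx B).and hsmall))).exists
  obtain ⟨g, hg, hpp⟩ := hstep f' hadm
  refine ⟨g, ?_, hpp⟩
  rw [Metric.mem_ball, dist_eq_norm]
  have := norm_sub_le_norm_sub_add_norm_sub g f' f
  linarith
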